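/- arXiv:2307.08497 — 2 statements merged into one kernel-verified Lean document; each statement's English description precedes it below -/
import Mathlib

section
/- Let k ∈ ℕ. If a graph G contains no (≥3k)-subdivision of the claw K_{1,3} as a 3-quasi-geodesic subgraph, then G has radial cycle-width at most 18k + 2. -/
open SimpleGraph

namespace RadialPaper

variable {V W N : Type*}

/-- The ball of radius `r` around a set `U` of vertices of `G`. -/
def ballSet (G : SimpleGraph V) (U : Set V) (r : ℕ) : Set V :=
  {v | ∃ u ∈ U, G.edist u v ≤ (r : ℕ∞)}

/-- `G` has radius at most `r`: some vertex has distance at most `r` from every vertex.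
The empty graph has radius `0`; a nonempty disconnected graph has radius `∞`, hence
satisfies `radiusLE` for no `r`. -/
def radiusLE (G : SimpleGraph V) (r : ℕ) : Prop :=
  Nonempty V → ∃ v : V, ∀ w : V, G.edist v w ≤ (r : ℕ∞)

/-- `(Hg, B)` is a graph-decomposition of `G` modelled on `Hg`. -/
def IsGraphDecomp (G : SimpleGraph V) (Hg : SimpleGraph N) (B : N → Set V) : Prop :=
  (∀ v : V, ∃ h : N, v ∈ B h) ∧
  (∀ ⦃u v : V⦄, G.Adj u v → ∃ h : N, u ∈ B h ∧ v ∈ B h) ∧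
  (∀ v : V, (Hg.induce {h : N | v ∈ B h}).Connected)

/-- A subgraph `X` of `G` is `c`-quasi-geodesic. -/
def IsQuasiGeodesic (G : SimpleGraph V) (X : G.Subgraph) (c : ℕ) : Prop :=
  ∀ u v : X.verts, X.coe.edist u v ≤ (c : ℕ∞) * G.edist (u : V) (v : V)

/-- The subgraph `Y` of `G` is a `(≥ k)`-subdivision of the graph `X`. -/
def IsSubdivGE (k : ℕ) (X : SimpleGraph W) {G : SimpleGraph V} (Y : G.Subgraph) : Prop :=
  ∃ (f : W → V) (p : ∀ ⦃u v : W⦄, X.Adj u v → G.Walk (f u) (f v)),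
    Function.Injective f ∧
    (∀ ⦃u v : W⦄ (h : X.Adj u v), (p h).IsPath) ∧
    (∀ ⦃u v : W⦄ (h : X.Adj u v), k + 1 ≤ (p h).length) ∧
    (∀ ⦃u v : W⦄ (h : X.Adj u v), p h.symm = (p h).reverse) ∧
    (∀ ⦃u v : W⦄ (h : X.Adj u v) (w : W), f w ∈ (p h).support → w = u ∨ w = v) ∧
    (∀ ⦃u v u' v' : W⦄ (h : X.Adj u v) (h' : X.Adj u' v'), s(u, v) ≠ s(u', v') →
      ∀ x : V, x ∈ (p h).support → x ∈ (p h').support →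
        (x = f u ∨ x = f v) ∧ (x = f u' ∨ x = f v')) ∧
    Y.verts = Set.range f ∪ {x : V | ∃ (u v : W) (h : X.Adj u v), x ∈ (p h).support} ∧
    Y.edgeSet = {e : Sym2 V | ∃ (u v : W) (h : X.Adj u v), e ∈ (p h).edges}

/-- `G` contains a `(≥ k)`-subdivision of `X` as a `c`-quasi-geodesic subgraph. -/
def ContainsQuasiGeodesicSubdivGE (G : SimpleGraph V) (k : ℕ) (X : SimpleGraph W) (c : ℕ) :
    Prop :=
  ∃ Y : G.Subgraph, IsSubdivGE k X Y ∧ IsQuasiGeodesic G Y c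

/-- `X` is a minor of `Hg`. -/
def IsMinorOf (X : SimpleGraph W) (Hg : SimpleGraph N) : Prop :=
  ∃ B : W → Set N, (∀ w, (B w).Nonempty) ∧ (∀ w, (Hg.induce (B w)).Connected) ∧
    (∀ ⦃w w' : W⦄, w ≠ w' → Disjoint (B w) (B w')) ∧
    (∀ ⦃w w' : W⦄, X.Adj w w' → ∃ a ∈ B w, ∃ b ∈ B w', Hg.Adj a b)

/-- A class of (finite) graphs, given on the canonical vertex sets `Fin n`, is minor-closed. -/
def MinorClosed (ℋ : ∀ n : ℕ, SimpleGraph (Fin n) → Prop) : Prop :=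
  ∀ ⦃m n : ℕ⦄ (X : SimpleGraph (Fin m)) (Hg : SimpleGraph (Fin n)),
    ℋ n Hg → IsMinorOf X Hg → ℋ m X

/-- The triangle `K³`. -/
def triangleGraph : SimpleGraph (Fin 3) := ⊤

/-- The claw `K_{1,3}`, with centre `0`. -/
def clawGraph : SimpleGraph (Fin 4) := SimpleGraph.fromRel (fun a _ => a = 0)

/-- The wrench graph: two adjacent vertices `0, 1` of degree three, with leaves `2,3` and
`4,5` respectively. -/
def wrenchGraph : SimpleGraph (Fin 6) :=
  SimpleGraph.fromRel (fun a b =>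
    (a = 0 ∧ b = 1) ∨ (a = 0 ∧ b = 2) ∨ (a = 0 ∧ b = 3) ∨ (a = 1 ∧ b = 4) ∨ (a = 1 ∧ b = 5))

/-- The star `K_{1,m}`, with centre `none`. -/
def starGraph (m : ℕ) : SimpleGraph (Option (Fin m)) :=
  SimpleGraph.fromRel (fun a _ => a = none)

/-- `Hg` is a disjoint union of paths: every connected component is a path. -/
def IsUnionOfPaths (Hg : SimpleGraph N) : Prop :=
  ∀ cc : Hg.ConnectedComponent, ∃ m : ℕ,
    Nonempty (Hg.induce cc.supp ≃g SimpleGraph.pathGraph m)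

/-- `Hg` is a disjoint union of cycles: every connected component is a cycle. -/
def IsUnionOfCycles (Hg : SimpleGraph N) : Prop :=
  ∀ cc : Hg.ConnectedComponent, ∃ m : ℕ, 3 ≤ m ∧
    Nonempty (Hg.induce cc.supp ≃g SimpleGraph.cycleGraph m)

/-- `Hg` is a subdivided star, i.e. a `(≥ 0)`-subdivision of some star `K_{1,m}`. -/
def IsSubdividedStar (Hg : SimpleGraph N) : Prop :=
  ∃ m : ℕ, IsSubdivGE 0 (starGraph m) (⊤ : Hg.Subgraph)

/-- `Hg` is a disjoint union of subdivided stars. -/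
def IsUnionOfSubdividedStars (Hg : SimpleGraph N) : Prop :=
  ∀ cc : Hg.ConnectedComponent, IsSubdividedStar (Hg.induce cc.supp)

/-- A graph-decomposition is honest: bags of adjacent nodes intersect. -/
def Honest (Hg : SimpleGraph N) (B : N → Set V) : Prop :=
  ∀ ⦃h h' : N⦄, Hg.Adj h h' → (B h ∩ B h').Nonempty

/-- The outer-radial width of a decomposition of `G` is at most `r`. -/
def OuterRadialWidthLE (G : SimpleGraph V) (B : N → Set V) (r : ℕ) : Prop :=
  ∀ h : N, ∃ z : V, ∀ v ∈ B h, G.edist z v ≤ (r : ℕ∞)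

/-- The radial spread of a decomposition `(Hg, B)` of a graph with vertex set `V`
is at most `r`. -/
def RadialSpreadLE (Hg : SimpleGraph N) (B : N → Set V) (r : ℕ) : Prop :=
  ∀ v : V, radiusLE (Hg.induce {h : N | v ∈ B h}) r

/-- `φ` is an `(m, a, M, A, r)`-quasi-isometry from `Hg` to `G`. -/
def IsQuasiIsometry (Hg : SimpleGraph N) (G : SimpleGraph V) (m a M A r : ℕ)
    (φ : N → V) : Prop :=
  (∀ h h' : N, Hg.edist h h' ≤ (m : ℕ∞) * G.edist (φ h) (φ h') + (a : ℕ∞)) ∧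
  (∀ h h' : N, G.edist (φ h) (φ h') ≤ (M : ℕ∞) * Hg.edist h h' + (A : ℕ∞)) ∧
  (∀ v : V, ∃ h : N, G.edist v (φ h) ≤ (r : ℕ∞))

/-- `C` is a connected component of `G - S`: a maximal connected set of vertices
disjoint from `S`. -/
def IsCompOf (G : SimpleGraph V) (C S : Set V) : Prop :=
  C.Nonempty ∧ Disjoint C S ∧ (G.induce C).Connected ∧
  ∀ D : Set V, C ⊆ D → Disjoint D S → (G.induce D).Connected → D = C

/-- The subgraph `P` of `G` is an `M₀`–`M₁` path meeting `C`. -/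
def IsM01Path (G : SimpleGraph V) (M₀ M₁ C : Set V) (P : G.Subgraph) : Prop :=
  ∃ (x y : V) (q : G.Walk x y), q.IsPath ∧ q.toSubgraph = P ∧ x ∈ M₀ ∧ y ∈ M₁ ∧
    (∀ z ∈ q.support, z ≠ x → z ≠ y → z ∉ M₀ ∪ M₁) ∧ ∃ z ∈ q.support, z ∈ C

/-- The number of `M₀`–`M₁` paths meeting `C` that are contained in the subgraph `OS`. -/
noncomputable def Wcount (G : SimpleGraph V) (M₀ M₁ C : Set V) (OS : G.Subgraph) : ℕ :=
  Set.ncard {P : G.Subgraph | P ≤ OS ∧ IsM01Path G M₀ M₁ C P}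


section PartB

lemma exists_seqWalk {V : Type*} {G : SimpleGraph V} (f : ℕ → V) (n : ℕ)
    (h : ∀ t < n, G.Adj (f t) (f (t+1))) :
    ∃ p : G.Walk (f 0) (f n), p.length = n ∧ p.support = (List.range (n+1)).map f ∧
      p.edges = (List.range n).map (fun t => s(f t, f (t+1))) := by
  induction n with
  | zero => exact ⟨Walk.nil, by simp⟩
  | succ n ih =>
    obtain ⟨p, h1, h2, h3⟩ := ih (fun t ht => h t (by omega))
    refine ⟨p.concat (h n (by omega)), by simp [h1], ?_, ?_⟩
    · rw [Walk.support_concat, h2, List.range_succ (n := n+1)]; simp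
    · rw [Walk.edges_concat, h3, List.range_succ (n := n)]; simp

lemma dist_seq_le {V : Type*} {G : SimpleGraph V} (f : ℕ → V) (n : ℕ)
    (h : ∀ t < n, G.Adj (f t) (f (t+1))) : G.dist (f 0) (f n) ≤ n := by
  obtain ⟨p, h1, -⟩ := exists_seqWalk f n h
  exact (dist_le p).trans h1.le

/-- three long legs forming a 3-quasi-geodesic claw -/
def ClawLegs {V : Type*} (G : SimpleGraph V) (l : ℕ) : Prop :=
  ∃ q : Fin 3 → ℕ → V, (∀ i j, q i 0 = q j 0) ∧
    (∀ i, ∀ t < l, G.Adj (q i t) (q i (t+1))) ∧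
    (∀ i, ∀ s ≤ l, ∀ t ≤ l, t ≤ s + 3 * G.dist (q i s) (q i t)) ∧
    (∀ i j, i ≠ j → ∀ s ≤ l, ∀ t ≤ l, s + t ≤ 3 * G.dist (q i s) (q j t))

lemma clawGraph_adj {a b : Fin 4} : clawGraph.Adj a b ↔ a ≠ b ∧ (a = 0 ∨ b = 0) := by
  simp [clawGraph]

lemma claw_aux {V : Type*} {G : SimpleGraph V} (z : V) (f : Fin 4 → V) (h0 : f 0 = z)
    (P : ∀ w : Fin 4, w ≠ 0 → G.Walk z (f w)) :
    ∃ p : ∀ ⦃u v : Fin 4⦄, clawGraph.Adj u v → G.Walk (f u) (f v),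
      (∀ ⦃u v⦄ (h : clawGraph.Adj u v), p h.symm = (p h).reverse) ∧
      (∀ v (h : clawGraph.Adj 0 v), ∃ hv : v ≠ 0, p h = (P v hv).copy h0.symm rfl) := by
  subst h0
  have key : ∀ u v : Fin 4, clawGraph.Adj u v → u ≠ 0 → v = 0 := by
    intro u v h hu
    rw [clawGraph_adj] at h; tauto
  refine ⟨fun u v h => if hu : u = 0 then (P v (by rintro rfl; exact h.ne hu)).copy (by rw [hu]) rfl
    else (P u hu).reverse.copy rfl (by rw [key u v h hu]), ?_, ?_⟩
  · intro u v h
    by_cases hu : u = 0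
    · subst hu
      have hv : v ≠ 0 := h.ne'
      simp [hv]
    · have := key u v h hu
      subst this
      simp [hu]
  · intro v h
    exact ⟨h.ne', by simp⟩

lemma contains_of_clawLegs {V : Type*} {G : SimpleGraph V} {l : ℕ}
    (hc : ClawLegs G (l+1)) : ContainsQuasiGeodesicSubdivGE G l clawGraph 3 := by
  obtain ⟨q, hq0, hadj, hsame, hdiff⟩ := hc
  set z := q 0 0 with hz
  have hz' : ∀ i, q i 0 = z := fun i => hq0 i 0
  -- injectivity
  have inj1 : ∀ i, ∀ s ≤ l+1, ∀ t ≤ l+1, q i s = q i t → s = t := by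
    intro i s hs t ht h
    have h1 := hsame i s hs t ht
    have h2 := hsame i t ht s hs
    rw [h] at h1 h2; simp at h1 h2; omega
  have inj2 : ∀ i j, i ≠ j → ∀ s ≤ l+1, ∀ t ≤ l+1, q i s = q j t → s = 0 ∧ t = 0 := by
    intro i j hij s hs t ht h
    have h1 := hdiff i j hij s hs t ht
    rw [h] at h1; simp at h1; omega
  choose P hlen hsup hedg using fun i => exists_seqWalk (q i) (l+1) (hadj i)
  let f : Fin 4 → V := Fin.cons z (fun i => q i (l+1))
  have f0 : f 0 = z := rfl
  have fs : ∀ i : Fin 3, f i.succ = q i (l+1) := fun i => rfl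
  have hsp : ∀ w : Fin 4, w ≠ 0 → ∃ p : G.Walk z (f w), ∃ i : Fin 3, w = i.succ ∧ p.length = l+1 ∧
      p.support = (List.range (l+1+1)).map (q i) ∧
      p.edges = (List.range (l+1)).map (fun t => s(q i t, q i (t+1))) := by
    intro w hw
    obtain ⟨i, rfl⟩ := Fin.exists_succ_eq.mpr hw
    exact ⟨(P i).copy (hz' i) (fs i).symm, i, rfl, by simp [hlen], by simp [hsup], by simp [hedg]⟩
  choose P' ix hix hlen' hsup' hedg' using hsp
  have hixs : ∀ i : Fin 3, ∀ h, ix i.succ h = i := by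
    intro i h
    exact (Fin.succ_injective _ (hix i.succ h)).symm
  obtain ⟨p, hps, hp0⟩ := claw_aux z f f0 P'
  -- description of all p
  have desc : ∀ ⦃u v⦄ (h : clawGraph.Adj u v), ∃ i : Fin 3,
      s(u,v) = s(0, i.succ) ∧ (p h).length = l+1 ∧
      (∀ x, x ∈ (p h).support ↔ ∃ t ≤ l+1, q i t = x) ∧
      (∀ e, e ∈ (p h).edges ↔ ∃ t < l+1, s(q i t, q i (t+1)) = e) ∧ (p h).IsPath := by
    have base : ∀ v (h : clawGraph.Adj 0 v), ∃ i : Fin 3,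
      v = i.succ ∧ (p h).length = l+1 ∧
      (∀ x, x ∈ (p h).support ↔ ∃ t ≤ l+1, q i t = x) ∧
      (∀ e, e ∈ (p h).edges ↔ ∃ t < l+1, s(q i t, q i (t+1)) = e) ∧ (p h).IsPath := by
      intro v h
      obtain ⟨hv, e⟩ := hp0 v h
      refine ⟨ix v hv, hix v hv, ?_, ?_, ?_, ?_⟩
      · rw [e]; simp [hlen']
      · intro x; rw [e]; simp [hsup', Nat.lt_succ_iff]
      · intro x; rw [e]; simp [hedg']
      · rw [e, Walk.isPath_def]
        simp only [Walk.support_copy, hsup']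
        refine List.Nodup.map_on ?_ List.nodup_range
        intro a ha b hb hab
        simp at ha hb
        exact inj1 _ a (by omega) b (by omega) hab
    intro u v h
    have h' := clawGraph_adj.1 h
    rcases h'.2 with rfl | rfl
    · obtain ⟨i, h1, h2⟩ := base v h
      exact ⟨i, by rw [h1], h2⟩
    · obtain ⟨i, h1, h2, h3, h4, h5⟩ := base u h.symm
      have e : p h = (p h.symm).reverse := hps h.symm
      refine ⟨i, by rw [h1, Sym2.eq_swap], ?_, ?_, ?_, ?_⟩
      · simp [e, h2]
      · simp [e, h3]
      · simp [e, h4]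
      · rw [e]; exact h5.reverse
  have desc2 : ∀ i : Fin 3, ∃ h : clawGraph.Adj 0 i.succ,
      (∀ x, x ∈ (p h).support ↔ ∃ t ≤ l+1, q i t = x) ∧
      (∀ e, e ∈ (p h).edges ↔ ∃ t < l+1, s(q i t, q i (t+1)) = e) := by
    intro i
    have h : clawGraph.Adj 0 i.succ := clawGraph_adj.2 ⟨(Fin.succ_ne_zero i).symm, Or.inl rfl⟩
    obtain ⟨j, h1, -, h3, h4, -⟩ := desc h
    have : j = i := by
      rw [Sym2.congr_right] at h1
      exact (Fin.succ_injective _ h1).symm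
    subst this
    exact ⟨h, h3, h4⟩
  have hff : ∀ w : Fin 4, ∀ i : Fin 3, ∀ t ≤ l+1, q i t = f w → (w = 0 ∧ t = 0) ∨ (w = i.succ ∧ t = l+1) := by
    intro w i t ht h
    rcases Fin.eq_zero_or_eq_succ w with rfl | ⟨j, rfl⟩
    · left
      rw [f0, ← hz' i] at h
      exact ⟨rfl, inj1 i t ht 0 (by omega) h⟩
    · right
      rw [fs] at h
      by_cases hij : i = j
      · subst hij; exact ⟨rfl, inj1 i t ht (l+1) le_rfl h⟩
      · have := inj2 i j hij t ht (l+1) le_rfl h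
        omega
  let Y : G.Subgraph :=
    { verts := {x | ∃ i : Fin 3, ∃ t ≤ l+1, q i t = x}
      Adj := fun a b => ∃ i : Fin 3, ∃ t < l+1, s(q i t, q i (t+1)) = s(a,b)
      adj_sub := by
        rintro a b ⟨i, t, ht, h⟩
        have := hadj i t ht
        rw [← mem_edgeSet] at this ⊢
        rwa [← h]
      edge_vert := by
        rintro a b ⟨i, t, ht, h⟩
        rw [Sym2.eq_iff] at h
        rcases h with ⟨h, -⟩ | ⟨-, h⟩
        · exact ⟨i, t, by omega, h⟩
        · exact ⟨i, t+1, by omega, h⟩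
      symm := by
        constructor
        rintro a b ⟨i, t, ht, h⟩
        exact ⟨i, t, ht, by rw [h, Sym2.eq_swap]⟩ }
  have hYv : ∀ i, ∀ t ≤ l+1, q i t ∈ Y.verts := fun i t ht => ⟨i, t, ht, rfl⟩
  refine ⟨Y, ⟨f, p, ?_, ?_, ?_, hps, ?_, ?_, ?_, ?_⟩, ?_⟩
  · intro a b hab
    rcases Fin.eq_zero_or_eq_succ b with rfl | ⟨j, rfl⟩
    · rcases hff a 0 0 (by omega) (by rw [hab, f0]) with h | h
      · exact h.1
      · omega
    · rcases hff a j (l+1) le_rfl (by rw [hab, fs]) with h | h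
      · omega
      · exact h.1
  · intro u v h; exact (desc h).choose_spec.2.2.2.2
  · intro u v h; exact (desc h).choose_spec.2.1.ge
  · intro u v h w hw
    obtain ⟨i, h1, h2, h3, h4, h5⟩ := desc h
    obtain ⟨t, ht, e⟩ := (h3 _).1 hw
    have h6 : w = 0 ∨ w = i.succ := by
      rcases hff w i t ht e with h | h
      · exact Or.inl h.1
      · exact Or.inr h.1
    have : w ∈ s(u,v) := by rw [h1]; simpa using h6
    simpa using this
  · intro u v u' v' h h' hne x hx hx'
    obtain ⟨i, h1, h2, h3, h4, h5⟩ := desc h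
    obtain ⟨i', h1', h2', h3', h4', h5'⟩ := desc h'
    obtain ⟨t, ht, e⟩ := (h3 _).1 hx
    obtain ⟨t', ht', e'⟩ := (h3' _).1 hx'
    have hii : i ≠ i' := by rintro rfl; exact hne (h1.trans h1'.symm)
    have := inj2 i i' hii t ht t' ht' (e.trans e'.symm)
    have hx0 : x = f 0 := by rw [← e, this.1, hz' i, f0]
    have m1 : (0 : Fin 4) ∈ s(u,v) := by rw [h1]; simp
    have m2 : (0 : Fin 4) ∈ s(u',v') := by rw [h1']; simp
    rw [Sym2.mem_iff] at m1 m2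
    rw [hx0]
    constructor
    · rcases m1 with h | h <;> simp [← h]
    · rcases m2 with h | h <;> simp [← h]
  · ext x
    constructor
    · rintro ⟨i, t, ht, e⟩
      obtain ⟨h, h1, -⟩ := desc2 i
      exact Or.inr ⟨_, _, h, (h1 x).2 ⟨t, ht, e⟩⟩
    · rintro (⟨w, rfl⟩ | ⟨u, v, h, hx⟩)
      · rcases Fin.eq_zero_or_eq_succ w with rfl | ⟨j, rfl⟩
        · exact ⟨0, 0, by omega, rfl⟩
        · exact ⟨j, l+1, le_rfl, rfl⟩
      · obtain ⟨i, h1, h2, h3, h4, h5⟩ := desc h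
        obtain ⟨t, ht, e⟩ := (h3 _).1 hx
        exact ⟨i, t, ht, e⟩
  · ext e
    induction e using Sym2.ind with
    | _ a b =>
    rw [Subgraph.mem_edgeSet]
    constructor
    · rintro ⟨i, t, ht, e⟩
      obtain ⟨h, -, h1⟩ := desc2 i
      exact ⟨_, _, h, (h1 _).2 ⟨t, ht, e⟩⟩
    · rintro ⟨u, v, h, hx⟩
      obtain ⟨i, h1, h2, h3, h4, h5⟩ := desc h
      obtain ⟨t, ht, e⟩ := (h4 _).1 hx
      exact ⟨i, t, ht, e⟩
  · -- quasi-geodesic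
    have st : ∀ i (s d : ℕ) (h : s + d ≤ l+1),
        Y.coe.edist ⟨q i s, hYv i s (by omega)⟩ ⟨q i (s+d), hYv i _ h⟩ ≤ (d : ℕ∞) := by
      intro i s d
      induction d with
      | zero => intro h; simp
      | succ d ih =>
        intro h
        refine (SimpleGraph.edist_triangle (v := ⟨q i (s+d), hYv i _ (by omega)⟩)).trans ?_
        push_cast
        refine add_le_add (ih (by omega)) ?_
        rw [edist_le_one_iff_adj_or_eq]
        left
        exact ⟨i, s+d, by omega, rfl⟩
    have fin : ∀ (a b : V) (n : ℕ), G.Reachable a b → n ≤ 3 * G.dist a b →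
        (n : ℕ∞) ≤ ((3 : ℕ) : ℕ∞) * G.edist a b := by
      intro a b n hr h
      rw [← hr.coe_dist_eq_edist]
      exact_mod_cast h
    have reach : ∀ i, ∀ t ≤ l+1, G.Reachable z (q i t) := by
      intro i t ht
      obtain ⟨w, -⟩ := exists_seqWalk (q i) t (fun s hs => hadj i s (by omega))
      exact ⟨w.copy (hz' i) rfl⟩
    rintro ⟨u, i, s, hs, rfl⟩ ⟨v, j, t, ht, rfl⟩
    have hr := (reach i s hs).symm.trans (reach j t ht)
    by_cases hij : i = j
    · subst hij
      rcases le_total s t with h | h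
      · obtain ⟨d, rfl⟩ := Nat.exists_eq_add_of_le h
        exact (st i s d ht).trans (fin _ _ _ hr (by have := hsame i s hs _ ht; dsimp only; omega))
      · obtain ⟨d, rfl⟩ := Nat.exists_eq_add_of_le h
        rw [SimpleGraph.edist_comm]
        exact (st i t d hs).trans (fin _ _ _ hr (by have := hsame i t ht _ hs; rw [SimpleGraph.dist_comm] at this; dsimp only; omega))
    · refine le_trans ?_ (fin _ _ (s+t) hr (hdiff i j hij s hs t ht))
      refine (SimpleGraph.edist_triangle (v := ⟨z, 0, 0, by omega, rfl⟩)).trans ?_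
      push_cast
      refine add_le_add ?_ ?_
      · rw [SimpleGraph.edist_comm]
        have := st i 0 s (by omega)
        simpa [hz'] using this
      · have := st j 0 t (by omega)
        simpa [hz'] using this


end PartB

section PartA

/-- `j` lies in the cyclic window of length `w` starting at `i` -/
def InWin (n w i j : ℕ) : Prop := ∃ t ≤ w, (i + t) % n = j

/-- cyclic partition data yielding a cycle decomposition of radial width at most `r` -/
def Good {V : Type*} (G : SimpleGraph V) (r : ℕ) : Prop :=
  ∃ (n w : ℕ) (π : V → ℕ), 3 ≤ n ∧ (∀ v, π v < n) ∧
    (∀ u v, G.Adj u v → InWin n w (π u) (π v) ∨ InWin n w (π v) (π u)) ∧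
    ∀ i < n, (∃ v, InWin n w i (π v)) → ∃ z, InWin n w i (π z) ∧ ∀ v, InWin n w i (π v) →
      ∃ q : G.Walk z v, q.length ≤ r ∧ ∀ x ∈ q.support, InWin n w i (π x)

lemma isUnionOfCycles_of {N : Type*} (H : SimpleGraph N)
    (h : ∀ x : N, ∃ m : ℕ, 3 ≤ m ∧ ∃ f : cycleGraph m ↪g H, x ∈ Set.range f ∧
      ∀ y ∈ Set.range f, ∀ z, H.Adj y z → z ∈ Set.range f) : IsUnionOfCycles H := by
  intro cc
  induction cc using ConnectedComponent.ind with
  | _ x =>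
  obtain ⟨m, hm, f, hx, hf⟩ := h x
  refine ⟨m, hm, ?_⟩
  have key : (H.connectedComponentMk x).supp = Set.range f := by
    ext y
    rw [ConnectedComponent.mem_supp_iff, ConnectedComponent.eq]
    constructor
    · rintro ⟨w⟩
      have : ∀ (a b : N) (w : H.Walk a b), b ∈ Set.range f → a ∈ Set.range f := by
        intro a b w
        induction w with
        | nil => exact id
        | cons hadj _ ih => intro hb; exact hf _ (ih hb) _ hadj.symm
      exact this _ _ w hx
    · rintro ⟨i, rfl⟩
      obtain ⟨j, rfl⟩ := hx
      exact (cycleGraph_preconnected i j).map f.toHom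
  rw [key]
  exact ⟨(Embedding.isoInduceRange f).symm⟩

lemma cycle_succ_adj {n : ℕ} (hn : 3 ≤ n) (i j : Fin n) (h : (i.val + 1) % n = j.val) :
    (cycleGraph n).Adj i j := by
  rw [cycleGraph_adj']
  right
  rw [Fin.val_sub]
  have hi := i.2
  by_cases h1 : i.val + 1 < n
  · rw [Nat.mod_eq_of_lt h1] at h
    rw [← h]
    have : n - i.val + (i.val + 1) = 1 + n := by omega
    rw [this, Nat.add_mod_right, Nat.mod_eq_of_lt (by omega)]
  · have h2 : i.val + 1 = n := by omega
    rw [h2, Nat.mod_self] at h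
    rw [← h]
    have : n - i.val + 0 = 1 := by omega
    rw [this, Nat.mod_eq_of_lt (by omega)]

lemma push_walk {V : Type*} {G : SimpleGraph V} {s : Set V} {a b : s} (q : (G.induce s).Walk a b) :
    ∃ q' : G.Walk a.1 b.1, q'.length = q.length ∧ ∀ x ∈ q'.support, ∃ h : x ∈ s, ⟨x, h⟩ ∈ q.support := by
  induction q with
  | nil => exact ⟨Walk.nil, by simp⟩
  | @cons u v w h p ih =>
    obtain ⟨q', h1, h2⟩ := ih
    refine ⟨Walk.cons (show G.Adj u.1 v.1 from h) q', by simp [h1], ?_⟩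
    intro x hx
    rw [Walk.support_cons, List.mem_cons] at hx
    rcases hx with rfl | hx
    · exact ⟨u.2, by simp⟩
    · obtain ⟨h3, h4⟩ := h2 x hx
      exact ⟨h3, by simp [h4]⟩

lemma pull_walk {V : Type*} {G : SimpleGraph V} {s : Set V} {a b : V} (q : G.Walk a b)
    (h : ∀ x ∈ q.support, x ∈ s) :
    ∃ (ha : a ∈ s) (hb : b ∈ s), ∃ q' : (G.induce s).Walk ⟨a, ha⟩ ⟨b, hb⟩, q'.length = q.length := by
  refine ⟨h _ (by simp), h _ (by simp), q.induce s h, ?_⟩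
  induction q with
  | nil => simp
  | cons h' p ih => simp only [Walk.induce_cons, Walk.length_cons]; rw [ih]

/-- disjoint union of cycles -/
def sigCycle {C : Type*} (n : C → ℕ) : SimpleGraph (Σ c, Fin (n c)) where
  Adj x y := ∃ h : x.1 = y.1, (cycleGraph (n y.1)).Adj (h ▸ x.2) y.2
  symm := by
    constructor
    rintro ⟨c, i⟩ ⟨d, j⟩ ⟨h, h'⟩
    dsimp only at h
    subst h
    exact ⟨rfl, h'.symm⟩
  loopless := by
    constructor
    rintro ⟨c, i⟩ ⟨h, h'⟩
    exact h'.ne rfl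

lemma sigCycle_adj {C : Type*} (n : C → ℕ) (c : C) (i j : Fin (n c)) :
    (sigCycle n).Adj ⟨c, i⟩ ⟨c, j⟩ ↔ (cycleGraph (n c)).Adj i j := by
  constructor
  · rintro ⟨_, h⟩; exact h
  · intro h; exact ⟨rfl, h⟩

lemma sigCycle_fst {C : Type*} (n : C → ℕ) {x y} (h : (sigCycle n).Adj x y) : x.1 = y.1 := h.choose

lemma assemble {V : Type*} [Fintype V] (G : SimpleGraph V) (r : ℕ)
    (hG : ∀ c : G.ConnectedComponent, Good (G.induce c.supp) r) :
    ∃ (n : ℕ) (Hg : SimpleGraph (Fin n)) (B : Fin n → Set V),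
      IsUnionOfCycles Hg ∧ IsGraphDecomp G Hg B ∧
      ∀ h, radiusLE (G.induce (B h)) r := by
  classical
  choose n w π hn hπ hadj hbag using hG
  have : Fintype G.ConnectedComponent := Fintype.ofFinite _
  let e := Fintype.equivFin (Σ c, Fin (n c))
  let B : (Σ c, Fin (n c)) → Set V := fun x => {v | ∃ h : v ∈ x.1.supp, InWin (n x.1) (w x.1) x.2 (π x.1 ⟨v, h⟩)}
  have hself : ∀ (v : V) (c : G.ConnectedComponent) (h : v ∈ c.supp),
      v ∈ B ⟨c, ⟨π c ⟨v, h⟩, hπ c _⟩⟩ := by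
    intro v c h
    exact ⟨h, 0, by omega, by simp [Nat.mod_eq_of_lt (hπ c _)]⟩
  refine ⟨_, (sigCycle n).comap e.symm, fun x => B (e.symm x), ?_, ⟨?_, ?_, ?_⟩, ?_⟩
  · apply isUnionOfCycles_of
    intro x
    refine ⟨n (e.symm x).1, hn _, ⟨⟨fun i => e ⟨(e.symm x).1, i⟩, ?_⟩, ?_⟩, ?_, ?_⟩
    · intro i j hij
      simpa using hij
    · intro i j
      change (sigCycle n).Adj (e.symm (e ⟨(e.symm x).1, i⟩)) (e.symm (e ⟨(e.symm x).1, j⟩)) ↔ _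
      rw [Equiv.symm_apply_apply, Equiv.symm_apply_apply, sigCycle_adj]
    · exact ⟨(e.symm x).2, e.apply_symm_apply x⟩
    · rintro _ ⟨i, rfl⟩ z hz
      have h1 := sigCycle_fst n hz
      change (e.symm (e ⟨(e.symm x).1, i⟩)).1 = _ at h1
      rw [Equiv.symm_apply_apply] at h1
      clear hz
      obtain ⟨z', rfl⟩ := e.surjective z
      simp only [Equiv.symm_apply_apply] at h1
      obtain ⟨c, j⟩ := z'
      dsimp only at h1
      generalize (e.symm x).1 = d at h1 ⊢
      subst h1
      exact ⟨j, rfl⟩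
  · intro v
    refine ⟨e ⟨G.connectedComponentMk v, ⟨π _ ⟨v, rfl⟩, hπ _ _⟩⟩, ?_⟩
    simpa using hself v _ rfl
  · intro u v huv
    have hc : v ∈ (G.connectedComponentMk u).supp := by
      rw [ConnectedComponent.mem_supp_iff, ConnectedComponent.eq]
      exact huv.symm.reachable
    rcases hadj (G.connectedComponentMk u) ⟨u, rfl⟩ ⟨v, hc⟩ huv with h | h
    · refine ⟨e ⟨G.connectedComponentMk u, ⟨π _ ⟨u, rfl⟩, hπ _ _⟩⟩, ?_, ?_⟩
      · simpa using hself u _ rfl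
      · simp only [Equiv.symm_apply_apply]
        exact ⟨hc, h⟩
    · refine ⟨e ⟨G.connectedComponentMk u, ⟨π _ ⟨v, hc⟩, hπ _ _⟩⟩, ?_, ?_⟩
      · simp only [Equiv.symm_apply_apply]
        exact ⟨rfl, h⟩
      · simpa using hself v _ hc
  · intro v
    set S : Set _ := {h | v ∈ B (e.symm h)} with hS
    set c := G.connectedComponentMk v with hcv
    have hvc : v ∈ c.supp := rfl
    set j : Fin (n c) := ⟨π c ⟨v, hvc⟩, hπ _ _⟩ with hj
    have hjS : e ⟨c, j⟩ ∈ S := by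
      rw [hS, Set.mem_ofPred_eq, Equiv.symm_apply_apply]; exact hself v _ hvc
    have mem : ∀ i : Fin (n c), InWin (n c) (w c) i j → e ⟨c, i⟩ ∈ S := by
      intro i hi
      rw [hS, Set.mem_ofPred_eq, Equiv.symm_apply_apply]; exact ⟨hvc, hi⟩
    have reach : ∀ t ≤ w c, ∀ i : Fin (n c), ∀ h : (i.val + t) % n c = j, ∀ hi : e ⟨c, i⟩ ∈ S,
        (((sigCycle n).comap e.symm).induce S).Reachable ⟨e ⟨c, i⟩, hi⟩ ⟨e ⟨c, j⟩, hjS⟩ := by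
      intro t
      induction t with
      | zero =>
        intro _ i h hi
        have : i = j := by
          apply Fin.ext
          rw [← h]; simp [Nat.mod_eq_of_lt i.2]
        subst this
        exact Reachable.refl _
      | succ t ih =>
        intro ht i h hi
        let i' : Fin (n c) := ⟨(i.val + 1) % n c, Nat.mod_lt _ (by have := hn c; omega)⟩
        have h' : (i'.val + t) % n c = j := by
          rw [← h]; simp only [i']
          rw [Nat.mod_add_mod]; congr 1; omega
        have hi' : e ⟨c, i'⟩ ∈ S := mem _ ⟨t, by omega, h'⟩
        refine Reachable.trans ?_ (ih (by omega) i' h' hi')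
        apply Adj.reachable
        change (sigCycle n).Adj (e.symm (e ⟨c, i⟩)) (e.symm (e ⟨c, i'⟩))
        rw [Equiv.symm_apply_apply, Equiv.symm_apply_apply, sigCycle_adj]
        exact cycle_succ_adj (hn c) _ _ rfl
    rw [connected_iff_exists_forall_reachable]
    refine ⟨⟨e ⟨c, j⟩, hjS⟩, ?_⟩
    rintro ⟨x, hx⟩
    obtain ⟨⟨d, i⟩, rfl⟩ := e.surjective x
    have hx' := hx
    rw [hS, Set.mem_ofPred_eq, Equiv.symm_apply_apply] at hx'
    obtain ⟨h1, t, ht, h2⟩ := hx'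
    have hd : c = d := h1
    subst hd
    exact (reach t ht i h2 hx).symm
  · intro x
    dsimp only
    generalize e.symm x = y
    rintro ⟨⟨v, hv1, hv2⟩⟩
    obtain ⟨z, hz, hz'⟩ := hbag y.1 y.2 y.2.2 ⟨_, hv2⟩
    refine ⟨⟨z.1, z.2, hz⟩, ?_⟩
    rintro ⟨u, hu1, hu2⟩
    obtain ⟨q, hq, hq'⟩ := hz' ⟨u, hu1⟩ hu2
    obtain ⟨q', h1, h2⟩ := push_walk q
    have hsup : ∀ x ∈ q'.support, x ∈ B y := by
      intro x hx
      obtain ⟨h3, h4⟩ := h2 x hx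
      exact ⟨h3, hq' _ h4⟩
    obtain ⟨_, _, q'', h5⟩ := pull_walk q' hsup
    refine (edist_le q'').trans ?_
    rw [h5, h1]
    exact_mod_cast hq


end PartA

section PartC
variable {G : SimpleGraph V}

lemma claw_mk (hG : G.Connected) (l : ℕ) (z v : V) (hv : l ≤ G.dist v z) (a b : ℕ → V)
    (ha0 : a 0 = z) (hb0 : b 0 = z) (ha : ∀ t < l, G.Adj (a t) (a (t+1)))
    (hb : ∀ t < l, G.Adj (b t) (b (t+1)))
    (ha1 : ∀ t ≤ l, t ≤ G.dist z (a t)) (hb1 : ∀ t ≤ l, t ≤ G.dist z (b t))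
    (hva : ∀ t ≤ l, G.dist v z ≤ G.dist v (a t)) (hvb : ∀ t ≤ l, G.dist v z ≤ G.dist v (b t))
    (hab : ∀ s ≤ l, ∀ t ≤ l, s + t ≤ 3 * G.dist (a s) (b t)) : ClawLegs G l := by
  obtain ⟨q, hq⟩ := hG.exists_walk_length_eq_dist z v
  rw [SimpleGraph.dist_comm] at hq
  let c : ℕ → V := q.getVert
  have hc0 : c 0 = z := q.getVert_zero
  have hc : ∀ t < l, G.Adj (c t) (c (t+1)) := fun t ht => q.adj_getVert_succ (by omega)
  have hcv : ∀ t ≤ l, G.dist v (c t) ≤ G.dist v z - t := by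
    intro t ht
    rw [SimpleGraph.dist_comm]
    have := dist_le (q.drop t)
    rwa [Walk.drop_length, hq] at this
  have le : ∀ f : ℕ → V, f 0 = z → (∀ t < l, G.Adj (f t) (f (t+1))) → ∀ t ≤ l, G.dist z (f t) ≤ t := by
    intro f h0 h t ht
    rw [← h0]
    exact dist_seq_le f t (fun s hs => h s (by omega))
  have hc1 : ∀ t ≤ l, t ≤ G.dist z (c t) := by
    intro t ht
    have h1 := hcv t ht
    have h2 := hG.dist_triangle (u := v) (v := c t) (w := z)
    rw [SimpleGraph.dist_comm (u := c t)] at h2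
    omega
  have same : ∀ f : ℕ → V, f 0 = z → (∀ t < l, G.Adj (f t) (f (t+1))) → (∀ t ≤ l, t ≤ G.dist z (f t)) →
      ∀ s ≤ l, ∀ t ≤ l, t ≤ s + 3 * G.dist (f s) (f t) := by
    intro f h0 h h1 s hs t ht
    have h2 := le f h0 h s hs
    have h3 := h1 t ht
    have h4 := hG.dist_triangle (u := z) (v := f s) (w := f t)
    omega
  have cross : ∀ f : ℕ → V, (∀ t ≤ l, t ≤ G.dist z (f t)) → (∀ t ≤ l, G.dist v z ≤ G.dist v (f t)) →
      ∀ s ≤ l, ∀ t ≤ l, s + t ≤ 3 * G.dist (c s) (f t) := by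
    intro f h1 h2 s hs t ht
    have h3 := h1 t ht
    have h4 := h2 t ht
    have h5 := hG.dist_triangle (u := v) (v := c s) (w := f t)
    have h6 := hG.dist_triangle (u := z) (v := c s) (w := f t)
    have h7 := hcv s hs
    have h8 := le c hc0 hc s hs
    omega
  refine ⟨![a, b, c], ?_, ?_, ?_, ?_⟩
  · intro i j
    fin_cases i <;> fin_cases j <;> simp [ha0, hb0, hc0]
  · intro i
    fin_cases i
    · exact ha
    · exact hb
    · exact hc
  · intro i
    fin_cases i
    · exact same a ha0 ha ha1
    · exact same b hb0 hb hb1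
    · exact same c hc0 hc hc1
  · intro i j hij s hs t ht
    fin_cases i <;> fin_cases j <;> first | exact absurd rfl hij | skip
    · exact hab s hs t ht
    · have := cross a ha1 hva t ht s hs
      rw [SimpleGraph.dist_comm] at this
      change s + t ≤ 3 * G.dist (a s) (c t)
      omega
    · have := hab t ht s hs
      rw [SimpleGraph.dist_comm] at this
      change s + t ≤ 3 * G.dist (b s) (a t)
      omega
    · have := cross b hb1 hvb t ht s hs
      rw [SimpleGraph.dist_comm] at this
      change s + t ≤ 3 * G.dist (b s) (c t)
      omega
    · exact cross a ha1 hva s hs t ht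
    · exact cross b hb1 hvb s hs t ht

/-- `π` is the least-index nearest-point projection to `p 0, …, p (N-1)` -/
def IsProj (G : SimpleGraph V) (N : ℕ) (p : ℕ → V) (π : V → ℕ) : Prop :=
  ∀ v, π v < N ∧ (∀ j < N, G.dist v (p (π v)) ≤ G.dist v (p j)) ∧
    ∀ j < N, G.dist v (p j) ≤ G.dist v (p (π v)) → π v ≤ j

lemma exists_proj (G : SimpleGraph V) {N : ℕ} (hN : 0 < N) (p : ℕ → V) : ∃ π, IsProj G N p π := by
  classical
  have : ∀ v, ∃ i, i < N ∧ ∀ j < N, G.dist v (p i) ≤ G.dist v (p j) := by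
    intro v
    obtain ⟨i, hi, h⟩ := Finset.exists_min_image (Finset.range N) (fun i => G.dist v (p i))
      ⟨0, by simpa using hN⟩
    exact ⟨i, by simpa using hi, fun j hj => h j (by simpa using hj)⟩
  refine ⟨fun v => Nat.find (this v), fun v => ⟨(Nat.find_spec (this v)).1, (Nat.find_spec (this v)).2, ?_⟩⟩
  intro j hj h
  exact Nat.find_min' (this v) ⟨hj, fun i hi => h.trans ((Nat.find_spec (this v)).2 i hi)⟩

lemma cell_walk (hG : G.Connected) {N : ℕ} {p : ℕ → V} {π : V → ℕ} (hπ : IsProj G N p π) (v : V) :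
    ∃ q : G.Walk (p (π v)) v, q.length = G.dist v (p (π v)) ∧ ∀ x ∈ q.support, π x = π v := by
  obtain ⟨q, hq⟩ := hG.exists_walk_length_eq_dist (p (π v)) v
  refine ⟨q, by rw [hq, SimpleGraph.dist_comm], ?_⟩
  intro x hx
  obtain ⟨i, rfl, hi⟩ := Walk.mem_support_iff_exists_getVert.1 hx
  have h1 : G.dist (q.getVert i) (p (π v)) ≤ i := by
    rw [SimpleGraph.dist_comm]
    have := dist_le (q.take i)
    rw [Walk.take_length] at this; omega
  have h2 : G.dist v (q.getVert i) ≤ q.length - i := by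
    rw [SimpleGraph.dist_comm]
    have := dist_le (q.drop i)
    rwa [Walk.drop_length] at this
  rw [SimpleGraph.dist_comm] at hq
  set x := q.getVert i
  obtain ⟨a1, a2, a3⟩ := hπ v
  obtain ⟨b1, b2, b3⟩ := hπ x
  have tri : ∀ j, G.dist v (p j) ≤ G.dist v x + G.dist x (p j) := fun j => hG.dist_triangle
  apply le_antisymm
  · apply b3 _ a1
    have := a2 (π x) b1
    have := tri (π x)
    omega
  · apply a3 _ b1
    have := b2 (π v) a1
    have := tri (π x)
    omega

lemma bag_walk (hG : G.Connected) {N : ℕ} {p : ℕ → V} {π : V → ℕ} (hπ : IsProj G N p π) (v : V)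
    (Win : ℕ → Prop) (f : ℕ → V) (t R : ℕ) (hf : ∀ s < t, G.Adj (f s) (f (s+1)))
    (hft : f t = p (π v)) (hw : ∀ s ≤ t, Win (π (f s))) (hwv : Win (π v)) (hR : G.dist v (p (π v)) ≤ R) :
    ∃ q : G.Walk (f 0) v, q.length ≤ t + R ∧ ∀ x ∈ q.support, Win (π x) := by
  obtain ⟨q1, h1, h2, -⟩ := exists_seqWalk f t hf
  obtain ⟨q2, h3, h4⟩ := cell_walk hG hπ v
  refine ⟨(q1.copy rfl hft).append q2, by simp [h1, h3, hR], ?_⟩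
  intro x hx
  rw [Walk.mem_support_append_iff] at hx
  rcases hx with hx | hx
  · rw [Walk.support_copy, h2] at hx
    simp at hx
    obtain ⟨s, hs, rfl⟩ := hx
    exact hw s (by omega)
  · rw [h4 x hx]; exact hwv

lemma good_of_path (hG : G.Connected) (k D : ℕ) (p : ℕ → V) (π : V → ℕ) (hπ : IsProj G (D+1) p π)
    (hp : ∀ i j, i ≤ j → j ≤ D → G.dist (p i) (p j) = j - i)
    (hadj : ∀ i < D, G.Adj (p i) (p (i+1)))
    (hshort : ∀ u v, G.Adj u v → π u ≤ π v + (6*k+2))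
    (hR : ∀ v, G.dist v (p (π v)) ≤ 9 * k) : Good G (18*k+2) := by
  have hpp : ∀ i ≤ D, π (p i) = i := by
    intro i hi
    obtain ⟨h1, h2, h3⟩ := hπ (p i)
    have h4 := h2 i (by omega)
    rw [SimpleGraph.dist_self] at h4
    rcases le_total i (π (p i)) with h | h
    · rw [hp _ _ h (by omega)] at h4; omega
    · rw [SimpleGraph.dist_comm, hp _ _ h (by omega)] at h4; omega
  have hπD : ∀ v, π v ≤ D := fun v => Nat.lt_succ_iff.1 (hπ v).1
  refine ⟨D + 1 + (6*k+2), 6*k+2, π, by omega, fun v => by have := hπD v; omega, ?_, ?_⟩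
  · intro u v huv
    have h1 := hshort u v huv
    have h2 := hshort v u huv.symm
    have := hπD u
    have := hπD v
    rcases le_total (π u) (π v) with h | h
    · left
      refine ⟨π v - π u, by omega, ?_⟩
      rw [Nat.mod_eq_of_lt] <;> omega
    · right
      refine ⟨π u - π v, by omega, ?_⟩
      rw [Nat.mod_eq_of_lt] <;> omega
  · intro i hi hne
    by_cases hiD : i ≤ D
    · refine ⟨p i, ⟨0, by omega, ?_⟩, ?_⟩
      · rw [hpp i hiD, Nat.mod_eq_of_lt] <;> omega
      · rintro v ⟨t, ht, e⟩
        have e0 := e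
        rw [Nat.mod_eq_of_lt (by omega)] at e
        have hv := hπD v
        obtain ⟨q, h1, h2⟩ := bag_walk hG hπ v (InWin (D + 1 + (6*k+2)) (6*k+2) i) (fun s => p (i+s)) t (9*k)
          (fun s hs => hadj (i+s) (by omega)) (by rw [e])
          (fun s hs => ⟨s, by omega, by rw [hpp _ (by omega), Nat.mod_eq_of_lt]; omega⟩) ⟨t, ht, e0⟩ (hR v)
        exact ⟨q, by omega, h2⟩
    · obtain ⟨m, hm⟩ := Nat.exists_eq_add_of_le hi.le
      have win : ∀ s, m + s ≤ 6*k+2 → s ≤ D → InWin (D + 1 + (6*k+2)) (6*k+2) i s := by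
        intro s hs hsD
        refine ⟨m + s, hs, ?_⟩
        have : i + (m + s) = s + (D + 1 + (6*k+2)) := by omega
        rw [this, Nat.add_mod_right, Nat.mod_eq_of_lt]; omega
      refine ⟨p 0, ?_, ?_⟩
      · rw [hpp 0 (by omega)]; exact win 0 (by omega) (by omega)
      · rintro v ⟨t, ht, e⟩
        have e0 := e
        have hv := hπD v
        have hit : D + 1 + (6*k+2) ≤ i + t := by
          by_contra hlt
          rw [Nat.mod_eq_of_lt (by omega)] at e
          omega
        rw [Nat.mod_eq_sub_mod hit, Nat.mod_eq_of_lt (by omega)] at e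
        obtain ⟨q, h1, h2⟩ := bag_walk hG hπ v (InWin (D + 1 + (6*k+2)) (6*k+2) i) p (π v) (9*k)
          (fun s hs => hadj s (by omega)) rfl
          (fun s hs => by rw [hpp _ (by omega)]; exact win s (by omega) (by omega)) ⟨t, ht, e0⟩ (hR v)
        exact ⟨q, by omega, h2⟩

lemma good_of_cycle (hG : G.Connected) (k L : ℕ) (hL : 3 ≤ L) (hL' : 8 * k + 3 ≤ L) (c : ℕ → V)
    (hper : ∀ i, c (i % L) = c i) (hadj : ∀ i, G.Adj (c i) (c (i+1)))
    (hiso : ∀ i t, t ≤ L → t ≤ G.dist (c i) (c (i+t)) ∨ L - t ≤ G.dist (c i) (c (i+t)))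
    (hno : ¬ ClawLegs G (3*k+1)) : Good G (18*k+2) := by
  obtain ⟨π, hπ⟩ := exists_proj G (show 0 < L by omega) c
  have hup : ∀ i t, G.dist (c i) (c (i+t)) ≤ t := fun i t =>
    dist_seq_le (fun s => c (i+s)) t (fun s _ => hadj _)
  have hpp0 : ∀ i < L, π (c i) = i := by
    intro i hi
    obtain ⟨h1, h2, h3⟩ := hπ (c i)
    have h4 := h2 i hi
    rw [SimpleGraph.dist_self] at h4
    rcases le_total i (π (c i)) with h | h
    · have := hiso i (π (c i) - i) (by omega)
      rw [show i + (π (c i) - i) = π (c i) by omega] at this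
      omega
    · have := hiso (π (c i)) (i - π (c i)) (by omega)
      rw [show π (c i) + (i - π (c i)) = i by omega, SimpleGraph.dist_comm] at this
      omega
  have hpp : ∀ i, π (c i) = i % L := by
    intro i
    rw [← hper, hpp0 _ (Nat.mod_lt _ (by omega))]
  have hR : ∀ v, G.dist v (c (π v)) ≤ 3 * k := by
    intro v
    by_contra hlt
    obtain ⟨h1, h2, -⟩ := hπ v
    have h2' : ∀ j, G.dist v (c (π v)) ≤ G.dist v (c j) := by
      intro j
      rw [← hper j]
      exact h2 _ (Nat.mod_lt _ (by omega))
    apply hno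
    have hz : c (π v + L) = c (π v) := by rw [← hper, Nat.add_mod_right, hper]
    apply claw_mk hG (3*k+1) (c (π v)) v (by omega) (fun t => c (π v + L + t)) (fun t => c (π v + L - t))
    · exact hz
    · exact hz
    · intro t _; exact hadj _
    · intro t ht
      have := (hadj (π v + L - (t+1))).symm
      rwa [show π v + L - (t+1) + 1 = π v + L - t by omega] at this
    · intro t ht
      rw [← hz]
      have := hiso (π v + L) t (by omega)
      omega
    · intro t ht
      rw [← hz]
      have := hiso (π v + L - t) t (by omega)
      rw [show π v + L - t + t = π v + L by omega, SimpleGraph.dist_comm] at this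
      omega
    · intro t _; exact h2' _
    · intro t _; exact h2' _
    · intro s hs t ht
      have := hiso (π v + L - t) (s + t) (by omega)
      rw [show π v + L - t + (s+t) = π v + L + s by omega, SimpleGraph.dist_comm] at this
      omega
  refine ⟨L, 6*k+2, π, hL, fun v => (hπ v).1, ?_, ?_⟩
  · have key : ∀ u v, G.Adj u v → π u ≤ π v → InWin L (6*k+2) (π u) (π v) ∨ InWin L (6*k+2) (π v) (π u) := by
      intro u v huv h
      have hu := (hπ u).1
      have hv := (hπ v).1
      have := hiso (π u) (π v - π u) (by omega)
      rw [show π u + (π v - π u) = π v by omega] at this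
      have h1 := hG.dist_triangle (u := c (π u)) (v := u) (w := c (π v))
      have h2 := hG.dist_triangle (u := u) (v := v) (w := c (π v))
      have h3 := hR u
      have h4 := hR v
      rw [SimpleGraph.dist_comm] at h3
      rw [dist_eq_one_iff_adj.2 huv] at h2
      rcases this with h5 | h5
      · left
        exact ⟨π v - π u, by omega, by rw [Nat.mod_eq_of_lt] <;> omega⟩
      · right
        refine ⟨L - (π v - π u), by omega, ?_⟩
        rw [show π v + (L - (π v - π u)) = π u + L by omega, Nat.add_mod_right, Nat.mod_eq_of_lt hu]
    intro u v huv
    rcases le_total (π u) (π v) with h | h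
    · exact key u v huv h
    · exact (key v u huv.symm h).symm
  · intro i hi _
    refine ⟨c i, ⟨0, by omega, by rw [hpp]; rfl⟩, ?_⟩
    rintro v ⟨t, ht, e⟩
    obtain ⟨q, h1, h2⟩ := bag_walk hG hπ v (InWin L (6*k+2) i) (fun s => c (i+s)) t (3*k)
      (fun s hs => hadj _) (by rw [← e, hper])
      (fun s hs => ⟨s, by omega, by rw [hpp]⟩) ⟨t, ht, e⟩ (hR v)
    exact ⟨q, by omega, h2⟩


end PartC

section PartD
variable {G : SimpleGraph V}

lemma path_claw (hG : G.Connected) (k D : ℕ) (p : ℕ → V)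
    (hp : ∀ i j, i ≤ j → j ≤ D → G.dist (p i) (p j) = j - i)
    (hadj : ∀ i < D, G.Adj (p i) (p (i+1))) (hno : ¬ ClawLegs G (3*k+1)) (v : V) (i : ℕ) (hi : i ≤ D)
    (hc : ∀ j ≤ D, G.dist v (p i) ≤ G.dist v (p j)) (hf : 3*k+1 ≤ G.dist v (p i)) :
    i ≤ 3*k ∨ D ≤ i + 3*k := by
  by_contra hcon
  push Not at hcon
  apply hno
  apply claw_mk hG (3*k+1) (p i) v hf (fun t => p (i + t)) (fun t => p (i - t)) rfl rfl
  · intro t ht; exact hadj _ (by omega)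
  · intro t ht
    have := (hadj (i - (t+1)) (by omega)).symm
    rwa [show i - (t+1) + 1 = i - t by omega] at this
  · intro t ht
    rw [hp _ _ (by omega) (by omega)]; omega
  · intro t ht
    rw [SimpleGraph.dist_comm, hp _ _ (by omega) (by omega)]; omega
  · intro t ht; exact hc _ (by omega)
  · intro t ht; exact hc _ (by omega)
  · intro s hs t ht
    rw [SimpleGraph.dist_comm, hp _ _ (by omega) (by omega)]; omega

lemma end_bound (hG : G.Connected) (k D : ℕ) (p : ℕ → V) (π : V → ℕ)
    (hp : ∀ i j, i ≤ j → j ≤ D → G.dist (p i) (p j) = j - i)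
    (hπD : ∀ v, π v ≤ D) (hπ : ∀ v, ∀ j ≤ D, G.dist v (p (π v)) ≤ G.dist v (p j))
    (hcl : ∀ v i, i ≤ D → (∀ j ≤ D, G.dist v (p i) ≤ G.dist v (p j)) → 3*k+1 ≤ G.dist v (p i) →
      i ≤ 3*k ∨ D ≤ i + 3*k)
    (hshort : ∀ u v, G.Adj u v → π u ≤ π v + (6*k+2)) (hD : 18*k+3 ≤ D)
    (hdiam : ∀ u v, G.dist u v ≤ D) (v : V) (hv : π v ≤ 3*k) : G.dist v (p (π v)) ≤ 9*k := by
  by_contra hlt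
  let A : V → Prop := fun x => 3*k+1 ≤ G.dist x (p (π x)) ∧ π x ≤ 3*k
  obtain ⟨q, hq⟩ := hG.exists_walk_length_eq_dist v (p D)
  have hA0 : A (q.getVert 0) := by
    rw [q.getVert_zero]; exact ⟨by omega, hv⟩
  have hAD : ¬ A (q.getVert q.length) := by
    rw [q.getVert_length]
    rintro ⟨h1, -⟩
    have := hπ (p D) D le_rfl
    rw [SimpleGraph.dist_self] at this
    omega
  have : ∃ i < q.length, A (q.getVert i) ∧ ¬ A (q.getVert (i+1)) := by
    by_contra hcon
    push Not at hcon
    have : ∀ i ≤ q.length, A (q.getVert i) := by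
      intro i
      induction i with
      | zero => intro _; exact hA0
      | succ i ih => intro h; exact hcon i (by omega) (ih (by omega))
    exact hAD (this _ le_rfl)
  obtain ⟨i, hi, hu, hx⟩ := this
  have hadj := q.adj_getVert_succ hi
  have d1 : G.dist v (q.getVert (i+1)) ≤ i+1 := by
    have := dist_le (q.take (i+1))
    rw [Walk.take_length] at this; omega
  have d2 : G.dist (q.getVert (i+1)) (p D) ≤ q.length - (i+1) := by
    have := dist_le (q.drop (i+1))
    rwa [Walk.drop_length] at this
  have hqD := hdiam v (p D)
  set u := q.getVert i
  set x := q.getVert (i+1)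
  obtain ⟨hu1, hu2⟩ := hu
  have hs := hshort x u hadj.symm
  have hxn : G.dist x (p (π x)) ≤ 3*k := by
    by_contra hf
    have : ¬ π x ≤ 3*k := fun h => hx ⟨by omega, h⟩
    have := hcl x (π x) (hπD x) (hπ x) (by omega)
    omega
  have t1 := hG.dist_triangle (u := u) (v := x) (w := p (π x))
  rw [dist_eq_one_iff_adj.2 hadj] at t1
  have hux : π x ≤ 3*k := by
    have h1 := hπ u (π x) (hπD x)
    have := hcl u (π x) (hπD x) (fun j hj => by have := hπ u j hj; omega) (by omega)
    omega
  have t2 := hG.dist_triangle (u := p (π x)) (v := x) (w := p D)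
  rw [hp _ _ (hπD x) le_rfl, SimpleGraph.dist_comm (u := p (π x))] at t2
  have t3 := hG.dist_triangle (u := v) (v := x) (w := p (π x))
  have := hπ v (π x) (hπD x)
  omega

lemma all_bound (hG : G.Connected) (k D : ℕ) (p : ℕ → V) (π : V → ℕ)
    (hp : ∀ i j, i ≤ j → j ≤ D → G.dist (p i) (p j) = j - i)
    (hπD : ∀ v, π v ≤ D) (hπ : ∀ v, ∀ j ≤ D, G.dist v (p (π v)) ≤ G.dist v (p j))
    (hcl : ∀ v i, i ≤ D → (∀ j ≤ D, G.dist v (p i) ≤ G.dist v (p j)) → 3*k+1 ≤ G.dist v (p i) →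
      i ≤ 3*k ∨ D ≤ i + 3*k)
    (hshort : ∀ u v, G.Adj u v → π u ≤ π v + (6*k+2)) (hD : 18*k+3 ≤ D)
    (hdiam : ∀ u v, G.dist u v ≤ D) (v : V) : G.dist v (p (π v)) ≤ 9*k := by
  by_cases hf : 3*k+1 ≤ G.dist v (p (π v))
  · rcases hcl v (π v) (hπD v) (hπ v) hf with h | h
    · exact end_bound hG k D p π hp hπD hπ hcl hshort hD hdiam v h
    · have hsub : ∀ x, D - (D - π x) = π x := fun x => by have := hπD x; omega
      have := end_bound hG k D (fun i => p (D - i)) (fun x => D - π x) ?_ ?_ ?_ ?_ ?_ hD hdiam v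
        (by omega)
      · simpa only [hsub] using this
      · intro i j hij hj
        rw [SimpleGraph.dist_comm, hp _ _ (by omega) (by omega)]; omega
      · intro x; exact Nat.sub_le _ _
      · intro x j hj
        simp only [hsub]
        exact hπ x _ (by omega)
      · intro x i hi hc hf
        have := hcl x (D - i) (by omega) (fun j hj => by
          have := hc (D - j) (by omega)
          rwa [show D - (D - j) = j by omega] at this) hf
        omega
      · intro a b hab
        have := hshort b a hab.symm
        have := hπD a
        have := hπD b
        omega
  · omega

/-- sum of edge weights mod 2 along a walk -/
def par (lg : V → V → ZMod 2) {u v : V} (q : G.Walk u v) : ZMod 2 :=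
  (q.darts.map fun d => lg d.fst d.snd).sum

lemma par_append (lg : V → V → ZMod 2) {u v w : V} (q : G.Walk u v) (r : G.Walk v w) :
    par lg (q.append r) = par lg q + par lg r := by
  simp [par, Walk.darts_append]

lemma par_cons (lg : V → V → ZMod 2) {u v w : V} (h : G.Adj u v) (r : G.Walk v w) :
    par lg (Walk.cons h r) = lg u v + par lg r := by
  simp [par]

lemma par_nil (lg : V → V → ZMod 2) {u : V} :
    par lg (Walk.nil : G.Walk u u) = 0 := by
  simp [par]

lemma zmod2_add_self (x : ZMod 2) : x + x = 0 := CharTwo.add_self_eq_zero x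

lemma par_reverse (lg : V → V → ZMod 2) (hs : ∀ u v, lg u v = lg v u) {u v : V} (q : G.Walk u v) :
    par lg q.reverse = par lg q := by
  induction q with
  | nil => rfl
  | cons h p ih =>
    rw [Walk.reverse_cons, par_append, ih, par_cons, par_cons, par_nil, hs, add_zero, add_comm]

lemma par_diff (g : V → ZMod 2) {u v : V} (q : G.Walk u v) :
    par (fun a b => g a + g b) q = g u + g v := by
  induction q with
  | nil => rw [par_nil, zmod2_add_self]
  | @cons a b c h p ih =>
    rw [par_cons, ih]
    have := zmod2_add_self (g b)
    linear_combination this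

lemma par_congr (l l' : V → V → ZMod 2) {u v : V} (q : G.Walk u v)
    (h : ∀ a ∈ q.support, ∀ b ∈ q.support, G.Adj a b → l a b = l' a b) : par l q = par l' q := by
  unfold par
  congr 1
  apply List.map_congr_left
  intro d hd
  exact h _ (q.dart_fst_mem_support_of_mem_darts hd) _ (q.dart_snd_mem_support_of_mem_darts hd) d.adj

lemma min_split (hG : G.Connected) (lg : V → V → ZMod 2) (hs : ∀ u v, lg u v = lg v u) {x u v : V}
    (A : G.Walk x u) (M : G.Walk u v) (C : G.Walk v x)
    (hw : par lg (A.append (M.append C)) ≠ 0)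
    (hmin : ∀ y (w' : G.Walk y y), par lg w' ≠ 0 → (A.append (M.append C)).length ≤ w'.length) :
    M.length ≤ G.dist u v ∨ A.length + C.length ≤ G.dist u v := by
  obtain ⟨R, hR⟩ := hG.exists_walk_length_eq_dist u v
  by_cases h : par lg (M.append R.reverse) = 0
  · have : par lg (A.append (R.append C)) ≠ 0 := by
      intro h'
      apply hw
      simp only [par_append, par_reverse lg hs] at h h' ⊢
      have := zmod2_add_self (par lg R)
      linear_combination h + h' - this
    have := hmin _ _ this
    simp only [Walk.length_append] at this
    omega
  · have := hmin _ _ h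
    simp only [Walk.length_append, Walk.length_reverse] at this
    omega

lemma min_iso (hG : G.Connected) (lg : V → V → ZMod 2) (hs : ∀ u v, lg u v = lg v u) {x : V}
    (w : G.Walk x x) (hw : par lg w ≠ 0)
    (hmin : ∀ y (w' : G.Walk y y), par lg w' ≠ 0 → w.length ≤ w'.length) (a t : ℕ)
    (hb : a + t ≤ w.length) : t ≤ G.dist (w.getVert a) (w.getVert (a+t)) ∨
      w.length - t ≤ G.dist (w.getVert a) (w.getVert (a+t)) := by
  have e : (w.take a).append (((w.drop a).take t).append ((w.drop a).drop t)) = w := by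
    rw [Walk.append_take_drop_eq, Walk.append_take_drop_eq]
  have := min_split hG lg hs (w.take a) ((w.drop a).take t) ((w.drop a).drop t) (by rwa [e])
    (by rwa [e])
  simp only [Walk.take_length, Walk.drop_length, Walk.drop_getVert] at this
  omega

lemma min_three (lg : V → V → ZMod 2) (hs : ∀ u v, lg u v = lg v u) {x : V}
    (w : G.Walk x x) (hw : par lg w ≠ 0) : 3 ≤ w.length := by
  by_contra hlt
  match w, hw, hlt with
  | .nil, hw, _ => exact hw (par_nil lg)
  | .cons h .nil, _, _ => exact G.irrefl h
  | .cons h (.cons h' .nil), hw, _ =>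
    apply hw
    rw [par_cons, par_cons, par_nil, hs x, add_zero, zmod2_add_self]
  | .cons _ (.cons _ (.cons _ r)), _, hlt => simp at hlt

/-- cyclic parametrisation of a shortest odd closed walk -/
lemma min_cycle (hG : G.Connected) (lg : V → V → ZMod 2) (hs : ∀ u v, lg u v = lg v u) {x : V}
    (w : G.Walk x x) (hw : par lg w ≠ 0)
    (hmin : ∀ y (w' : G.Walk y y), par lg w' ≠ 0 → w.length ≤ w'.length) :
    ∃ c : ℕ → V, (∀ i, c (i % w.length) = c i) ∧ (∀ i, G.Adj (c i) (c (i+1))) ∧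
      (∀ i t, t ≤ w.length → t ≤ G.dist (c i) (c (i+t)) ∨ w.length - t ≤ G.dist (c i) (c (i+t))) := by
  have hL := min_three lg hs w hw
  have iso := min_iso hG lg hs w hw hmin
  have h0L : w.getVert w.length = w.getVert 0 := by rw [w.getVert_length, w.getVert_zero]
  have adj : ∀ i < w.length, G.Adj (w.getVert i) (w.getVert (i+1)) := fun i hi => w.adj_getVert_succ hi
  generalize w.length = L at *
  have hc : ∀ i, i ≤ L → w.getVert (i % L) = w.getVert i := by
    intro i hi
    rcases hi.lt_or_eq with h | h
    · rw [Nat.mod_eq_of_lt h]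
    · rw [h, Nat.mod_self, h0L]
  have hr : ∀ i, i % L < L := fun i => Nat.mod_lt _ (by omega)
  refine ⟨fun i => w.getVert (i % L), ?_, ?_, ?_⟩
  · intro i; simp
  · intro i
    have := adj (i % L) (hr i)
    rw [← hc _ (hr i)] at this
    simpa using this
  · intro i t ht
    have e : (i + t) % L = (i % L + t) % L := by simp
    dsimp only
    rw [e]
    have := hr i
    set r := i % L
    by_cases h : r + t ≤ L
    · rw [hc _ h]
      exact iso r t h
    · rw [Nat.mod_eq_sub_mod (by omega), Nat.mod_eq_of_lt (by omega)]
      have := iso (r + t - L) (L - t) (by omega)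
      rw [show r + t - L + (L - t) = r by omega, SimpleGraph.dist_comm] at this
      omega


end PartD

section PartE
variable {G : SimpleGraph V}

/-- indicator of long edges -/
noncomputable def lgi (π : V → ℕ) (m : ℕ) (u v : V) : ZMod 2 :=
  open Classical in if π u + m < π v ∨ π v + m < π u then 1 else 0

lemma lgi_symm (π : V → ℕ) (m : ℕ) (u v : V) : lgi π m u v = lgi π m v u := by
  unfold lgi
  congr 1
  exact propext or_comm

lemma exists_odd (hG : G.Connected) (D m : ℕ) (hm : 1 ≤ m) (p : ℕ → V) (π : V → ℕ)
    (hπ : IsProj G (D+1) p π) (hpp : ∀ i ≤ D, π (p i) = i)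
    (hadj : ∀ i < D, G.Adj (p i) (p (i+1))) (u v : V) (huv : G.Adj u v) (hl : π v + m < π u) :
    ∃ x, ∃ w : G.Walk x x, par (lgi π m) w ≠ 0 := by
  have hs := lgi_symm π m
  let Z : V → V → Prop := fun a b => ∃ q : G.Walk a b, par (lgi π m) q = 0
  have Zsymm : ∀ a b, Z a b → Z b a := by
    rintro a b ⟨q, hq⟩
    exact ⟨q.reverse, by rw [par_reverse _ hs, hq]⟩
  have Ztrans : ∀ a b c, Z a b → Z b c → Z a c := by
    rintro a b c ⟨q, hq⟩ ⟨r, hr⟩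
    exact ⟨q.append r, by rw [par_append, hq, hr, add_zero]⟩
  have Zcell : ∀ x, Z (p (π x)) x := by
    intro x
    obtain ⟨q, -, hq⟩ := cell_walk hG hπ x
    refine ⟨q, ?_⟩
    rw [par_congr _ (fun a b => (fun _ => (0 : ZMod 2)) a + (fun _ => 0) b), par_diff]
    · simp
    · intro a ha b hb _
      simp [lgi, hq a ha, hq b hb]
  have Zp : ∀ i ≤ D, Z (p 0) (p i) := by
    intro i
    induction i with
    | zero => intro _; exact ⟨Walk.nil, par_nil _⟩
    | succ i ih =>
      intro hi
      refine Ztrans _ _ _ (ih (by omega)) ⟨Walk.cons (hadj i (by omega)) Walk.nil, ?_⟩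
      rw [par_cons, par_nil, add_zero]
      unfold lgi
      rw [hpp _ (by omega), hpp _ (by omega), if_neg (by omega)]
  have Zx : ∀ x, Z (p 0) x := fun x => Ztrans _ _ _ (Zp _ (Nat.lt_succ_iff.1 (hπ x).1)) (Zcell x)
  obtain ⟨q, hq⟩ := Ztrans _ _ _ (Zsymm _ _ (Zx v)) (Zx u)
  refine ⟨u, Walk.cons huv q, ?_⟩
  rw [par_cons, hq, add_zero]
  unfold lgi
  rw [if_pos (by omega)]
  exact one_ne_zero

lemma cross (k D : ℕ) (π H : V → ℕ) (hD : 18*k+3 ≤ D) 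
    (hH : ∀ u v, G.Adj u v → H u ≤ H v + 1)
    (hfar : ∀ v, 3*k+1 ≤ H v → π v ≤ 3*k ∨ D ≤ π v + 3*k)
    (hlong : ∀ u v, G.Adj u v → π u + (6*k+2) < π v → π u ≤ 3*k ∧ D ≤ π v + 3*k)
    {x : V} (w : G.Walk x x) (hw : par (lgi π (6*k+2)) w ≠ 0) (m : ℕ) (hm : 3*k ≤ m) (hm' : m + 3*k+1 ≤ D) :
    ∃ y ∈ w.support, ∃ y' ∈ w.support, π y ≤ m ∧ m < π y' ∧ H y ≤ 3*k+1 ∧ H y' ≤ 3*k+1 := by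
  classical
  let g : V → ZMod 2 := fun v => if m < π v then 1 else 0
  have h0 : par (fun a b => g a + g b) w = 0 := by rw [par_diff, zmod2_add_self]
  have : ∃ a ∈ w.support, ∃ b ∈ w.support, G.Adj a b ∧ lgi π (6*k+2) a b ≠ g a + g b := by
    by_contra hcon
    push Not at hcon
    exact hw ((par_congr _ _ w hcon).trans h0)
  obtain ⟨a, ha, b, hb, hab, hne⟩ := this
  have key : ∀ a b, G.Adj a b → π a ≤ m → m < π b → ¬ (π a + (6*k+2) < π b) → H a ≤ 3*k+1 ∧ H b ≤ 3*k+1 := by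
    intro a b hab h1 h2 h3
    have e1 := hH a b hab
    have e2 := hH b a hab.symm
    have e3 := hfar a
    have e4 := hfar b
    omega
  by_cases h1 : m < π a <;> by_cases h2 : m < π b
  · exfalso; apply hne
    have : g a + g b = 0 := by simp only [g, if_pos h1, if_pos h2]; exact zmod2_add_self 1
    rw [this]
    unfold lgi
    rw [if_neg]
    rintro (h | h)
    · have := hlong a b hab h; omega
    · have := hlong b a hab.symm h; omega
  · have hn : ¬ (π b + (6*k+2) < π a) := by
      intro h
      apply hne
      simp only [g, if_pos h1, if_neg h2, lgi, if_pos (Or.inr h), add_zero]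
    have := key b a hab.symm (by omega) h1 hn
    exact ⟨b, hb, a, ha, by omega, h1, this⟩
  · have hn : ¬ (π a + (6*k+2) < π b) := by
      intro h
      apply hne
      simp only [g, if_pos h2, if_neg h1, lgi, zero_add]
      rw [if_pos (Or.inl h)]
    have := key a b hab (by omega) h2 hn
    exact ⟨a, ha, b, hb, by omega, h2, this⟩
  · exfalso; apply hne
    have : g a + g b = 0 := by simp only [g, if_neg h1, if_neg h2]; exact zmod2_add_self 0
    rw [this]
    unfold lgi
    rw [if_neg]
    rintro (h | h)
    · have := hlong a b hab h; omega
    · have := hlong b a hab.symm h; omega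

lemma closed_len {x : V} (w : G.Walk x x) (hG : G.Connected) (a b : V) (ha : a ∈ w.support)
    (hb : b ∈ w.support) : 2 * G.dist a b ≤ w.length := by
  obtain ⟨i, rfl, hi⟩ := Walk.mem_support_iff_exists_getVert.1 ha
  obtain ⟨j, rfl, hj⟩ := Walk.mem_support_iff_exists_getVert.1 hb
  have key : ∀ i j, i ≤ j → j ≤ w.length → 2 * G.dist (w.getVert i) (w.getVert j) ≤ w.length := by
    intro i j hij hj
    have h1 := dist_le (w.take i)
    have h2 := dist_le (w.drop j)
    have h3 := dist_le ((w.drop i).take (j - i))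
    have h4 := hG.dist_triangle (u := w.getVert i) (v := x) (w := w.getVert j)
    simp only [Walk.take_length, Walk.drop_length, Walk.drop_getVert] at h1 h2 h3
    rw [show i + (j - i) = j by omega] at h3
    rw [SimpleGraph.dist_comm] at h1 h2
    omega
  rcases le_total i j with h | h
  · exact key i j h hj
  · rw [SimpleGraph.dist_comm]; exact key j i h hi

lemma core [Finite V] (hG : G.Connected) (k : ℕ) (hno : ¬ ClawLegs G (3*k+1)) : Good G (18*k+2) := by
  classical
  have := hG.nonempty
  obtain ⟨⟨a, b⟩, hmax⟩ := Finite.exists_max (fun x : V × V => G.dist x.1 x.2)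
  replace hmax : ∀ u v, G.dist u v ≤ G.dist a b := fun u v => hmax (u, v)
  obtain ⟨P, hP⟩ := hG.exists_walk_length_eq_dist a b
  generalize hDdef : G.dist a b = D at *
  by_cases hD : D ≤ 18*k+2
  · refine ⟨3, 0, fun _ => 0, le_rfl, by simp, fun u v _ => Or.inl ⟨0, le_rfl, rfl⟩, ?_⟩
    rintro i hi ⟨_, h⟩
    refine ⟨a, h, fun v _ => ?_⟩
    obtain ⟨q, hq⟩ := hG.exists_walk_length_eq_dist a v
    exact ⟨q, by have := hmax a v; omega, fun _ _ => h⟩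
  let p : ℕ → V := P.getVert
  have hadj : ∀ i < D, G.Adj (p i) (p (i+1)) := fun i hi => P.adj_getVert_succ (by omega)
  have hp : ∀ i j, i ≤ j → j ≤ D → G.dist (p i) (p j) = j - i := by
    intro i j hij hj
    have h1 := dist_le (P.take i)
    have h2 := dist_le (P.drop j)
    have h3 := dist_le ((P.drop i).take (j - i))
    have h4 := hG.dist_triangle (u := a) (v := p i) (w := b)
    have h5 := hG.dist_triangle (u := p i) (v := p j) (w := b)
    simp only [Walk.take_length, Walk.drop_length, Walk.drop_getVert] at h1 h2 h3
    rw [show i + (j - i) = j by omega] at h3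
    change G.dist a (p i) ≤ _ at h1
    change G.dist (p j) b ≤ _ at h2
    change G.dist (p i) (p j) ≤ _ at h3
    omega
  obtain ⟨π, hπ⟩ := exists_proj G (show 0 < D+1 by omega) p
  have hpp : ∀ i ≤ D, π (p i) = i := by
    intro i hi
    obtain ⟨h1, h2, h3⟩ := hπ (p i)
    have h4 := h2 i (by omega)
    rw [SimpleGraph.dist_self] at h4
    rcases le_total i (π (p i)) with h | h
    · rw [hp _ _ h (by omega)] at h4; omega
    · rw [SimpleGraph.dist_comm, hp _ _ h (by omega)] at h4; omega
  have hπD : ∀ v, π v ≤ D := fun v => Nat.lt_succ_iff.1 (hπ v).1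
  have hπc : ∀ v, ∀ j ≤ D, G.dist v (p (π v)) ≤ G.dist v (p j) :=
    fun v j hj => (hπ v).2.1 j (by omega)
  have hcl := path_claw hG k D p hp hadj hno
  by_cases hshort : ∀ u v, G.Adj u v → π u ≤ π v + (6*k+2)
  · exact good_of_path hG k D p π hπ hp hadj hshort
      (all_bound hG k D p π hp hπD hπc hcl hshort (by omega) hmax)
  push Not at hshort
  obtain ⟨u, v, huv, hl⟩ := hshort
  obtain ⟨x0, w0, hw0⟩ := exists_odd hG D (6*k+2) (by omega) p π hπ hpp hadj u v huv hl
  have hex : ∃ n, ∃ x, ∃ w : G.Walk x x, par (lgi π (6*k+2)) w ≠ 0 ∧ w.length = n :=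
    ⟨_, x0, w0, hw0, rfl⟩
  obtain ⟨x, w, hw, hlen⟩ := Nat.find_spec hex
  have hmin : ∀ y (w' : G.Walk y y), par (lgi π (6*k+2)) w' ≠ 0 → w.length ≤ w'.length := by
    intro y w' h
    rw [hlen]
    exact Nat.find_min' hex ⟨y, w', h, rfl⟩
  have hL := min_three _ (lgi_symm π _) w hw
  obtain ⟨c, hc1, hc2, hc3⟩ := min_cycle hG _ (lgi_symm π _) w hw hmin
  have hHadj : ∀ u v, G.Adj u v → G.dist u (p (π u)) ≤ G.dist v (p (π v)) + 1 := by
    intro u v huv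
    have h1 := hπc u (π v) (hπD v)
    have h2 := hG.dist_triangle (u := u) (v := v) (w := p (π v))
    rw [dist_eq_one_iff_adj.2 huv] at h2
    omega
  have hfar : ∀ v, 3*k+1 ≤ G.dist v (p (π v)) → π v ≤ 3*k ∨ D ≤ π v + 3*k :=
    fun v hv => hcl v (π v) (hπD v) (hπc v) hv
  have hlong : ∀ u v, G.Adj u v → π u + (6*k+2) < π v → π u ≤ 3*k ∧ D ≤ π v + 3*k := by
    intro u v huv h
    have h1 := hG.dist_triangle (u := p (π u)) (v := u) (w := p (π v))
    have h2 := hG.dist_triangle (u := u) (v := v) (w := p (π v))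
    rw [dist_eq_one_iff_adj.2 huv] at h2
    rw [hp _ _ (by omega) (hπD v), SimpleGraph.dist_comm (u := p (π u))] at h1
    have h3 := hHadj u v huv
    have h4 := hHadj v u huv.symm
    have h5 := hfar u (by omega)
    have h6 := hfar v (by omega)
    have := hπD v
    omega
  obtain ⟨y1, hy1, -, -, a1, -, a2, -⟩ := cross k D π (fun v => G.dist v (p (π v))) (by omega) hHadj hfar
    hlong w hw (3*k) (by omega) (by omega)
  obtain ⟨-, -, y2, hy2, -, b1, -, b2⟩ := cross k D π (fun v => G.dist v (p (π v))) (by omega) hHadj hfar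
    hlong w hw (D-3*k-1) (by omega) (by omega)
  have hcl2 := closed_len w hG y1 y2 hy1 hy2
  have t1 := hG.dist_triangle (u := p (π y1)) (v := y1) (w := p (π y2))
  have t2 := hG.dist_triangle (u := y1) (v := y2) (w := p (π y2))
  rw [hp _ _ (by omega) (hπD y2), SimpleGraph.dist_comm (u := p (π y1))] at t1
  exact good_of_cycle hG k w.length hL (by omega) c hc1 hc2 hc3 hno


end PartE

section PartF
variable {G : SimpleGraph V}

lemma dist_comp (c : G.ConnectedComponent) (a b : c.supp) :
    (G.induce c.supp).dist a b = G.dist a.1 b.1 := by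
  classical
  have hc : (G.induce c.supp).Connected := c.connected_toSimpleGraph
  have hab : G.Reachable a.1 b.1 := by
    obtain ⟨q⟩ := hc.preconnected a b
    obtain ⟨q', -⟩ := push_walk q
    exact ⟨q'⟩
  apply le_antisymm
  · obtain ⟨q, hq⟩ := hab.exists_walk_length_eq_dist
    obtain ⟨_, _, q', h⟩ := pull_walk (s := c.supp) q (by
      intro x hx
      have : G.Reachable a.1 x := ⟨q.takeUntil x hx⟩
      have ha := a.2
      rw [ConnectedComponent.mem_supp_iff] at ha ⊢
      rw [← ha]
      exact (ConnectedComponent.sound this).symm)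
    rw [← hq, ← h]
    exact dist_le q'
  · obtain ⟨q, hq⟩ := hc.exists_walk_length_eq_dist a b
    obtain ⟨q', h, -⟩ := push_walk q
    rw [← hq, ← h]
    exact dist_le q'

lemma clawLegs_comp (c : G.ConnectedComponent) (l : ℕ) (h : ClawLegs (G.induce c.supp) l) :
    ClawLegs G l := by
  obtain ⟨q, h1, h2, h3, h4⟩ := h
  refine ⟨fun i t => (q i t).1, fun i j => congrArg _ (h1 i j), fun i t ht => h2 i t ht, ?_, ?_⟩
  · intro i s hs t ht
    rw [← dist_comp]; exact h3 i s hs t ht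
  · intro i j hij s hs t ht
    rw [← dist_comp]; exact h4 i j hij s hs t ht


end PartF

/-- Let `k : ℕ`. If a graph `G` contains no `(≥ 3k)`-subdivision of the
claw `K_{1,3}` as a `3`-quasi-geodesic subgraph, then `G` has radial cycle-width at most
`18k + 2`. -/
theorem radial_cycle_width_upper_bound
    {V : Type*} [Fintype V] (k : ℕ) (G : SimpleGraph V)
    (hclaw : ¬ ContainsQuasiGeodesicSubdivGE G (3 * k) clawGraph 3) :
    ∃ (n : ℕ) (Hg : SimpleGraph (Fin n)) (B : Fin n → Set V),
      IsUnionOfCycles Hg ∧ IsGraphDecomp G Hg B ∧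
      ∀ h, radiusLE (G.induce (B h)) (18 * k + 2) := by
  apply assemble
  intro c
  apply core c.connected_toSimpleGraph
  intro h
  exact hclaw (contains_of_clawLegs (clawLegs_comp c _ h))


end RadialPaper
end

section
/- Let k ∈ ℕ. If a graph G contains no (≥k)-subdivision of the triangle K³ as a geodesic subgraph and no (≥3k)-subdivision of the wrench graph W as a 3-quasi-geodesic subgraph, then G has radial star-width at most 72k + 14. -/
open SimpleGraph

namespace RadialPaper

variable {V W N : Type*}

section metric
variable {V : Type*} [Fintype V]

open Classical in
/-- A total natural-number-valued metric agreeing with the distance on components. -/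
noncomputable def D (G : SimpleGraph V) (x y : V) : ℕ :=
  if G.Reachable x y then G.dist x y else Fintype.card V

variable {G : SimpleGraph V}

lemma D_of_reach {x y : V} (h : G.Reachable x y) : D G x y = G.dist x y := by
  simp [D, h]

lemma D_le_card (x y : V) : D G x y ≤ Fintype.card V := by
  unfold D
  split_ifs with h
  · obtain ⟨p, hp, hl⟩ := h.exists_path_of_dist
    rw [← hl]; exact hp.length_lt.le
  · exact le_rfl

lemma D_self (x : V) : D G x x = 0 := by
  rw [D_of_reach (Reachable.refl x)]; exact dist_self

lemma D_comm (x y : V) : D G x y = D G y x := by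
  unfold D
  by_cases h : G.Reachable x y
  · simp [h, h.symm, dist_comm]
  · have : ¬ G.Reachable y x := fun h' => h h'.symm
    simp [h, this]

lemma D_tri (x y z : V) : D G x z ≤ D G x y + D G y z := by
  by_cases h1 : G.Reachable x y
  · by_cases h2 : G.Reachable y z
    · rw [D_of_reach h1, D_of_reach h2, D_of_reach (h1.trans h2)]
      exact h1.dist_triangle_left z
    · have : D G y z = Fintype.card V := by simp [D, h2]
      have := D_le_card (G := G) x z
      omega
  · have : D G x y = Fintype.card V := by simp [D, h1]
    have := D_le_card (G := G) x z
    omega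

lemma D_eq_zero {x y : V} (h : D G x y = 0) : x = y := by
  by_cases h1 : G.Reachable x y
  · rw [D_of_reach h1] at h
    exact h1.dist_eq_zero_iff.1 h
  · have h2 : D G x y = Fintype.card V := by simp [D, h1]
    have : 0 < Fintype.card V := Fintype.card_pos_iff.2 ⟨x⟩
    omega

lemma D_adj {x y : V} (h : G.Adj x y) : D G x y = 1 := by
  rw [D_of_reach h.reachable]; exact dist_eq_one_iff_adj.2 h

lemma D_walk {x y : V} (p : G.Walk x y) : D G x y ≤ p.length := by
  rw [D_of_reach p.reachable]; exact dist_le p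

lemma edist_of_reach {x y : V} (h : G.Reachable x y) : G.edist x y = (D G x y : ℕ∞) := by
  rw [D_of_reach h, h.coe_dist_eq_edist]

/-- `s` restricted to `[0,n]` is a geodesic. -/
structure Geo (G : SimpleGraph V) (s : ℕ → V) (n : ℕ) : Prop where
  adj : ∀ i, i < n → G.Adj (s i) (s (i + 1))
  dst : ∀ i j, i ≤ j → j ≤ n → D G (s i) (s j) + i = j

lemma D_seq {s : ℕ → V} {n : ℕ} (hs : ∀ i, i < n → G.Adj (s i) (s (i + 1))) (i j : ℕ)
    (hij : i ≤ j) (hj : j ≤ n) : D G (s i) (s j) + i ≤ j := by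
  induction j, hij using Nat.le_induction with
  | base => simp [D_self]
  | succ m hm ih =>
    have h1 := ih (by omega)
    have h2 := D_tri (G := G) (s i) (s m) (s (m + 1))
    have h3 := D_adj (hs m (by omega))
    omega

lemma reach_seq {s : ℕ → V} {n : ℕ} (hs : ∀ i, i < n → G.Adj (s i) (s (i + 1))) (i : ℕ)
    (hi : i ≤ n) : G.Reachable (s 0) (s i) := by
  induction i with
  | zero => exact Reachable.refl _
  | succ m ih => exact (ih (by omega)).trans (hs m (by omega)).reachable

lemma Geo.of_ends {s : ℕ → V} {n : ℕ} (hs : ∀ i, i < n → G.Adj (s i) (s (i + 1)))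
    (h : D G (s 0) (s n) = n) : Geo G s n := by
  refine ⟨hs, fun i j hij hj => ?_⟩
  have h1 := D_seq hs i j hij hj
  have h2 := D_seq hs 0 i (by omega) (by omega)
  have h3 := D_seq hs j n hj le_rfl
  have h4 := D_tri (G := G) (s 0) (s i) (s n)
  have h5 := D_tri (G := G) (s i) (s j) (s n)
  omega

lemma exists_geo {x y : V} (h : G.Reachable x y) :
    ∃ s : ℕ → V, Geo G s (D G x y) ∧ s 0 = x ∧ s (D G x y) = y := by
  obtain ⟨p, hl⟩ := h.exists_walk_length_eq_dist
  have hD := D_of_reach h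
  refine ⟨p.getVert, Geo.of_ends ?_ ?_, p.getVert_zero, ?_⟩
  · intro i hi
    exact p.adj_getVert_succ (by omega)
  · rw [hD, ← hl, p.getVert_zero, p.getVert_length, hD, hl]
  · rw [hD, ← hl]; simp

lemma Geo.reach {s : ℕ → V} {n : ℕ} (hs : Geo G s n) {i j : ℕ} (hi : i ≤ n) (hj : j ≤ n) :
    G.Reachable (s i) (s j) :=
  (reach_seq hs.adj i hi).symm.trans (reach_seq hs.adj j hj)

lemma Geo.inj {s : ℕ → V} {n : ℕ} (hs : Geo G s n) {i j : ℕ} (hi : i ≤ n) (hj : j ≤ n)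
    (h : s i = s j) : i = j := by
  rcases le_total i j with h' | h'
  · have := hs.dst i j h' hj
    rw [h, D_self] at this; omega
  · have := hs.dst j i h' hi
    rw [h, D_self] at this; omega

end metric

/-- The graph `G` restricted to edges inside `X`, on the same vertex set. -/
def res {V : Type*} (G : SimpleGraph V) (X : Set V) : SimpleGraph V where
  Adj a b := G.Adj a b ∧ a ∈ X ∧ b ∈ X
  symm := ⟨fun _ _ h => ⟨h.1.symm, h.2.2, h.2.1⟩⟩
  loopless := ⟨fun _ h => G.loopless.irrefl _ h.1⟩

lemma res_le {V : Type*} (G : SimpleGraph V) (X : Set V) : res G X ≤ G := fun _ _ h => h.1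

lemma res_reach_mem {V : Type*} {G : SimpleGraph V} {X : Set V} {x y : V}
    (h : (res G X).Reachable x y) (hx : x ∈ X) : y ∈ X := by
  obtain ⟨p⟩ := h
  induction p with
  | nil => exact hx
  | cons h p ih => exact ih h.2.2

lemma reach_induct {V : Type*} {H : SimpleGraph V} (P : V → Prop) {x y : V}
    (h : H.Reachable x y) (hx : P x) (hstep : ∀ a b, H.Adj a b → P a → P b) : P y := by
  obtain ⟨p⟩ := h
  induction p with
  | nil => exact hx
  | cons h p ih => exact ih (hstep _ _ h hx)

section subdiv
variable {V : Type*} {G : SimpleGraph V}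

/-- The walk along a sequence. -/
def seg (s : ℕ → V) : (m : ℕ) → (∀ i, i < m → G.Adj (s i) (s (i + 1))) → G.Walk (s 0) (s m)
  | 0, _ => Walk.nil
  | m + 1, h => (seg s m (fun i hi => h i (by omega))).concat (h m (by omega))

lemma seg_length (s : ℕ → V) (m : ℕ) (h : ∀ i, i < m → G.Adj (s i) (s (i + 1))) :
    (seg s m h).length = m := by
  induction m with
  | zero => rfl
  | succ m ih => simp [seg, ih]

lemma seg_support (s : ℕ → V) (m : ℕ) (h : ∀ i, i < m → G.Adj (s i) (s (i + 1))) (x : V) :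
    x ∈ (seg s m h).support ↔ ∃ i, i ≤ m ∧ x = s i := by
  induction m with
  | zero => simp [seg]
  | succ m ih =>
    simp only [seg, Walk.support_concat, List.mem_append, List.mem_singleton, ih]
    constructor
    · rintro (⟨i, hi, rfl⟩ | rfl)
      · exact ⟨i, by omega, rfl⟩
      · exact ⟨m + 1, le_rfl, rfl⟩
    · rintro ⟨i, hi, rfl⟩
      rcases Nat.lt_or_ge m i with h' | h'
      · right; congr 1; omega
      · left; exact ⟨i, h', rfl⟩

lemma seg_edges (s : ℕ → V) (m : ℕ) (h : ∀ i, i < m → G.Adj (s i) (s (i + 1))) (e : Sym2 V) :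
    e ∈ (seg s m h).edges ↔ ∃ i, i < m ∧ e = s(s i, s (i + 1)) := by
  induction m with
  | zero => simp [seg]
  | succ m ih =>
    simp only [seg, Walk.edges_concat, List.concat_eq_append, List.mem_append, List.mem_singleton, ih]
    constructor
    · rintro (⟨i, hi, rfl⟩ | rfl)
      · exact ⟨i, by omega, rfl⟩
      · exact ⟨m, by omega, rfl⟩
    · rintro ⟨i, hi, rfl⟩
      rcases Nat.lt_or_ge i m with h' | h'
      · left; exact ⟨i, h', rfl⟩
      · right
        have : i = m := by omega
        rw [this]

lemma seg_isPath (s : ℕ → V) (m : ℕ) (h : ∀ i, i < m → G.Adj (s i) (s (i + 1)))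
    (hi : ∀ i j, i ≤ m → j ≤ m → s i = s j → i = j) : (seg s m h).IsPath := by
  induction m with
  | zero => simp [seg]
  | succ m ih =>
    simp only [seg]
    rw [Walk.concat_isPath_iff]
    refine ⟨ih _ (fun i j h1 h2 => hi i j (by omega) (by omega)), ?_⟩
    rw [seg_support]
    rintro ⟨i, h1, h2⟩
    have := hi _ _ le_rfl (by omega) h2
    omega

open Classical in
/-- Constructing subdivisions from sequences. -/
theorem exists_subdiv {W E : Type*} (X : SimpleGraph W) (k : ℕ) (f : W → V)
    (src tgt : E → W) (L : E → ℕ) (s : E → ℕ → V)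
    (hX : ∀ u v, X.Adj u v ↔ ∃ e, (src e = u ∧ tgt e = v) ∨ (src e = v ∧ tgt e = u))
    (hE : ∀ e e', s(src e, tgt e) = s(src e', tgt e') → e = e')
    (hf : Function.Injective f)
    (h0 : ∀ e, s e 0 = f (src e)) (h1 : ∀ e, s e (L e) = f (tgt e))
    (hadj : ∀ e i, i < L e → G.Adj (s e i) (s e (i + 1)))
    (hk : ∀ e, k + 1 ≤ L e)
    (hint : ∀ e i w, 0 < i → i < L e → s e i ≠ f w)
    (hdis : ∀ e e' i i', 0 < i → i < L e → 0 < i' → i' < L e' → s e i = s e' i' →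
      e = e' ∧ i = i') :
    ∃ Y : G.Subgraph, IsSubdivGE k X Y ∧
      (∀ x, x ∈ Y.verts ↔ (∃ w, x = f w) ∨ ∃ e i, i ≤ L e ∧ x = s e i) ∧
      (∀ x y, Y.Adj x y ↔ ∃ e i, i < L e ∧ s(x, y) = s(s e i, s e (i + 1))) := by
  have hne : ∀ e, src e ≠ tgt e := fun e => ((hX _ _).2 ⟨e, Or.inl ⟨rfl, rfl⟩⟩).ne
  have hend : ∀ e i w, i ≤ L e → s e i = f w → (i = 0 ∧ w = src e) ∨ (i = L e ∧ w = tgt e) := by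
    intro e i w hi h
    rcases Nat.eq_zero_or_pos i with h' | h'
    · subst h'; left; rw [h0] at h; exact ⟨rfl, (hf h).symm⟩
    · rcases Nat.lt_or_ge i (L e) with h2 | h2
      · exact absurd h (hint e i w h' h2)
      · have : i = L e := by omega
        subst this; right; rw [h1] at h; exact ⟨rfl, (hf h).symm⟩
  have hinj : ∀ e i j, i ≤ L e → j ≤ L e → s e i = s e j → i = j := by
    intro e i j hi hj h
    have hk' := hk e
    rcases Nat.eq_zero_or_pos i with h' | h'
    · subst h'
      rw [h0] at h
      rcases hend e j _ hj h.symm with ⟨a, -⟩ | ⟨-, b⟩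
      · exact a.symm
      · exact absurd b (hne e)
    · rcases Nat.lt_or_ge i (L e) with h2 | h2
      · rcases Nat.eq_zero_or_pos j with h3 | h3
        · subst h3; rw [h0] at h; exact absurd h (hint e i _ h' h2)
        · rcases Nat.lt_or_ge j (L e) with h4 | h4
          · exact (hdis e e i j h' h2 h3 h4 h).2
          · have : j = L e := by omega
            subst this; rw [h1] at h; exact absurd h (hint e i _ h' h2)
      · have : i = L e := by omega
        subst this
        rw [h1] at h
        rcases hend e j _ hj h.symm with ⟨-, a⟩ | ⟨a, -⟩
        · exact absurd a.symm (hne e)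
        · exact a.symm
  let q : ∀ e, G.Walk (f (src e)) (f (tgt e)) := fun e =>
    (seg (s e) (L e) (hadj e)).copy (h0 e) (h1 e)
  have hq : ∀ u v, X.Adj u v → (¬ ∃ e, src e = u ∧ tgt e = v) → ∃ e, src e = v ∧ tgt e = u := by
    intro u v h h'
    obtain ⟨e, he⟩ := (hX u v).1 h
    rcases he with he | he
    · exact absurd ⟨e, he⟩ h'
    · exact ⟨e, he⟩
  let p : ∀ ⦃u v : W⦄, X.Adj u v → G.Walk (f u) (f v) := fun u v h =>
    if h1 : ∃ e, src e = u ∧ tgt e = v then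
      (q h1.choose).copy (congrArg f h1.choose_spec.1) (congrArg f h1.choose_spec.2)
    else
      ((q (hq u v h h1).choose).copy (congrArg f (hq u v h h1).choose_spec.1)
        (congrArg f (hq u v h h1).choose_spec.2)).reverse
  have hpe : ∀ (e : E) (h : X.Adj (src e) (tgt e)), p h = q e := by
    intro e h
    have hex : ∃ e', src e' = src e ∧ tgt e' = tgt e := ⟨e, rfl, rfl⟩
    simp only [p, dif_pos hex]
    have hc : hex.choose = e := hE _ _ (by rw [hex.choose_spec.1, hex.choose_spec.2])
    have key : ∀ (e' : E) (a : src e' = src e) (b : tgt e' = tgt e), e' = e →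
      (q e').copy (congrArg f a) (congrArg f b) = q e := by
      intro e' a b h; subst h; rfl
    exact key _ hex.choose_spec.1 hex.choose_spec.2 hc
  have hpe' : ∀ (e : E) (h : X.Adj (tgt e) (src e)), p h = (q e).reverse := by
    intro e h
    have hex : ¬ ∃ e', src e' = tgt e ∧ tgt e' = src e := by
      rintro ⟨e', a, b⟩
      have : e' = e := hE _ _ (by rw [a, b]; exact Sym2.eq_swap)
      subst this
      exact hne _ a
    simp only [p, dif_neg hex]
    have hc : (hq _ _ h hex).choose = e :=
      hE _ _ (by rw [(hq _ _ h hex).choose_spec.1, (hq _ _ h hex).choose_spec.2])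
    have key : ∀ (e' : E) (a : src e' = src e) (b : tgt e' = tgt e), e' = e →
      ((q e').copy (congrArg f a) (congrArg f b)).reverse = (q e).reverse := by
      intro e' a b h; subst h; rfl
    exact key _ (hq _ _ h hex).choose_spec.1 (hq _ _ h hex).choose_spec.2 hc
  -- every adjacency is an edge in one of two directions
  have hcases : ∀ (Q : ∀ u v, X.Adj u v → Prop),
      (∀ e (h : X.Adj (src e) (tgt e)), Q _ _ h) → (∀ e (h : X.Adj (tgt e) (src e)), Q _ _ h) →
      ∀ u v (h : X.Adj u v), Q u v h := by
    intro Q hA hB u v h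
    obtain ⟨e, ⟨rfl, rfl⟩ | ⟨rfl, rfl⟩⟩ := (hX u v).1 h
    · exact hA e h
    · exact hB e h
  have hqs : ∀ e x, x ∈ (q e).support ↔ ∃ i, i ≤ L e ∧ x = s e i := by
    intro e x; simp only [q, Walk.support_copy]; exact seg_support _ _ _ _
  have hqe : ∀ e x, x ∈ (q e).edges ↔ ∃ i, i < L e ∧ x = s(s e i, s e (i + 1)) := by
    intro e x; simp only [q, Walk.edges_copy]; exact seg_edges _ _ _ _
  have hsup : ∀ u v (h : X.Adj u v), ∃ e, s(u, v) = s(src e, tgt e) ∧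
      (∀ x, x ∈ (p h).support ↔ ∃ i, i ≤ L e ∧ x = s e i) ∧
      (∀ x, x ∈ (p h).edges ↔ ∃ i, i < L e ∧ x = s(s e i, s e (i + 1))) := by
    apply hcases
    · intro e h
      refine ⟨e, rfl, ?_, ?_⟩
      · intro x; rw [hpe e h, hqs]
      · intro x; rw [hpe e h, hqe]
    · intro e h
      refine ⟨e, Sym2.eq_swap, ?_, ?_⟩
      · intro x; rw [hpe' e h, Walk.support_reverse, List.mem_reverse, hqs]
      · intro x; rw [hpe' e h, Walk.edges_reverse, List.mem_reverse, hqe]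
  let Y : G.Subgraph :=
    { verts := {x | (∃ w, x = f w) ∨ ∃ e i, i ≤ L e ∧ x = s e i}
      Adj := fun x y => ∃ e i, i < L e ∧ s(x, y) = s(s e i, s e (i + 1))
      adj_sub := by
        rintro x y ⟨e, i, hi, h⟩
        have := hadj e i hi
        rw [← SimpleGraph.mem_edgeSet, ← h] at this
        exact this
      edge_vert := by
        rintro x y ⟨e, i, hi, h⟩
        right
        rcases Sym2.eq_iff.1 h with ⟨rfl, rfl⟩ | ⟨rfl, rfl⟩
        · exact ⟨e, i, hi.le, rfl⟩
        · exact ⟨e, i + 1, hi, rfl⟩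
      symm := ⟨by
        rintro x y ⟨e, i, hi, h⟩
        exact ⟨e, i, hi, by rw [← h]; exact Sym2.eq_swap⟩⟩ }
  refine ⟨Y, ⟨f, p, hf, ?_, ?_, ?_, ?_, ?_, ?_, ?_⟩, fun x => Iff.rfl, fun x y => Iff.rfl⟩
  · apply hcases
    · intro e h; rw [hpe e h]; simp only [q, Walk.isPath_copy]; exact seg_isPath _ _ _ (hinj e)
    · intro e h; rw [hpe' e h, Walk.isPath_reverse_iff]; simp only [q, Walk.isPath_copy]
      exact seg_isPath _ _ _ (hinj e)
  · apply hcases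
    · intro e h; rw [hpe e h]; simp only [q, Walk.length_copy, seg_length]; exact hk e
    · intro e h; rw [hpe' e h, Walk.length_reverse]; simp only [q, Walk.length_copy, seg_length]
      exact hk e
  · apply hcases
    · intro e h; rw [hpe e h, hpe' e h.symm]
    · intro e h; rw [hpe e h.symm, hpe' e h, Walk.reverse_reverse]
  · intro u v h w hw
    obtain ⟨e, he, hs, -⟩ := hsup u v h
    obtain ⟨i, hi, hwi⟩ := (hs _).1 hw
    have h3 : w = src e ∨ w = tgt e := by
      rcases hend e i w hi hwi.symm with ⟨-, a⟩ | ⟨-, a⟩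
      · exact Or.inl a
      · exact Or.inr a
    have h4 : w ∈ s(u, v) := by rw [he]; exact Sym2.mem_iff.2 h3
    exact Sym2.mem_iff.1 h4
  · intro u v u' v' h h' hne' x hx hx'
    obtain ⟨e, he, hs, -⟩ := hsup u v h
    obtain ⟨e', he', hs', -⟩ := hsup u' v' h'
    obtain ⟨i, hi, hxi⟩ := (hs _).1 hx
    obtain ⟨i', hi', hxi'⟩ := (hs' _).1 hx'
    have hee : e ≠ e' := by rintro rfl; exact hne' (he.trans he'.symm)
    have trans1 : ∀ (u v : W) (e : E) (i : ℕ) (w : W), s(u, v) = s(src e, tgt e) → i ≤ L e →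
        s e i = f w → w = u ∨ w = v := by
      intro u v e i w he hi hwi
      have h3 : w = src e ∨ w = tgt e := by
        rcases hend e i w hi hwi with ⟨-, a⟩ | ⟨-, a⟩
        · exact Or.inl a
        · exact Or.inr a
      have h4 : w ∈ s(u, v) := by rw [he]; exact Sym2.mem_iff.2 h3
      exact Sym2.mem_iff.1 h4
    have hw : ∃ w, x = f w := by
      rcases Nat.eq_zero_or_pos i with h2 | h2
      · subst h2; exact ⟨_, hxi.trans (h0 e)⟩
      · rcases Nat.lt_or_ge i (L e) with h3 | h3
        · rcases Nat.eq_zero_or_pos i' with h4 | h4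
          · subst h4; exact ⟨_, hxi'.trans (h0 e')⟩
          · rcases Nat.lt_or_ge i' (L e') with h5 | h5
            · exact absurd (hdis e e' i i' h2 h3 h4 h5 (hxi.symm.trans hxi')).1 hee
            · have : i' = L e' := by omega
              subst this; exact ⟨_, hxi'.trans (h1 e')⟩
        · have : i = L e := by omega
          subst this; exact ⟨_, hxi.trans (h1 e)⟩
    obtain ⟨w, rfl⟩ := hw
    constructor
    · rcases trans1 u v e i w he hi hxi.symm with rfl | rfl
      · exact Or.inl rfl
      · exact Or.inr rfl
    · rcases trans1 u' v' e' i' w he' hi' hxi'.symm with rfl | rfl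
      · exact Or.inl rfl
      · exact Or.inr rfl
  · ext x
    simp only [Y, Set.mem_setOf_eq, Set.mem_union, Set.mem_range]
    constructor
    · rintro (⟨w, rfl⟩ | ⟨e, i, hi, rfl⟩)
      · exact Or.inl ⟨w, rfl⟩
      · right
        have hh : X.Adj (src e) (tgt e) := (hX _ _).2 ⟨e, Or.inl ⟨rfl, rfl⟩⟩
        refine ⟨src e, tgt e, hh, ?_⟩
        rw [hpe e hh, hqs]; exact ⟨i, hi, rfl⟩
    · rintro (⟨w, rfl⟩ | ⟨u, v, h, hx⟩)
      · exact Or.inl ⟨w, rfl⟩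
      · right
        obtain ⟨e, -, hs, -⟩ := hsup u v h
        exact ⟨e, (hs _).1 hx⟩
  · ext x
    simp only [Set.mem_setOf_eq]
    induction x using Sym2.ind with
    | _ x y =>
    rw [Subgraph.mem_edgeSet]
    constructor
    · rintro ⟨e, i, hi, hxy⟩
      have hh : X.Adj (src e) (tgt e) := (hX _ _).2 ⟨e, Or.inl ⟨rfl, rfl⟩⟩
      refine ⟨src e, tgt e, hh, ?_⟩
      rw [hpe e hh, hqe]; exact ⟨i, hi, hxy⟩
    · rintro ⟨u, v, h, hx⟩
      obtain ⟨e, -, -, hs⟩ := hsup u v h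
      exact ⟨e, (hs _).1 hx⟩

/-- Distance bound inside a subgraph. -/
lemma coe_edist_le (Y : G.Subgraph) {x y : V} (p : Y.spanningCoe.Walk x y) (hx : x ∈ Y.verts)
    (hy : y ∈ Y.verts) : Y.coe.edist ⟨x, hx⟩ ⟨y, hy⟩ ≤ p.length := by
  induction p with
  | nil => simp
  | @cons u v w h p ih =>
    have h' : Y.Adj u v := h
    have hv := h'.snd_mem
    have h2 : Y.coe.edist ⟨u, hx⟩ ⟨v, hv⟩ = 1 := edist_eq_one_iff_adj.2 h'
    calc _ ≤ Y.coe.edist ⟨u, hx⟩ ⟨v, hv⟩ + Y.coe.edist ⟨v, hv⟩ ⟨w, hy⟩ := SimpleGraph.edist_triangle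
      _ ≤ 1 + p.length := by rw [h2]; gcongr; exact ih hv hy
      _ = _ := by simp [add_comm]

end subdiv

lemma seq_walk {V : Type*} {H : SimpleGraph V} {s : ℕ → V} {n : ℕ}
    (hs : ∀ i, i < n → H.Adj (s i) (s (i + 1))) (i j : ℕ) (hij : i ≤ j) (hj : j ≤ n) :
    ∃ p : H.Walk (s i) (s j), p.length = j - i := by
  induction j, hij using Nat.le_induction with
  | base => exact ⟨Walk.nil, by simp⟩
  | succ m hm ih =>
    obtain ⟨p, hp⟩ := ih (by omega)
    exact ⟨p.concat (hs m (by omega)), by rw [Walk.length_concat, hp]; omega⟩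

section obs
variable {V : Type*} [Fintype V] {G : SimpleGraph V}

lemma no_long_cycle {k : ℕ} (hK3 : ¬ ContainsQuasiGeodesicSubdivGE G k triangleGraph 1)
    (s : ℕ → V) (l : ℕ) (hl : 3 * k + 3 ≤ l) (hadj : ∀ i, i < l → G.Adj (s i) (s (i + 1)))
    (hcl : s l = s 0)
    (hd : ∀ i j, i ≤ j → j ≤ l → j - i ≤ D G (s i) (s j) ∨ l - (j - i) ≤ D G (s i) (s j)) :
    False := by
  have hinj : ∀ i j, i < l → j < l → s i = s j → i = j := by
    have key : ∀ i j, i ≤ j → j < l → s i = s j → i = j := by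
      intro i j hij hj h
      have := hd i j hij hj.le
      rw [h, D_self] at this
      omega
    intro i j hi hj h
    rcases le_total i j with h' | h'
    · exact key i j h' hj h
    · exact (key j i h' hi h.symm).symm
  let b : Fin 3 → ℕ := ![0, k + 1, 2 * k + 2]
  let L : Fin 3 → ℕ := ![k + 1, k + 1, l - (2 * k + 2)]
  obtain ⟨Y, hY, hv, ha⟩ := exists_subdiv (G := G) triangleGraph k (fun w => s (b w))
    (E := Fin 3) (fun e => e) (fun e => e + 1) L (fun e m => s (b e + m))
    (by
      intro u v
      simp only [triangleGraph, top_adj]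
      revert u v; decide)
    (by decide)
    (by
      intro u v h
      have := hinj (b u) (b v) (by fin_cases u <;> simp [b] <;> omega)
        (by fin_cases v <;> simp [b] <;> omega) h
      fin_cases u <;> fin_cases v <;> simp [b] at this ⊢ <;> omega)
    (by intro e; rfl)
    (by
      intro e
      fin_cases e
      · simp [b, L]
      · simp [b, L]; congr 1; omega
      · have : b 2 + L 2 = l := by simp [b, L]; omega
        change s (b 2 + L 2) = s (b 0)
        rw [this, hcl]; rfl)
    (by
      intro e i hi
      have := hadj (b e + i) (by fin_cases e <;> simp [b, L] at hi ⊢ <;> omega)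
      exact this)
    (by intro e; fin_cases e <;> simp [L]; omega)
    (by
      intro e i w h1 h2 h
      have := hinj _ _ (by fin_cases e <;> simp [b, L] at h2 ⊢ <;> omega)
        (by fin_cases w <;> simp [b] <;> omega) h
      fin_cases e <;> fin_cases w <;> simp [b, L] at this h2 <;> omega)
    (by
      intro e e' i i' h1 h2 h3 h4 h
      have := hinj _ _ (by fin_cases e <;> simp [b, L] at h2 ⊢ <;> omega)
        (by fin_cases e' <;> simp [b, L] at h4 ⊢ <;> omega) h
      fin_cases e <;> fin_cases e' <;> simp [b, L] at this h2 h4 ⊢ <;> omega)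
  have hYadj : ∀ i, i < l → Y.spanningCoe.Adj (s i) (s (i + 1)) := by
    intro i hi
    change Y.Adj _ _
    rw [ha]
    by_cases h1 : i < k + 1
    · exact ⟨0, i, by simpa [L] using h1, by simp [b]⟩
    · by_cases h2 : i < 2 * k + 2
      · refine ⟨1, i - (k + 1), by simp [L]; omega, ?_⟩
        have : b 1 + (i - (k + 1)) = i := by simp [b]; omega
        have h' : b 1 + (i - (k + 1) + 1) = i + 1 := by simp [b]; omega
        simp only [this, h']
      · refine ⟨2, i - (2 * k + 2), by simp [L]; omega, ?_⟩
        have : b 2 + (i - (2 * k + 2)) = i := by simp [b]; omega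
        have h' : b 2 + (i - (2 * k + 2) + 1) = i + 1 := by simp [b]; omega
        simp only [this, h']
  have hYv : ∀ x ∈ Y.verts, ∃ i, i ≤ l ∧ x = s i := by
    intro x hx
    rcases (hv x).1 hx with ⟨w, rfl⟩ | ⟨e, i, hi, rfl⟩
    · exact ⟨b w, by fin_cases w <;> simp [b] <;> omega, rfl⟩
    · exact ⟨b e + i, by fin_cases e <;> simp [b, L] at hi ⊢ <;> omega, rfl⟩
  have key : ∀ i j (hi : s i ∈ Y.verts) (hj : s j ∈ Y.verts), i ≤ j → j ≤ l →
      Y.coe.edist ⟨s i, hi⟩ ⟨s j, hj⟩ ≤ (D G (s i) (s j) : ℕ∞) := by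
    intro i j hi hj hij hjl
    rcases hd i j hij hjl with h | h
    · obtain ⟨p, hp⟩ := seq_walk hYadj i j hij hjl
      refine (coe_edist_le Y p hi hj).trans ?_
      rw [hp]; exact_mod_cast h
    · obtain ⟨p, hp⟩ := seq_walk hYadj 0 i (by omega) (by omega)
      obtain ⟨q, hq⟩ := seq_walk hYadj j l hjl le_rfl
      refine (coe_edist_le Y (p.reverse.append (q.reverse.copy hcl rfl)) hi hj).trans ?_
      rw [Walk.length_append, Walk.length_copy, Walk.length_reverse, Walk.length_reverse, hp, hq]
      have : i - 0 + (l - j) ≤ D G (s i) (s j) := by omega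
      exact_mod_cast this
  refine hK3 ⟨Y, hY, ?_⟩
  rintro ⟨x, hx⟩ ⟨y, hy⟩
  obtain ⟨i, hi, rfl⟩ := hYv x hx
  obtain ⟨j, hj, rfl⟩ := hYv y hy
  have hr : G.Reachable (s i) (s j) := (reach_seq hadj i hi).symm.trans (reach_seq hadj j hj)
  simp only [Nat.cast_one, one_mul]
  rw [edist_of_reach hr]
  rcases le_total i j with h | h
  · exact key i j hx hy h hj
  · rw [SimpleGraph.edist_comm, D_comm]; exact key j i hy hx h hi

lemma no_wrench {k : ℕ} (hW : ¬ ContainsQuasiGeodesicSubdivGE G (3 * k) wrenchGraph 3)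
    {s q r : ℕ → V} {n i j : ℕ} (hs : Geo G s n) (hq : Geo G q (3 * k + 1))
    (hr : Geo G r (3 * k + 1)) (hqi : q 0 = s i) (hrj : r 0 = s j)
    (hi : 3 * k + 1 ≤ i) (hij : i + 12 * k + 4 ≤ j) (hj : j + 3 * k + 1 ≤ n)
    (hqd : ∀ p, p ≤ n → 3 * k + 1 ≤ D G (q (3 * k + 1)) (s p))
    (hrd : ∀ p, p ≤ n → 3 * k + 1 ≤ D G (r (3 * k + 1)) (s p)) : False := by
  have hqd' : ∀ m p, m ≤ 3 * k + 1 → p ≤ n → m ≤ D G (q m) (s p) := by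
    intro m p hm hp
    have h1 := hqd p hp
    have h2 := hq.dst m _ hm le_rfl
    have h3 := D_tri (G := G) (q (3 * k + 1)) (q m) (s p)
    rw [D_comm] at h2; omega
  have hrd' : ∀ m p, m ≤ 3 * k + 1 → p ≤ n → m ≤ D G (r m) (s p) := by
    intro m p hm hp
    have h1 := hrd p hp
    have h2 := hr.dst m _ hm le_rfl
    have h3 := D_tri (G := G) (r (3 * k + 1)) (r m) (s p)
    rw [D_comm] at h2; omega
  have hqr : ∀ m m', m ≤ 3 * k + 1 → m' ≤ 3 * k + 1 → j ≤ i + m + m' + D G (q m) (r m') := by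
    intro m m' hm hm'
    have h1 := hs.dst i j (by omega) (by omega)
    have h2 := hq.dst 0 m (by omega) hm
    have h3 := hr.dst 0 m' (by omega) hm'
    rw [hqi] at h2; rw [hrj] at h3
    have h4 := D_tri (G := G) (s i) (q m) (s j)
    have h5 := D_tri (G := G) (q m) (r m') (s j)
    have h6 := D_comm (G := G) (s j) (r m')
    omega
  have hsd : ∀ p p', p ≤ n → p' ≤ n → (p ≤ p' ∧ D G (s p) (s p') + p = p') ∨
      (p' ≤ p ∧ D G (s p) (s p') + p' = p) := by
    intro p p' hp hp'
    rcases le_total p p' with h | h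
    · exact Or.inl ⟨h, hs.dst p p' h hp'⟩
    · right; rw [D_comm]; exact ⟨h, hs.dst p' p h hp⟩
  have dsq : ∀ m p, m ≤ 3 * k + 1 → p ≤ n → q m = s p → m = 0 ∧ p = i := by
    intro m p hm hp h
    have h1 := hqd' m p hm hp
    rw [h, D_self] at h1
    have h2 : m = 0 := by omega
    subst h2
    exact ⟨rfl, hs.inj hp (by omega) (h.symm.trans hqi)⟩
  have dsr : ∀ m p, m ≤ 3 * k + 1 → p ≤ n → r m = s p → m = 0 ∧ p = j := by
    intro m p hm hp h
    have h1 := hrd' m p hm hp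
    rw [h, D_self] at h1
    have h2 : m = 0 := by omega
    subst h2
    exact ⟨rfl, hs.inj hp (by omega) (h.symm.trans hrj)⟩
  have dqr : ∀ m m', m ≤ 3 * k + 1 → m' ≤ 3 * k + 1 → q m = r m' → False := by
    intro m m' hm hm' h
    have := hqr m m' hm hm'
    rw [h, D_self] at this; omega
  -- coordinates
  let g : Fin 3 → ℕ → V := ![s, q, r]
  let ok : Fin 3 → ℕ → Prop := fun t p =>
    (t = 0 ∧ p ≤ n) ∨ (t ≠ 0 ∧ 0 < p ∧ p ≤ 3 * k + 1)
  have ginj : ∀ t p t' p', ok t p → ok t' p' → g t p = g t' p' → t = t' ∧ p = p' := by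
    intro t p t' p' h1 h2 h
    fin_cases t <;> fin_cases t' <;> simp [ok] at h1 h2 <;> simp [g] at h ⊢
    · exact hs.inj h1 h2 h
    · have := dsq _ _ h2.2 h1 h.symm; omega
    · have := dsr _ _ h2.2 h1 h.symm; omega
    · have := dsq _ _ h1.2 h2 h; omega
    · exact hq.inj h1.2 h2.2 h
    · exact dqr _ _ h1.2 h2.2 h
    · have := dsr _ _ h1.2 h2 h; omega
    · exact dqr _ _ h2.2 h1.2 h.symm
    · exact hr.inj h1.2 h2.2 h
  let ft : Fin 6 → Fin 3 := ![0, 0, 0, 1, 0, 2]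
  let fp : Fin 6 → ℕ := ![i, j, 0, 3 * k + 1, n, 3 * k + 1]
  let L : Fin 5 → ℕ := ![j - i, i, 3 * k + 1, n - j, 3 * k + 1]
  let et : Fin 5 → Fin 3 := ![0, 0, 1, 0, 2]
  let ep : Fin 5 → ℕ → ℕ := ![fun m => i + m, fun m => i - m, fun m => m, fun m => j + m, fun m => m]
  let src : Fin 5 → Fin 6 := ![0, 0, 0, 1, 1]
  let tgt : Fin 5 → Fin 6 := ![1, 2, 3, 4, 5]
  have okf : ∀ w, ok (ft w) (fp w) := by
    intro w; fin_cases w <;> simp [ok, ft, fp] <;> omega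
  have oke : ∀ e m, 0 < m → m ≤ L e → ok (et e) (ep e m) := by
    intro e m h1 h2; fin_cases e <;> simp [ok, et, ep, L] at h2 ⊢ <;> omega
  obtain ⟨Y, hY, hv, ha⟩ := exists_subdiv (G := G) wrenchGraph (3 * k) (fun w => g (ft w) (fp w))
    src tgt L (fun e m => g (et e) (ep e m))
    (by
      intro u v
      simp only [wrenchGraph, fromRel_adj, src, tgt]
      revert u v; decide)
    (by simp only [src, tgt]; decide)
    (by
      intro u v h
      have := ginj _ _ _ _ (okf u) (okf v) h
      fin_cases u <;> fin_cases v <;> simp [ft, fp] at this ⊢ <;> omega)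
    (by
      intro e
      fin_cases e <;> simp [g, et, ep, ft, fp, src] <;> assumption)
    (by
      intro e
      fin_cases e <;> simp [g, et, ep, ft, fp, tgt, L] <;> congr 1 <;> omega)
    (by
      intro e m hm
      fin_cases e <;> simp [g, et, ep, L] at hm ⊢
      · exact hs.adj (i + m) (by omega)
      · have := hs.adj (i - (m + 1)) (by omega)
        rw [show i - (m + 1) + 1 = i - m by omega] at this
        exact this.symm
      · exact hq.adj m (by omega)
      · exact hs.adj (j + m) (by omega)
      · exact hr.adj m (by omega))
    (by
      intro e; fin_cases e <;> simp [L] <;> omega)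
    (by
      intro e m w h1 h2 h
      have := ginj _ _ _ _ (oke e m h1 h2.le) (okf w) h
      fin_cases e <;> fin_cases w <;> simp [L, ft, fp, et, ep] at this h2 <;> omega)
    (by
      intro e e' m m' h1 h2 h3 h4 h
      have := ginj _ _ _ _ (oke e m h1 h2.le) (oke e' m' h3 h4.le) h
      fin_cases e <;> fin_cases e' <;> simp [L, et, ep] at this h2 h4 ⊢ <;> omega)
  have hYv : ∀ x ∈ Y.verts, ∃ t p, ok t p ∧ x = g t p := by
    intro x hx
    rcases (hv x).1 hx with ⟨w, rfl⟩ | ⟨e, m, hm, rfl⟩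
    · exact ⟨_, _, okf w, rfl⟩
    · rcases Nat.eq_zero_or_pos m with h | h
      · subst h
        fin_cases e
        · exact ⟨0, i, by simp [ok]; omega, rfl⟩
        · exact ⟨0, i, by simp [ok]; omega, rfl⟩
        · exact ⟨0, i, by simp [ok]; omega, hqi⟩
        · exact ⟨0, j, by simp [ok]; omega, rfl⟩
        · exact ⟨0, j, by simp [ok]; omega, hrj⟩
      · exact ⟨_, _, oke e m h hm, rfl⟩
  have aS : ∀ p, p < n → Y.spanningCoe.Adj (s p) (s (p + 1)) := by
    intro p hp
    change Y.Adj _ _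
    rw [ha]
    by_cases h1 : p < i
    · refine ⟨1, i - (p + 1), by simp [L]; omega, ?_⟩
      simp only [g, et, ep, Matrix.cons_val]
      rw [show i - (i - (p + 1)) = p + 1 by omega, show i - (i - (p + 1) + 1) = p by omega]
      exact Sym2.eq_swap
    · by_cases h2 : p < j
      · refine ⟨0, p - i, by simp [L]; omega, ?_⟩
        simp only [g, et, ep, Matrix.cons_val]
        rw [show i + (p - i) = p by omega, show i + (p - i + 1) = p + 1 by omega]
      · refine ⟨3, p - j, by simp [L]; omega, ?_⟩
        simp only [g, et, ep, Matrix.cons_val]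
        rw [show j + (p - j) = p by omega, show j + (p - j + 1) = p + 1 by omega]
  have aQ : ∀ p, p < 3 * k + 1 → Y.spanningCoe.Adj (q p) (q (p + 1)) := by
    intro p hp
    change Y.Adj _ _
    rw [ha]
    exact ⟨2, p, by simpa [L] using hp, rfl⟩
  have aR : ∀ p, p < 3 * k + 1 → Y.spanningCoe.Adj (r p) (r (p + 1)) := by
    intro p hp
    change Y.Adj _ _
    rw [ha]
    exact ⟨4, p, by simpa [L] using hp, rfl⟩
  have wS : ∀ p p', p ≤ n → p' ≤ n → ∃ w : Y.spanningCoe.Walk (s p) (s p'),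
      w.length = D G (s p) (s p') := by
    intro p p' hp hp'
    rcases hsd p p' hp hp' with ⟨h1, h2⟩ | ⟨h1, h2⟩
    · obtain ⟨w, hw⟩ := seq_walk aS p p' h1 hp'
      exact ⟨w, by omega⟩
    · obtain ⟨w, hw⟩ := seq_walk aS p' p h1 hp
      exact ⟨w.reverse, by rw [Walk.length_reverse]; omega⟩
  have wQ : ∀ m, m ≤ 3 * k + 1 → ∃ w : Y.spanningCoe.Walk (q m) (s i), w.length = m := by
    intro m hm
    obtain ⟨w, hw⟩ := seq_walk aQ 0 m (by omega) hm
    exact ⟨w.reverse.copy rfl hqi, by simp [hw]⟩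
  have wR : ∀ m, m ≤ 3 * k + 1 → ∃ w : Y.spanningCoe.Walk (r m) (s j), w.length = m := by
    intro m hm
    obtain ⟨w, hw⟩ := seq_walk aR 0 m (by omega) hm
    exact ⟨w.reverse.copy rfl hrj, by simp [hw]⟩
  have main : ∀ t p t' p', ok t p → ok t' p' → t ≤ t' →
      ∃ w : Y.spanningCoe.Walk (g t p) (g t' p'), w.length ≤ 3 * D G (g t p) (g t' p') := by
    intro t p t' p' h1 h2 htt
    fin_cases t <;> fin_cases t' <;> simp [ok] at h1 h2 <;> simp at htt <;> simp only [g, Fin.mk_zero, Fin.mk_one, Fin.reduceFinMk, Matrix.cons_val] <;> clear htt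
    · obtain ⟨w, hw⟩ := wS p p' h1 h2
      exact ⟨w, by omega⟩
    · obtain ⟨w, hw⟩ := wS p i h1 (by omega)
      obtain ⟨w', hw'⟩ := wQ p' h2.2
      refine ⟨w.append w'.reverse, ?_⟩
      rw [Walk.length_append, Walk.length_reverse]
      have e1 := hqd' p' p h2.2 h1
      have e2 := D_tri (G := G) (s p) (q p') (s i)
      have e3 := hq.dst 0 p' (by omega) h2.2
      rw [hqi, D_comm] at e3
      rw [D_comm] at e1
      omega
    · obtain ⟨w, hw⟩ := wS p j h1 (by omega)
      obtain ⟨w', hw'⟩ := wR p' h2.2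
      refine ⟨w.append w'.reverse, ?_⟩
      rw [Walk.length_append, Walk.length_reverse]
      have e1 := hrd' p' p h2.2 h1
      have e2 := D_tri (G := G) (s p) (r p') (s j)
      have e3 := hr.dst 0 p' (by omega) h2.2
      rw [hrj, D_comm] at e3
      rw [D_comm] at e1
      omega
    · rcases le_total p p' with h | h
      · obtain ⟨w, hw⟩ := seq_walk aQ p p' h h2.2
        have := hq.dst p p' h h2.2
        exact ⟨w, by omega⟩
      · obtain ⟨w, hw⟩ := seq_walk aQ p' p h h1.2
        have := hq.dst p' p h h1.2
        rw [D_comm] at this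
        exact ⟨w.reverse, by rw [Walk.length_reverse]; omega⟩
    · obtain ⟨w, hw⟩ := wQ p h1.2
      obtain ⟨w', hw'⟩ := wR p' h2.2
      obtain ⟨w2, hw2⟩ := wS i j (by omega) (by omega)
      refine ⟨w.append (w2.append w'.reverse), ?_⟩
      rw [Walk.length_append, Walk.length_append, Walk.length_reverse]
      have e1 := hqr p p' h1.2 h2.2
      have e2 := hs.dst i j (by omega) (by omega)
      omega
    · rcases le_total p p' with h | h
      · obtain ⟨w, hw⟩ := seq_walk aR p p' h h2.2
        have := hr.dst p p' h h2.2
        exact ⟨w, by omega⟩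
      · obtain ⟨w, hw⟩ := seq_walk aR p' p h h1.2
        have := hr.dst p' p h h1.2
        rw [D_comm] at this
        exact ⟨w.reverse, by rw [Walk.length_reverse]; omega⟩
  have main' : ∀ t p t' p', ok t p → ok t' p' →
      ∃ w : Y.spanningCoe.Walk (g t p) (g t' p'), w.length ≤ 3 * D G (g t p) (g t' p') := by
    intro t p t' p' h1 h2
    rcases le_total t t' with h | h
    · exact main t p t' p' h1 h2 h
    · obtain ⟨w, hw⟩ := main t' p' t p h2 h1 h
      exact ⟨w.reverse, by rw [Walk.length_reverse, D_comm]; exact hw⟩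
  refine hW ⟨Y, hY, ?_⟩
  rintro ⟨x, hx⟩ ⟨y, hy⟩
  obtain ⟨t, p, h1, rfl⟩ := hYv x hx
  obtain ⟨t', p', h2, rfl⟩ := hYv y hy
  obtain ⟨w, hw⟩ := main' t p t' p' h1 h2
  have hrr : G.Reachable (g t p) (g t' p') :=
    Reachable.mono (Subgraph.spanningCoe_le Y) ⟨w⟩
  rw [edist_of_reach hrr]
  refine (coe_edist_le Y w hx hy).trans ?_
  exact_mod_cast hw

end obs

section wt
variable {V : Type*} {G : SimpleGraph V}

def wt (f : V → V → ZMod 2) : ∀ {x y : V}, G.Walk x y → ZMod 2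
  | _, _, Walk.nil => 0
  | x, _, Walk.cons (v := v) _ p => f x v + wt f p

lemma wt_append (f : V → V → ZMod 2) {x y z : V} (p : G.Walk x y) (q : G.Walk y z) :
    wt f (p.append q) = wt f p + wt f q := by
  induction p with
  | nil => simp [wt]
  | cons h p ih => simp [wt, ih, add_assoc]

lemma wt_reverse (f : V → V → ZMod 2) (hf : ∀ x y, f x y = f y x) {x y : V} (p : G.Walk x y) :
    wt f p.reverse = wt f p := by
  induction p with
  | nil => simp [wt]
  | cons h p ih =>
    rw [Walk.reverse_cons, wt_append, ih]
    simp only [wt]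
    rw [hf]; ring

lemma wt_seq (f : V → V → ZMod 2) {s : ℕ → V} {n : ℕ}
    (hs : ∀ i, i < n → G.Adj (s i) (s (i + 1))) (i j : ℕ) (hij : i ≤ j) (hj : j ≤ n) :
    ∃ p : G.Walk (s i) (s j), p.length = j - i ∧
      wt f p = ∑ m ∈ Finset.Ico i j, f (s m) (s (m + 1)) := by
  induction j, hij using Nat.le_induction with
  | base => exact ⟨Walk.nil, by simp [wt]⟩
  | succ m hm ih =>
    obtain ⟨p, hp, hw⟩ := ih (by omega)
    refine ⟨p.append (Walk.cons (hs m (by omega)) Walk.nil), ?_, ?_⟩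
    · rw [Walk.length_append, hp]; simp; omega
    · rw [wt_append, hw, Finset.sum_Ico_succ_top hm]; simp [wt]

lemma wt_getVert (f : V → V → ZMod 2) {x y : V} (p : G.Walk x y) :
    wt f p = ∑ m ∈ Finset.range p.length, f (p.getVert m) (p.getVert (m + 1)) := by
  induction p with
  | nil => simp [wt]
  | cons h p ih =>
    rw [Walk.length_cons, Finset.sum_range_succ']
    simp only [wt, ih, Walk.getVert_cons_succ, Walk.getVert_zero]
    rw [add_comm]

lemma wt_zero (f : V → V → ZMod 2) {Y : Set V} {x y : V} (h : (res G Y).Reachable x y)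
    (hf : ∀ a b, (res G Y).Adj a b → f a b = 0) : ∃ p : G.Walk x y, wt f p = 0 := by
  refine reach_induct (fun y => ∃ p : G.Walk x y, wt f p = 0) h ⟨Walk.nil, rfl⟩ ?_
  rintro a b hab ⟨p, hp⟩
  exact ⟨p.append (Walk.cons hab.1 Walk.nil), by rw [wt_append, hp]; simp [wt, hf a b hab]⟩

end wt

section A
variable {V : Type*} [Fintype V] {G : SimpleGraph V}

lemma odd_walk {k : ℕ} (hK3 : ¬ ContainsQuasiGeodesicSubdivGE G k triangleGraph 1)
    (f : V → V → ZMod 2) (hf : ∀ x y, f x y = f y x) {x : V} (p0 : G.Walk x x)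
    (hp0 : wt f p0 ≠ 0) :
    ∃ (s : ℕ → V) (l : ℕ), l ≤ 3 * k + 2 ∧ (∀ i, i < l → G.Adj (s i) (s (i + 1))) ∧ s l = s 0 ∧
      ∑ m ∈ Finset.range l, f (s m) (s (m + 1)) ≠ 0 := by
  classical
  have hex : ∃ l, ∃ (x : V) (p : G.Walk x x), p.length = l ∧ wt f p ≠ 0 := ⟨_, x, p0, rfl, hp0⟩
  obtain ⟨y, p, hl, hw⟩ := Nat.find_spec hex
  have hmin : ∀ (z : V) (q : G.Walk z z), wt f q ≠ 0 → p.length ≤ q.length := by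
    intro z q hq
    rw [hl]; exact Nat.find_min' hex ⟨z, q, rfl, hq⟩
  have hadj : ∀ i, i < p.length → G.Adj (p.getVert i) (p.getVert (i + 1)) :=
    fun i hi => p.adj_getVert_succ hi
  have hcl : p.getVert p.length = p.getVert 0 := by simp
  refine ⟨p.getVert, p.length, ?_, hadj, hcl, ?_⟩
  · by_contra hcon
    refine no_long_cycle hK3 p.getVert p.length (by omega) hadj hcl ?_
    intro i j hij hj
    obtain ⟨A, hA, hAw⟩ := wt_seq f hadj 0 i (by omega) (by omega)
    obtain ⟨B, hB, hBw⟩ := wt_seq f hadj i j hij hj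
    obtain ⟨C, hC, hCw⟩ := wt_seq f hadj j p.length hj le_rfl
    obtain ⟨Q, hQ⟩ := B.reachable.exists_walk_length_eq_dist
    rw [← D_of_reach B.reachable] at hQ
    have hsum : wt f A + wt f B + wt f C = wt f p := by
      rw [wt_getVert f p, hAw, hBw, hCw, Finset.sum_Ico_consecutive _ (by omega) hij,
        Finset.sum_Ico_consecutive _ (by omega) hj, Finset.range_eq_Ico]
    by_cases h1 : wt f (B.append Q.reverse) = 0
    · have h2 : wt f (Q.append (C.append (A.copy hcl.symm rfl))) ≠ 0 := by
        intro h2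
        have hc : ∀ (u v u' : V) (q : G.Walk u v) (h : u = u'), wt f (q.copy h rfl) = wt f q := by
          intro u v u' q h; subst h; rfl
        rw [wt_append, wt_append, hc] at h2
        rw [wt_append, wt_reverse f hf] at h1
        apply hw
        rw [← hsum]
        have h3 : wt f Q + wt f Q = 0 := CharTwo.add_self_eq_zero _
        linear_combination h1 + h2 - h3
      have := hmin _ _ h2
      simp only [Walk.length_append, Walk.length_copy] at this
      left; omega
    · have := hmin _ _ h1
      simp only [Walk.length_append, Walk.length_reverse] at this
      right; omega
  · rw [← wt_getVert]; exact hw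

lemma lemmaA {k : ℕ} (hK3 : ¬ ContainsQuasiGeodesicSubdivGE G k triangleGraph 1)
    (X : Set V) (x0 : V) (hx0 : x0 ∉ X) (S : V → Prop) {m0 m1 y0 y1 : V}
    (hy0 : (res G Xᶜ).Reachable x0 y0) (hy1 : (res G Xᶜ).Reachable x0 y1)
    (ha0 : G.Adj m0 y0) (ha1 : G.Adj m1 y1) (hm0 : m0 ∈ X) (hm1 : m1 ∈ X)
    (hS0 : S m0) (hS1 : ¬ S m1) (hm : (res G X).Reachable m0 m1) :
    ∃ m m' y y', m ∈ X ∧ m' ∈ X ∧ (res G Xᶜ).Reachable x0 y ∧ (res G Xᶜ).Reachable x0 y' ∧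
      G.Adj m y ∧ G.Adj m' y' ∧ S m ∧ ¬ S m' ∧ 2 * D G m m' ≤ 3 * k + 2 := by
  classical
  set C : Set V := {y | (res G Xᶜ).Reachable x0 y} with hC
  set A : Set V := {w | w ∈ X ∧ ∃ y ∈ C, G.Adj w y} with hA
  have hCX : ∀ y ∈ C, y ∉ X := fun y hy => res_reach_mem hy hx0
  have hCout : ∀ y ∈ C, ∀ w, G.Adj y w → w ∉ C → w ∈ A := by
    intro y hy w hyw hw
    refine ⟨?_, y, hy, hyw.symm⟩
    by_contra hwX
    exact hw (hy.trans (SimpleGraph.Adj.reachable ⟨hyw, hCX y hy, hwX⟩))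
  set f : V → V → ZMod 2 := fun u v =>
    if (u ∈ C ∧ v ∈ A ∧ S v) ∨ (v ∈ C ∧ u ∈ A ∧ S u) then 1 else 0 with hf
  have hfs : ∀ x y, f x y = f y x := by
    intro x y
    simp only [hf]
    congr 1
    exact propext or_comm
  obtain ⟨p, hp⟩ := wt_zero f (hy0.symm.trans hy1) (by
    intro a b hab
    have h1 : a ∉ A := fun h => hab.2.1 h.1
    have h2 : b ∉ A := fun h => hab.2.2 h.1
    simp [hf, h1, h2])
  obtain ⟨q, hq⟩ := wt_zero f hm (by
    intro a b hab
    have h1 : a ∉ C := fun h => hCX _ h hab.2.1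
    have h2 : b ∉ C := fun h => hCX _ h hab.2.2
    simp [hf, h1, h2])
  have hm0A : m0 ∈ A := ⟨hm0, y0, hy0, ha0⟩
  have hm1C : m1 ∉ C := fun h => hCX _ h hm1
  have hf0 : f m0 y0 = 1 := by
    simp only [hf]; rw [if_pos]; exact Or.inr ⟨hy0, hm0A, hS0⟩
  have hf1 : f y1 m1 = 0 := by
    simp only [hf]; rw [if_neg]
    rintro (h | h)
    · exact hS1 h.2.2
    · exact hm1C h.1
  obtain ⟨s, l, hl, hadj, hcl, hsum⟩ := odd_walk hK3 f hfs
    (Walk.cons ha0 (p.append (Walk.cons ha1.symm q.reverse))) (by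
      simp only [wt, wt_append, wt_reverse f hfs, hp, hq, hf0, hf1]
      decide)
  have hS : ∃ a, a ≤ l ∧ s a ∈ A ∧ S (s a) := by
    by_contra hcon
    push Not at hcon
    apply hsum
    apply Finset.sum_eq_zero
    intro m hm
    rw [Finset.mem_range] at hm
    simp only [hf]; rw [if_neg]
    rintro (h | h)
    · exact hcon _ (by omega) h.2.1 h.2.2
    · exact hcon _ (by omega) h.2.1 h.2.2
  have hS' : ∃ a, a ≤ l ∧ s a ∈ A ∧ ¬ S (s a) := by
    by_contra hcon
    push Not at hcon
    apply hsum
    set χ : ℕ → ZMod 2 := fun m => if s m ∈ C then 1 else 0 with hχ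
    have h1 : ∀ m ∈ Finset.range l, f (s m) (s (m + 1)) = χ (m + 1) - χ m := by
      intro m hm
      rw [Finset.mem_range] at hm
      have h2 := hadj m hm
      simp only [hf, hχ]
      by_cases c1 : s m ∈ C <;> by_cases c2 : s (m + 1) ∈ C
      · have h3 : s m ∉ A := fun h => hCX _ c1 h.1
        have h4 : s (m + 1) ∉ A := fun h => hCX _ c2 h.1
        simp [c1, c2, h3, h4]
      · have h3 := hCout _ c1 _ h2 c2
        have h4 := hcon _ (by omega) h3
        simp [c1, c2, h3, h4]
      · have h3 := hCout _ c2 _ h2.symm c1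
        have h4 := hcon _ (by omega) h3
        simp [c1, c2, h3, h4]
      · simp [c1, c2]
    rw [Finset.sum_congr rfl h1, Finset.sum_range_sub]
    simp [hχ, hcl]
  obtain ⟨a, ha, ⟨haX, ya, hya, haa⟩, hSa⟩ := hS
  obtain ⟨b, hb, ⟨hbX, yb, hyb, hba⟩, hSb⟩ := hS'
  refine ⟨s a, s b, ya, yb, haX, hbX, hya, hyb, haa, hba, hSa, hSb, ?_⟩
  have key : ∀ a b, a ≤ b → b ≤ l → 2 * D G (s a) (s b) ≤ 3 * k + 2 := by
    intro a b hab hb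
    have h1 := D_seq hadj a b hab hb
    have h2 := D_seq hadj 0 a (by omega) (by omega)
    have h3 := D_seq hadj b l hb le_rfl
    have h4 := D_tri (G := G) (s a) (s 0) (s b)
    rw [hcl, D_comm] at h3
    rw [D_comm (s a) (s 0)] at h4
    omega
  rcases le_total a b with h | h
  · exact key a b h hb
  · rw [D_comm]; exact key b a h ha

end A

section core
variable {V : Type*} [Fintype V] {G : SimpleGraph V}

lemma Geo.rev {s : ℕ → V} {n : ℕ} (hs : Geo G s n) : Geo G (fun i => s (n - i)) n := by
  refine ⟨fun i hi => ?_, fun i j hij hj => ?_⟩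
  · have h := hs.adj (n - (i + 1)) (by omega)
    rw [show n - (i + 1) + 1 = n - i by omega] at h
    exact h.symm
  · have h := hs.dst (n - j) (n - i) (by omega) (by omega)
    show D G (s (n - i)) (s (n - j)) + i = j
    rw [D_comm]; omega

def Nb (G : SimpleGraph V) (k : ℕ) (s : ℕ → V) (n : ℕ) : Set V :=
  {x | G.Reachable (s 0) x ∧ ∃ i, i ≤ n ∧ D G x (s i) ≤ 3 * k}

def FF (G : SimpleGraph V) (k : ℕ) (s : ℕ → V) (n i : ℕ) : Prop :=
  i ≤ n ∧ ∃ y, G.Reachable (s 0) y ∧ D G y (s i) = 3 * k + 1 ∧ ∀ j, j ≤ n → 3 * k + 1 ≤ D G y (s j)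

def att (G : SimpleGraph V) (k : ℕ) (s : ℕ → V) (n : ℕ) (y0 w : V) (i : ℕ) : Prop :=
  i ≤ n ∧ w ∈ Nb G k s n ∧ D G w (s i) ≤ 3 * k ∧
    ∃ y, (res G (Nb G k s n)ᶜ).Reachable y0 y ∧ G.Adj w y

variable {k : ℕ} {s : ℕ → V} {n : ℕ}

lemma res_reach {X : Set V} {x y : V} (h : (res G X).Reachable x y) : G.Reachable x y :=
  h.mono (res_le G X)

lemma att_trans {y0 y1 w : V} {i : ℕ} (h : (res G (Nb G k s n)ᶜ).Reachable y0 y1)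
    (ha : att G k s n y1 w i) : att G k s n y0 w i := by
  obtain ⟨h1, h2, h3, y, hy, hw⟩ := ha
  exact ⟨h1, h2, h3, y, h.trans hy, hw⟩

lemma far_of_not_mem {y : V} (hy : G.Reachable (s 0) y) (h : y ∉ Nb G k s n) (j : ℕ)
    (hj : j ≤ n) : 3 * k + 1 ≤ D G y (s j) := by
  by_contra hc
  exact h ⟨hy, j, hj, by omega⟩

lemma att_FF {y0 w : V} {i : ℕ} (hy0 : y0 ∉ Nb G k s n) (hr : G.Reachable (s 0) y0)
    (h : att G k s n y0 w i) : FF G k s n i := by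
  obtain ⟨h1, h2, h3, y, hy, hw⟩ := h
  have hyN : y ∉ Nb G k s n := res_reach_mem hy hy0
  have hyr : G.Reachable (s 0) y := hr.trans (res_reach hy)
  have hfar := far_of_not_mem hyr hyN
  refine ⟨h1, y, hyr, ?_, hfar⟩
  have := hfar i h1
  have h4 := D_tri (G := G) y w (s i)
  rw [D_adj hw.symm] at h4
  omega

lemma lemmaW (hW : ¬ ContainsQuasiGeodesicSubdivGE G (3 * k) wrenchGraph 3) (hs : Geo G s n)
    {i j : ℕ} (hi : FF G k s n i) (hj : FF G k s n j) (h1 : 3 * k + 1 ≤ i)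
    (h2 : i + 12 * k + 4 ≤ j) (h3 : j + 3 * k + 1 ≤ n) : False := by
  obtain ⟨hin, y, hyr, hy, hyf⟩ := hi
  obtain ⟨hjn, z, hzr, hz, hzf⟩ := hj
  obtain ⟨q, hq, hq0, hq1⟩ := exists_geo ((reach_seq hs.adj i hin).symm.trans hyr)
  obtain ⟨r, hr, hr0, hr1⟩ := exists_geo ((reach_seq hs.adj j hjn).symm.trans hzr)
  rw [D_comm, hy] at hq hq1
  rw [D_comm, hz] at hr hr1
  exact no_wrench hW hs hq hr hq0 hr0 h1 h2 h3 (by rw [hq1]; exact hyf) (by rw [hr1]; exact hzf)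

lemma FF_min (hs : Geo G s n) {y : V} (hy : G.Reachable (s 0) y) {t : ℕ} (ht : t ≤ n)
    (h : 3 * k + 1 ≤ D G y (s t)) (hmin : ∀ j, j ≤ n → D G y (s t) ≤ D G y (s j)) :
    FF G k s n t := by
  obtain ⟨q, hq, hq0, hq1⟩ := exists_geo ((reach_seq hs.adj t ht).symm.trans hy)
  rw [D_comm] at hq hq1
  have h1 := hq.dst 0 (3 * k + 1) (by omega) h
  have h2 := hq.dst (3 * k + 1) _ h le_rfl
  rw [hq0] at h1
  rw [hq1] at h2
  refine ⟨ht, q (3 * k + 1), ?_, ?_, ?_⟩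
  · have := reach_seq hq.adj (3 * k + 1) h
    rw [hq0] at this
    exact (reach_seq hs.adj t ht).trans this
  · rw [D_comm]; omega
  · intro j hj
    have h3 := hmin j hj
    have h4 := D_tri (G := G) y (q (3 * k + 1)) (s j)
    rw [D_comm y (q (3 * k + 1))] at h4
    omega

lemma res_seq {X : Set V} {s : ℕ → V} {i j : ℕ} (hij : i ≤ j)
    (hs : ∀ m, i ≤ m → m < j → G.Adj (s m) (s (m + 1))) (hX : ∀ m, i ≤ m → m ≤ j → s m ∈ X) :
    (res G X).Reachable (s i) (s j) := by
  induction j, hij using Nat.le_induction with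
  | base => exact Reachable.refl _
  | succ m hm ih =>
    refine (ih (fun a h1 h2 => hs a h1 (by omega)) (fun a h1 h2 => hX a h1 (by omega))).trans ?_
    exact SimpleGraph.Adj.reachable ⟨hs m hm (by omega), hX m hm (by omega), hX _ (by omega) le_rfl⟩

lemma mem_Nb (hs : Geo G s n) {i : ℕ} (hi : i ≤ n) : s i ∈ Nb G k s n :=
  ⟨reach_seq hs.adj i hi, i, hi, by rw [D_self]; omega⟩

lemma Nb_conn (hs : Geo G s n) {x y : V} (hx : x ∈ Nb G k s n) (hy : y ∈ Nb G k s n) :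
    (res G (Nb G k s n)).Reachable x y := by
  have key : ∀ x, x ∈ Nb G k s n → (res G (Nb G k s n)).Reachable (s 0) x := by
    rintro x ⟨hxr, i, hi, hd⟩
    have h1 : (res G (Nb G k s n)).Reachable (s 0) (s i) :=
      res_seq (by omega) (fun m _ hm => hs.adj m (by omega)) (fun m _ hm => mem_Nb hs (by omega))
    refine h1.trans ?_
    obtain ⟨q, hq, hq0, hq1⟩ := exists_geo ((reach_seq hs.adj i hi).symm.trans hxr)
    have h2 : (res G (Nb G k s n)).Reachable (q 0) (q (D G (s i) x)) := by
      refine res_seq (by omega) (fun m _ hm => hq.adj m (by omega)) (fun m _ hm => ?_)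
      refine ⟨?_, i, hi, ?_⟩
      · have := reach_seq hq.adj m hm
        rw [hq0] at this
        exact (reach_seq hs.adj i hi).trans this
      · have := hq.dst 0 m (by omega) hm
        rw [hq0, D_comm] at this
        rw [D_comm] at hd
        omega
    rwa [hq0, hq1] at h2
  exact (key x hx).symm.trans (key y hy)

lemma lemmaF (hK3 : ¬ ContainsQuasiGeodesicSubdivGE G k triangleGraph 1) (hs : Geo G s n)
    {y0 : V} (hy0 : y0 ∉ Nb G k s n) (hr : G.Reachable (s 0) y0) (T1 T2 : ℕ)
    (hT : T1 + 8 * k + 2 ≤ T2) (hFF : ∀ i, FF G k s n i → i ≤ T1 ∨ T2 ≤ i) :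
    (∀ w i, att G k s n y0 w i → i ≤ T1) ∨ (∀ w i, att G k s n y0 w i → T2 ≤ i) := by
  by_contra hcon
  push Not at hcon
  obtain ⟨⟨w, i, ha, hi⟩, w', i', ha', hi'⟩ := hcon
  have hi2 := (hFF i (att_FF hy0 hr ha)).resolve_left (by omega)
  have hi2' := (hFF i' (att_FF hy0 hr ha')).resolve_right (by omega)
  obtain ⟨h1, h2, h3, y, hy, hw⟩ := id ha
  obtain ⟨h1', h2', h3', y', hy', hw'⟩ := id ha'
  have sep : ∀ x x' a b, a ≤ b → b ≤ n → D G x (s a) ≤ 3 * k → D G x' (s b) ≤ 3 * k →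
      b ≤ a + 6 * k + D G x x' := by
    intro x x' a b hab hb e1 e2
    have e3 := D_tri (G := G) (s a) x (s b)
    have e4 := D_tri (G := G) x x' (s b)
    have e5 := hs.dst a b hab hb
    rw [D_comm (s a) x] at e3
    omega
  obtain ⟨m, m', z, z', hm, hm', hz, hz', e1, e2, hS, hS', hD⟩ := lemmaA hK3 (Nb G k s n) y0 hy0
    (fun w => ∃ i, i ≤ n ∧ i ≤ T1 ∧ D G w (s i) ≤ 3 * k) hy' hy hw' hw h2' h2
    ⟨i', h1', hi2', h3'⟩ (by
      rintro ⟨p, hp, hpT, hpd⟩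
      have := sep w w p i (by omega) h1 hpd h3
      rw [D_self] at this
      omega) (Nb_conn hs h2' h2)
  obtain ⟨p, hp, hpT, hpd⟩ := hS
  obtain ⟨hr', q, hq, hqd⟩ := id hm'
  have hq2 : T2 ≤ q := by
    refine (hFF q (att_FF hy0 hr ⟨hq, hm', hqd, z', hz', e2⟩)).resolve_left ?_
    intro h
    exact hS' ⟨q, hq, h, hqd⟩
  have := sep m m' p q (by omega) hq hpd hqd
  omega

/-- last exit of a geodesic -/
lemma last_exit {s' : ℕ → V} {n' : ℕ} (hs' : Geo G s' n') (h0 : s' 0 ∈ Nb G k s n)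
    (h1 : s' n' ∉ Nb G k s n) :
    ∃ t i, t < n' ∧ att G k s n (s' n') (s' t) i ∧
      ∀ j, t < j → j ≤ n' → (res G (Nb G k s n)ᶜ).Reachable (s' n') (s' j) := by
  classical
  set t := Nat.findGreatest (fun t => s' t ∈ Nb G k s n) n' with ht
  have htm : s' t ∈ Nb G k s n := Nat.findGreatest_spec (P := fun t => s' t ∈ Nb G k s n) (Nat.zero_le n') h0
  have htle : t ≤ n' := Nat.findGreatest_le n'
  have htn : t < n' := by
    rcases Nat.lt_or_ge t n' with h | h
    · exact h
    · exfalso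
      have : t = n' := le_antisymm htle h
      rw [this] at htm; exact h1 htm
  have hgt : ∀ j, t < j → j ≤ n' → s' j ∉ Nb G k s n := by
    intro j hj hj'
    exact Nat.findGreatest_is_greatest hj hj'
  have hre : ∀ j, t < j → j ≤ n' → (res G (Nb G k s n)ᶜ).Reachable (s' n') (s' j) := by
    intro j hj hj'
    refine (res_seq hj' (fun m _ hm => hs'.adj m hm) (fun m hm hm' => ?_)).symm
    exact hgt m (by omega) hm'
  obtain ⟨_, i, hi, hid⟩ := id htm
  exact ⟨t, i, htn, ⟨hi, htm, hid, _, hre (t + 1) (by omega) (by omega), hs'.adj t htn⟩, hre⟩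

lemma lemmaG {z y : V} (hz : z ∈ Nb G k s n) (hy : y ∉ Nb G k s n) (hr : G.Reachable (s 0) y) :
    ∃ w i, att G k s n y w i ∧ D G z y = D G z w + D G w y := by
  obtain ⟨q, hq, hq0, hq1⟩ := exists_geo (hz.1.symm.trans hr)
  obtain ⟨t, i, ht, ha, -⟩ := last_exit (k := k) (s := s) (n := n) hq (by rwa [hq0]) (by rwa [hq1])
  rw [hq1] at ha
  refine ⟨q t, i, ha, ?_⟩
  have h1 := hq.dst 0 t (by omega) (by omega)
  have h2 := hq.dst t _ ht.le le_rfl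
  rw [hq0] at h1
  rw [hq1] at h2
  omega

lemma right_bound (hs : Geo G s n) {i0 : ℕ} (hi0 : i0 ≤ n) {u v : V}
    (hau : D G (s 0) u ≤ n) (hav : D G (s 0) v ≤ n) (he : D G (s i0) u = D G (s i0) v)
    (hu : ∃ w i, i0 ≤ i ∧ i ≤ n ∧ D G w (s i) ≤ 3 * k ∧ D G (s 0) u = D G (s 0) w + D G w u ∧
      (u = w ∨ n ≤ i + 3 * k))
    (hv : ∃ w i, i0 ≤ i ∧ i ≤ n ∧ D G w (s i) ≤ 3 * k ∧ D G (s 0) v = D G (s 0) w + D G w v ∧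
      (v = w ∨ n ≤ i + 3 * k)) : D G u v ≤ 18 * k := by
  obtain ⟨w, i, h1, h2, h3, h4, h5⟩ := hu
  obtain ⟨w', i', h1', h2', h3', h4', h5'⟩ := hv
  have a1 : D G (s 0) (s i0) = i0 := by have := hs.dst 0 i0 (by omega) hi0; omega
  have a2 : D G (s 0) (s i) = i := by have := hs.dst 0 i (by omega) h2; omega
  have a3 : D G (s 0) (s i') = i' := by have := hs.dst 0 i' (by omega) h2'; omega
  have a4 := hs.dst i0 i h1 h2
  have a5 := hs.dst i0 i' h1' h2'
  have b1 := D_tri (G := G) (s 0) (s i0) u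
  have b2 := D_tri (G := G) (s 0) (s i0) v
  have c1 := D_tri (G := G) (s 0) w (s i)
  have c2 := D_tri (G := G) (s 0) w' (s i')
  have d1 := D_tri (G := G) (s i0) u (s i)
  have d2 := D_tri (G := G) (s i0) v (s i')
  have d3 := D_tri (G := G) (s i0) (s i) u
  have d4 := D_tri (G := G) (s i0) (s i') v
  have e0 : D G (s i) (s i') + i = i' ∨ D G (s i) (s i') + i' = i := by
    rcases le_total i i' with h | h
    · left; exact hs.dst _ _ h h2'
    · right; rw [D_comm]; exact hs.dst _ _ h h2
  have e1 := D_tri (G := G) u w v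
  have e2 := D_tri (G := G) w (s i) v
  have e3 := D_tri (G := G) (s i) (s i') v
  have e4 := D_tri (G := G) (s i') w' v
  rw [D_comm u w] at e1
  rw [D_comm (s i') w'] at e4
  rcases h5 with rfl | h5
  · rw [D_comm (s i)] at d3
    rw [D_self] at *
    rcases h5' with rfl | h5'
    · rw [D_comm (s i')] at d4
      rw [D_self] at *
      omega
    · omega
  · rcases h5' with rfl | h5'
    · rw [D_comm (s i')] at d4
      rw [D_self] at *
      omega
    · omega

end core

section core2
variable {V : Type*} [Fintype V] {G : SimpleGraph V} {k : ℕ} {s : ℕ → V} {n i0 : ℕ}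

lemma Geo.abs (hs : Geo G s n) {i j : ℕ} (hi : i ≤ n) (hj : j ≤ n) :
    (D G (s i) (s j) + i = j) ∨ (D G (s i) (s j) + j = i) := by
  rcases le_total i j with h | h
  · left; exact hs.dst _ _ h hj
  · right; rw [D_comm]; exact hs.dst _ _ h hi

structure Cfg (G : SimpleGraph V) (k : ℕ) (s : ℕ → V) (n i0 : ℕ) : Prop where
  geo : Geo G s n
  le : i0 ≤ n
  mx : ∀ x y, G.Reachable (s 0) x → G.Reachable (s 0) y → D G x y ≤ n
  ff : ∀ i, FF G k s n i → i ≤ 3 * k ∨ (i0 ≤ i ∧ i ≤ i0 + 12 * k + 3) ∨ n ≤ i + 3 * k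

def TyA (G : SimpleGraph V) (k : ℕ) (s : ℕ → V) (n : ℕ) (y : V) : Prop :=
  ∀ w i, att G k s n y w i → i ≤ 3 * k
def TyB (G : SimpleGraph V) (k : ℕ) (s : ℕ → V) (n : ℕ) (y : V) : Prop :=
  ∀ w i, att G k s n y w i → n ≤ i + 3 * k
def TyC (G : SimpleGraph V) (k : ℕ) (s : ℕ → V) (n i0 : ℕ) (y : V) : Prop :=
  (∀ w i, att G k s n y w i → i0 ≤ i ∧ i ≤ i0 + 12 * k + 3) ∧ 11 * k + 2 ≤ i0 ∧
    i0 + 23 * k + 5 ≤ n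

lemma classify (hK3 : ¬ ContainsQuasiGeodesicSubdivGE G k triangleGraph 1)
    (hc : Cfg G k s n i0) {y : V} (hy : y ∉ Nb G k s n) (hr : G.Reachable (s 0) y)
    (hM : 63 * k + 13 ≤ D G (s i0) y) :
    TyA G k s n y ∨ TyB G k s n y ∨ TyC G k s n i0 y := by
  have hs := hc.geo
  have hi0 := hc.le
  have hn : D G (s i0) y ≤ n := hc.mx _ _ (reach_seq hs.adj i0 hi0) hr
  by_cases c1 : i0 ≤ 11 * k + 1
  · rcases lemmaF hK3 hs hy hr (i0 + 12 * k + 3) (n - 3 * k) (by omega)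
      (fun i hi => by have := hc.ff i hi; omega) with h | h
    · exfalso
      obtain ⟨w, i, ha, he⟩ := lemmaG (z := s n) (mem_Nb hs le_rfl) hy hr
      have hi := h w i ha
      have hin := ha.1
      have e0 := hc.mx _ _ (reach_seq hs.adj n le_rfl) hr
      have e1 := D_tri (G := G) (s n) w (s i)
      have e2 := hs.abs hin (le_refl n)
      rw [D_comm] at e2
      have e3 := D_tri (G := G) (s i0) (s i) y
      have e4 := D_tri (G := G) (s i) w y
      rw [D_comm (s i) w] at e4
      have e5 := hs.abs hi0 hin
      have e6 := ha.2.2.1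
      omega
    · right; left
      intro w i ha
      have := h w i ha
      omega
  · by_cases c2 : n ≤ i0 + 23 * k + 4
    · rcases lemmaF hK3 hs hy hr (3 * k) (min i0 (n - 3 * k)) (by omega)
        (fun i hi => by have := hc.ff i hi; omega) with h | h
      · left; exact h
      · exfalso
        obtain ⟨w, i, ha, he⟩ := lemmaG (z := s 0) (mem_Nb hs (Nat.zero_le n)) hy hr
        have hi := h w i ha
        have hin := ha.1
        have e0 := hc.mx _ _ (Reachable.refl _) hr
        have e1 := D_tri (G := G) (s 0) w (s i)
        have e2 := hs.abs (Nat.zero_le n) hin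
        have e3 := D_tri (G := G) (s i0) (s i) y
        have e4 := D_tri (G := G) (s i) w y
        rw [D_comm (s i) w] at e4
        have e5 := hs.abs hi0 hin
        have e6 := ha.2.2.1
        omega
    · rcases lemmaF hK3 hs hy hr (3 * k) i0 (by omega)
        (fun i hi => by have := hc.ff i hi; omega) with h | h
      · left; exact h
      · rcases lemmaF hK3 hs hy hr (i0 + 12 * k + 3) (n - 3 * k) (by omega)
          (fun i hi => by have := hc.ff i hi; omega) with h' | h'
        · right; right
          exact ⟨fun w i ha => ⟨h w i ha, h' w i ha⟩, by omega, by omega⟩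
        · right; left
          intro w i ha
          have := h' w i ha
          omega

def Rt (G : SimpleGraph V) (k : ℕ) (s : ℕ → V) (n i0 : ℕ) (x : V) : Prop :=
  (x ∈ Nb G k s n ∧ ∃ i, i0 ≤ i ∧ i ≤ n ∧ D G x (s i) ≤ 3 * k) ∨
    (x ∉ Nb G k s n ∧ TyB G k s n x)
def Lt (G : SimpleGraph V) (k : ℕ) (s : ℕ → V) (n i0 : ℕ) (x : V) : Prop :=
  (x ∈ Nb G k s n ∧ ∃ i, i ≤ i0 ∧ i ≤ n ∧ D G x (s i) ≤ 3 * k) ∨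
    (x ∉ Nb G k s n ∧ TyA G k s n x)

lemma types (hK3 : ¬ ContainsQuasiGeodesicSubdivGE G k triangleGraph 1)
    (hc : Cfg G k s n i0) {y : V} (hr : G.Reachable (s 0) y)
    (hM : 63 * k + 13 ≤ D G (s i0) y) :
    Rt G k s n i0 y ∨ Lt G k s n i0 y ∨ (y ∉ Nb G k s n ∧ TyC G k s n i0 y) := by
  by_cases hy : y ∈ Nb G k s n
  · obtain ⟨_, i, hi, hd⟩ := id hy
    rcases le_total i0 i with h | h
    · left; left; exact ⟨hy, i, h, hi, hd⟩
    · right; left; left; exact ⟨hy, i, h, hi, hd⟩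
  · rcases classify hK3 hc hy hr hM with h | h | h
    · right; left; right; exact ⟨hy, h⟩
    · left; right; exact ⟨hy, h⟩
    · right; right; exact ⟨hy, h⟩

lemma Nb_far (hc : Cfg G k s n i0) {x : V} {i : ℕ} (hi : i ≤ n) (hd : D G x (s i) ≤ 3 * k)
    (hM : 63 * k + 13 ≤ D G (s i0) x) : i0 + 60 * k + 13 ≤ i ∨ i + 60 * k + 13 ≤ i0 := by
  have h1 := hc.geo.abs hc.le hi
  have h2 := D_tri (G := G) (s i0) (s i) x
  rw [D_comm (s i) x] at h2
  omega

lemma adj_Nb (hc : Cfg G k s n i0) {x y : V} {i j : ℕ} (hi : i ≤ n) (hd : D G x (s i) ≤ 3 * k)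
    (hj : j ≤ n) (hd' : D G y (s j) ≤ 3 * k) (h : G.Adj x y) :
    i ≤ j + 6 * k + 1 ∧ j ≤ i + 6 * k + 1 := by
  have h1 := hc.geo.abs hi hj
  have h2 := D_tri (G := G) (s i) x (s j)
  have h3 := D_tri (G := G) x y (s j)
  rw [D_comm (s i) x] at h2
  rw [D_adj h] at h3
  omega

lemma att_of_adj {x y : V} (hx : x ∉ Nb G k s n) (hy : y ∈ Nb G k s n) (h : G.Adj x y) {i : ℕ}
    (hi : i ≤ n) (hd : D G y (s i) ≤ 3 * k) : att G k s n x y i :=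
  ⟨hi, hy, hd, x, Reachable.refl _, h.symm⟩

lemma Rt_step (hK3 : ¬ ContainsQuasiGeodesicSubdivGE G k triangleGraph 1)
    (hc : Cfg G k s n i0) {x y : V} (hrx : G.Reachable (s 0) x) (h : G.Adj x y)
    (hMx : 63 * k + 13 ≤ D G (s i0) x) (hMy : 63 * k + 13 ≤ D G (s i0) y)
    (hx : Rt G k s n i0 x) : Rt G k s n i0 y := by
  have hi0 := hc.le
  have hry := hrx.trans h.reachable
  by_cases hy : y ∈ Nb G k s n
  · left
    refine ⟨hy, ?_⟩
    obtain ⟨_, j, hj, hjd⟩ := id hy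
    have f1 := Nb_far hc hj hjd hMy
    refine ⟨j, ?_, hj, hjd⟩
    rcases hx with ⟨hx, i, h1, h2, h3⟩ | ⟨hx, hT⟩
    · have f2 := Nb_far hc h2 h3 hMx
      have f3 := adj_Nb hc h2 h3 hj hjd h
      omega
    · have := hT _ _ (att_of_adj hx hy h hj hjd)
      omega
  · right
    refine ⟨hy, ?_⟩
    rcases hx with ⟨hx, i, h1, h2, h3⟩ | ⟨hx, hT⟩
    · have f2 := Nb_far hc h2 h3 hMx
      have ha := att_of_adj hy hx h.symm h2 h3
      rcases classify hK3 hc hy hry hMy with h | h | h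
      · have := h _ _ ha; omega
      · exact h
      · have := h.1 _ _ ha; omega
    · intro w i ha
      exact hT w i (att_trans (SimpleGraph.Adj.reachable ⟨h, hx, hy⟩) ha)

lemma Lt_step (hK3 : ¬ ContainsQuasiGeodesicSubdivGE G k triangleGraph 1)
    (hc : Cfg G k s n i0) {x y : V} (hrx : G.Reachable (s 0) x) (h : G.Adj x y)
    (hMx : 63 * k + 13 ≤ D G (s i0) x) (hMy : 63 * k + 13 ≤ D G (s i0) y)
    (hx : Lt G k s n i0 x) : Lt G k s n i0 y := by
  have hi0 := hc.le
  have hry := hrx.trans h.reachable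
  by_cases hy : y ∈ Nb G k s n
  · left
    refine ⟨hy, ?_⟩
    obtain ⟨_, j, hj, hjd⟩ := id hy
    have f1 := Nb_far hc hj hjd hMy
    refine ⟨j, ?_, hj, hjd⟩
    rcases hx with ⟨hx, i, h1, h2, h3⟩ | ⟨hx, hT⟩
    · have f2 := Nb_far hc h2 h3 hMx
      have f3 := adj_Nb hc h2 h3 hj hjd h
      omega
    · have := hT _ _ (att_of_adj hx hy h hj hjd)
      omega
  · right
    refine ⟨hy, ?_⟩
    rcases hx with ⟨hx, i, h1, h2, h3⟩ | ⟨hx, hT⟩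
    · have f2 := Nb_far hc h2 h3 hMx
      have ha := att_of_adj hy hx h.symm h2 h3
      rcases classify hK3 hc hy hry hMy with h | h | h
      · exact h
      · have := h _ _ ha; omega
      · have := h.1 _ _ ha; omega
    · intro w i ha
      exact hT w i (att_trans (SimpleGraph.Adj.reachable ⟨h, hx, hy⟩) ha)

lemma Rt_bound (hc : Cfg G k s n i0) {u v : V} (hru : G.Reachable (s 0) u)
    (hrv : G.Reachable (s 0) v) (he : D G (s i0) u = D G (s i0) v)
    (hM : 63 * k + 13 ≤ D G (s i0) u)
    (hu : Rt G k s n i0 u) (hv : Rt G k s n i0 v) : D G u v ≤ 18 * k := by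
  have hs := hc.geo
  have hi0 := hc.le
  have hn : D G (s i0) u ≤ n := hc.mx _ _ (reach_seq hs.adj i0 hi0) hru
  have key : ∀ x, G.Reachable (s 0) x → 63 * k + 13 ≤ D G (s i0) x → Rt G k s n i0 x →
      ∃ w i, i0 ≤ i ∧ i ≤ n ∧ D G w (s i) ≤ 3 * k ∧ D G (s 0) x = D G (s 0) w + D G w x ∧
      (x = w ∨ n ≤ i + 3 * k) := by
    intro x hrx hMx hx
    rcases hx with ⟨hx, i, h1, h2, h3⟩ | ⟨hx, hT⟩
    · exact ⟨x, i, h1, h2, h3, by rw [D_self]; omega, Or.inl rfl⟩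
    · obtain ⟨w, i, ha, he⟩ := lemmaG (z := s 0) (mem_Nb hs (Nat.zero_le n)) hx hrx
      have hb := hT _ _ ha
      by_cases hii : i0 ≤ i
      · exact ⟨w, i, hii, ha.1, ha.2.2.1, he, Or.inr hb⟩
      · exfalso
        have e0 := hc.mx _ _ (Reachable.refl _) hrx
        have e1 := D_tri (G := G) (s 0) w (s i)
        have e2 := hs.abs (Nat.zero_le n) ha.1
        have e3 := D_tri (G := G) (s i0) (s i) x
        have e4 := D_tri (G := G) (s i) w x
        rw [D_comm (s i) w] at e4
        have e5 := hs.abs hi0 ha.1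
        have e6 := ha.2.2.1
        omega
  exact right_bound hs hi0 (hc.mx _ _ (Reachable.refl _) hru) (hc.mx _ _ (Reachable.refl _) hrv) he
    (key u hru hM hu) (key v hrv (by omega) hv)

lemma Lt_bound (hc : Cfg G k s n i0) {u v : V} (hru : G.Reachable (s 0) u)
    (hrv : G.Reachable (s 0) v) (he : D G (s i0) u = D G (s i0) v)
    (hM : 63 * k + 13 ≤ D G (s i0) u)
    (hu : Lt G k s n i0 u) (hv : Lt G k s n i0 v) : D G u v ≤ 18 * k := by
  have hs := hc.geo
  have hi0 := hc.le
  have hrn := reach_seq hs.adj n le_rfl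
  have key : ∀ x, G.Reachable (s 0) x → 63 * k + 13 ≤ D G (s i0) x → Lt G k s n i0 x →
      ∃ w i, i ≤ i0 ∧ i ≤ n ∧ D G w (s i) ≤ 3 * k ∧ D G (s n) x = D G (s n) w + D G w x ∧
      (x = w ∨ i ≤ 3 * k) := by
    intro x hrx hMx hx
    rcases hx with ⟨hx, i, h1, h2, h3⟩ | ⟨hx, hT⟩
    · exact ⟨x, i, h1, h2, h3, by rw [D_self]; omega, Or.inl rfl⟩
    · obtain ⟨w, i, ha, he⟩ := lemmaG (z := s n) (mem_Nb hs (le_refl n)) hx hrx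
      have hb := hT _ _ ha
      by_cases hii : i ≤ i0
      · exact ⟨w, i, hii, ha.1, ha.2.2.1, he, Or.inr hb⟩
      · exfalso
        have e0 := hc.mx _ _ hrn hrx
        have e1 := D_tri (G := G) (s n) w (s i)
        have e2 := hs.abs (le_refl n) ha.1
        have e3 := D_tri (G := G) (s i0) (s i) x
        have e4 := D_tri (G := G) (s i) w x
        rw [D_comm (s i) w] at e4
        have e5 := hs.abs hi0 ha.1
        have e6 := ha.2.2.1
        omega
  have key2 : ∀ x, G.Reachable (s 0) x → 63 * k + 13 ≤ D G (s i0) x → Lt G k s n i0 x →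
      ∃ w i, n - i0 ≤ i ∧ i ≤ n ∧ D G w (s (n - i)) ≤ 3 * k ∧
      D G (s (n - 0)) x = D G (s (n - 0)) w + D G w x ∧ (x = w ∨ n ≤ i + 3 * k) := by
    intro x h1 h2 h3
    obtain ⟨w, i, e1, e2, e3, e4, e5⟩ := key x h1 h2 h3
    refine ⟨w, n - i, by omega, by omega, ?_, e4, ?_⟩
    · rw [show n - (n - i) = i by omega]; exact e3
    · rcases e5 with e5 | e5
      · exact Or.inl e5
      · right; omega
  have := right_bound (k := k) (s := fun i => s (n - i)) hs.rev (i0 := n - i0) (u := u) (v := v)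
    (by omega) (hc.mx _ _ hrn hru) (hc.mx _ _ hrn hrv)
    (by simp only [show n - (n - i0) = i0 by omega]; exact he)
    (key2 u hru hM hu) (key2 v hrv (by omega) hv)
  exact this

end core2

section core3
variable {V : Type*} [Fintype V] {G : SimpleGraph V} {k : ℕ} {s : ℕ → V} {n i0 : ℕ}

lemma Mid_step (hc : Cfg G k s n i0) {x y u : V} (hu : TyC G k s n i0 u) (hux : u ∉ Nb G k s n)
    (hx : (res G (Nb G k s n)ᶜ).Reachable u x) (h : G.Adj x y)
    (hMy : 63 * k + 13 ≤ D G (s i0) y) : (res G (Nb G k s n)ᶜ).Reachable u y := by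
  have hxN : x ∉ Nb G k s n := res_reach_mem hx hux
  by_cases hy : y ∈ Nb G k s n
  · exfalso
    obtain ⟨_, j, hj, hjd⟩ := id hy
    have f1 := Nb_far hc hj hjd hMy
    have := hu.1 _ _ (att_trans hx (att_of_adj hxN hy h hj hjd))
    omega
  · exact hx.trans (SimpleGraph.Adj.reachable ⟨h, hxN, hy⟩)

lemma Mid_h (hc : Cfg G k s n i0) {x : V} (hu : TyC G k s n i0 x) (hx : x ∉ Nb G k s n)
    (hr : G.Reachable (s 0) x) :
    i0 + D G (s i0) x ≤ D G (s 0) x + 6 * k ∧ D G (s 0) x ≤ i0 + D G (s i0) x := by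
  have hs := hc.geo
  obtain ⟨w, i, ha, he⟩ := lemmaG (z := s 0) (mem_Nb hs (Nat.zero_le n)) hx hr
  have := hu.1 _ _ ha
  have e1 := D_tri (G := G) (s 0) w (s i)
  have e2 := hs.abs (Nat.zero_le n) ha.1
  have e3 := D_tri (G := G) (s i0) (s i) x
  have e4 := D_tri (G := G) (s i) w x
  rw [D_comm (s i) w] at e4
  have e5 := hs.abs hc.le ha.1
  have e6 := ha.2.2.1
  have e7 := D_tri (G := G) (s 0) (s i0) x
  have e8 := hs.abs (Nat.zero_le n) hc.le
  omega

lemma TyC_trans {x y : V} (h : (res G (Nb G k s n)ᶜ).Reachable x y) (hx : TyC G k s n i0 x) :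
    TyC G k s n i0 y :=
  ⟨fun w i ha => hx.1 w i (att_trans h ha), hx.2⟩

lemma Mid_bound (hK3 : ¬ ContainsQuasiGeodesicSubdivGE G k triangleGraph 1)
    (hW : ¬ ContainsQuasiGeodesicSubdivGE G (3 * k) wrenchGraph 3)
    (hc : Cfg G k s n i0) {u v : V} (hru : G.Reachable (s 0) u)
    (hrv : G.Reachable (s 0) v) (he : D G (s i0) u = D G (s i0) v)
    (hM : 63 * k + 13 ≤ D G (s i0) u) (huN : u ∉ Nb G k s n) (hu : TyC G k s n i0 u)
    (hp : (res G {x | 63 * k + 13 ≤ D G (s i0) x}).Reachable u v) : D G u v ≤ 18 * k := by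
  by_contra hcon
  have hs := hc.geo
  have hi0 := hc.le
  have hn := hu.2
  -- general facts on the component
  have hN : ∀ x, (res G (Nb G k s n)ᶜ).Reachable u x → x ∉ Nb G k s n :=
    fun x hx => res_reach_mem hx huN
  have hh : ∀ x, (res G (Nb G k s n)ᶜ).Reachable u x →
      i0 + D G (s i0) x ≤ D G (s 0) x + 6 * k ∧ D G (s 0) x ≤ i0 + D G (s i0) x :=
    fun x hx => Mid_h hc (TyC_trans hx hu) (hN x hx) (hru.trans (res_reach hx))
  have huv : (res G (Nb G k s n)ᶜ).Reachable u v :=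
    reach_induct (fun x => (res G (Nb G k s n)ᶜ).Reachable u x) hp (Reachable.refl _)
      (fun a b hab ha => Mid_step hc hu huN ha hab.1 hab.2.2)
  have hhu := hh u (Reachable.refl _)
  have hhv := hh v huv
  obtain ⟨q, hq, hq0, hq1⟩ := exists_geo hru
  set n' := D G (s 0) u with hn'
  have hqr : ∀ x, G.Reachable (s 0) x → G.Reachable (q 0) x := fun x hx => by rw [hq0]; exact hx
  have hq0d : ∀ p, p ≤ n' → D G (s 0) (q p) = p := by
    intro p hp
    have := hq.dst 0 p (Nat.zero_le _) hp
    rw [hq0] at this; omega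
  have hvN' : v ∉ Nb G k q n' := by
    rintro ⟨_, p, hp, hpd⟩
    have e1 := hq0d p hp
    have e2 := D_tri (G := G) (s 0) (q p) v
    have e3 := hq.dst p n' hp le_rfl
    rw [hq1] at e3
    have e4 := D_tri (G := G) u (q p) v
    rw [D_comm (q p) v] at e2 e4
    rw [D_comm u (q p)] at e4
    omega
  obtain ⟨t0, i, ht0, hatt, hin⟩ := last_exit (k := k) (s := s) (n := n) hq
    (by rw [hq0]; exact mem_Nb hs (Nat.zero_le n)) (by rw [hq1]; exact huN)
  rw [hq1] at hatt hin
  have hi := hu.1 _ _ hatt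
  have hiD := hatt.2.2.1
  have f1 := D_tri (G := G) (s 0) (s i) (q t0)
  have f2 := hs.abs (Nat.zero_le n) hatt.1
  rw [D_comm (s i), hq0d t0 ht0.le] at f1
  have hb0 : ∀ p, p ≤ n' → n ≤ p + D G (s n) (q p) := by
    intro p hp
    have e1 := D_tri (G := G) (s 0) (q p) (s n)
    have e2 := hs.dst 0 n (Nat.zero_le n) le_rfl
    rw [hq0d p hp, D_comm (q p)] at e1
    omega
  have hbfar : ∀ p, p ≤ n' → 3 * k + 1 ≤ D G (s n) (q p) := by
    intro p hp
    by_contra hlt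
    have e1 := hb0 p hp
    have e2 := hin p (by omega) hp
    refine hN _ e2 ⟨hru.trans (res_reach e2), n, le_rfl, ?_⟩
    rw [D_comm]; omega
  -- the foot of b
  obtain ⟨t, ht, htmin⟩ : ∃ t, t ≤ n' ∧ ∀ j, j ≤ n' → D G (s n) (q t) ≤ D G (s n) (q j) := by
    obtain ⟨t, ht, hmin⟩ := Finset.exists_min_image (Finset.range (n' + 1))
      (fun j => D G (s n) (q j)) ⟨0, by simp⟩
    exact ⟨t, by have := Finset.mem_range.1 ht; omega,
      fun j hj => hmin j (Finset.mem_range.2 (by omega))⟩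
  have hFt : FF G k q n' t := FF_min hq (hqr _ (reach_seq hs.adj n le_rfl)) ht (hbfar t ht) htmin
  have g1 := htmin t0 ht0.le
  have g2 := D_tri (G := G) (s n) (s i) (q t0)
  have g3 := hs.abs (le_refl n) hatt.1
  rw [D_comm (s i) (q t0)] at g2
  have g4 := hb0 t ht
  have htlo : i0 ≤ t + 3 * k := by omega
  have hthi : t ≤ i0 + 33 * k + 6 := by
    by_cases htt : t ≤ t0
    · omega
    · have e1 := hin t (by omega) ht
      have hyr := hru.trans (res_reach e1)
      obtain ⟨w, i', ha', he'⟩ := lemmaG (z := s n) (mem_Nb hs le_rfl) (hN _ e1) hyr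
      have hi' := hu.1 _ _ (att_trans e1 ha')
      have d1 := D_tri (G := G) (s n) w (s i')
      have d2 := hs.abs (le_refl n) ha'.1
      have d3 := D_tri (G := G) (s i0) (s i') (q t)
      have d4 := D_tri (G := G) (s i') w (q t)
      rw [D_comm (s i') w] at d4
      have d5 := hs.abs hi0 ha'.1
      have d6 := ha'.2.2.1
      have d7 := (hh _ e1).2
      rw [hq0d t ht] at d7
      omega
  have hFF : ∀ z, FF G k q n' z → z ≤ i0 + 45 * k + 9 ∨ n' - 3 * k ≤ z := by
    intro z hz
    by_contra hcz
    exact lemmaW hW hq hFt hz (by omega) (by omega) (by omega)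
  have hlow : ∃ w z, att G k q n' v w z ∧ i0 + 54 * k + 13 ≤ z := by
    have h1 : (res G (Nb G k s n)ᶜ).Reachable u u ∧ ((res G (Nb G k q n')ᶜ).Reachable v u ∨
        ∃ w z, att G k q n' v w z ∧ i0 + 54 * k + 13 ≤ z) := by
      refine reach_induct (fun x => (res G (Nb G k s n)ᶜ).Reachable u x ∧
        ((res G (Nb G k q n')ᶜ).Reachable v x ∨
        ∃ w z, att G k q n' v w z ∧ i0 + 54 * k + 13 ≤ z)) hp.symm ⟨huv, Or.inl (Reachable.refl _)⟩ ?_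
      rintro x y hxy ⟨hx, hx'⟩
      have hy := Mid_step hc hu huN hx hxy.1 hxy.2.2
      refine ⟨hy, ?_⟩
      rcases hx' with hx' | hx'
      · have hxN' : x ∉ Nb G k q n' := res_reach_mem hx' hvN'
        by_cases hyN' : y ∈ Nb G k q n'
        · right
          obtain ⟨_, z, hz, hzd⟩ := id hyN'
          refine ⟨y, z, att_trans hx' (att_of_adj hxN' hyN' hxy.1 hz hzd), ?_⟩
          have e1 := (hh y hy).1
          have e2 : 63 * k + 13 ≤ D G (s i0) y := hxy.2.2
          have e3 := D_tri (G := G) (s 0) (q z) y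
          rw [hq0d z hz, D_comm (q z)] at e3
          omega
        · left
          exact hx'.trans (SimpleGraph.Adj.reachable ⟨hxy.1, hxN', hyN'⟩)
      · exact Or.inr hx'
    rcases h1.2 with h | h
    · exfalso
      have : u ∉ Nb G k q n' := res_reach_mem h hvN'
      apply this
      have := mem_Nb (k := k) hq (le_refl n')
      rwa [hq1] at this
    · exact h
  obtain ⟨w0, z0, ha0, hz0⟩ := hlow
  rcases lemmaF hK3 hq hvN' (hqr _ hrv) (i0 + 45 * k + 9) (n' - 3 * k) (by omega) hFF with h | h
  · have := h _ _ ha0; omega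
  · obtain ⟨w, z, ha, hew⟩ := lemmaG (z := q 0) (mem_Nb hq (Nat.zero_le n')) hvN' (hqr _ hrv)
    have hz := h _ _ ha
    have hzn := ha.1
    have hzd := ha.2.2.1
    rw [hq0] at hew
    have e1 := D_tri (G := G) (s 0) w (q z)
    rw [hq0d z hzn] at e1
    have e2 := hq.dst z n' hzn le_rfl
    rw [hq1] at e2
    have e3 := D_tri (G := G) u (q z) v
    have e4 := D_tri (G := G) (q z) w v
    rw [D_comm u (q z)] at e3
    rw [D_comm (q z) w] at e4
    omega

lemma core_s4 (hK3 : ¬ ContainsQuasiGeodesicSubdivGE G k triangleGraph 1)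
    (hW : ¬ ContainsQuasiGeodesicSubdivGE G (3 * k) wrenchGraph 3) (c0 : V) :
    ∃ c, G.Reachable c0 c ∧ ∀ u v, G.Reachable c u → D G c u = D G c v →
      63 * k + 13 ≤ D G c u → (res G {x | 63 * k + 13 ≤ D G c x}).Reachable u v →
      D G u v ≤ 18 * k := by
  classical
  haveI : Nonempty {p : V × V // G.Reachable c0 p.1 ∧ G.Reachable c0 p.2} :=
    ⟨⟨(c0, c0), Reachable.refl _, Reachable.refl _⟩⟩
  obtain ⟨⟨⟨a, b⟩, ha, hb⟩, hmax⟩ := Finite.exists_max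
    (fun p : {p : V × V // G.Reachable c0 p.1 ∧ G.Reachable c0 p.2} => D G p.1.1 p.1.2)
  simp only at ha hb hmax
  obtain ⟨s, hs, hs0, hs1⟩ := exists_geo (ha.symm.trans hb)
  set n := D G a b with hn
  have hmx : ∀ x y, G.Reachable (s 0) x → G.Reachable (s 0) y → D G x y ≤ n := by
    intro x y hx hy
    rw [hs0] at hx hy
    exact hmax ⟨(x, y), ha.trans hx, ha.trans hy⟩
  obtain ⟨i0, hc⟩ : ∃ i0, Cfg G k s n i0 := by
    by_cases hex : ∃ i, FF G k s n i ∧ 3 * k + 1 ≤ i ∧ i + 3 * k + 1 ≤ n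
    · obtain ⟨h1, h2, h3⟩ := Nat.find_spec hex
      refine ⟨Nat.find hex, hs, by omega, hmx, fun i hi => ?_⟩
      by_contra hcon
      push Not at hcon
      have h4 := Nat.find_min' hex ⟨hi, by omega, by omega⟩
      exact lemmaW hW hs h1 hi h2 (by omega) (by omega)
    · refine ⟨0, hs, by omega, hmx, fun i hi => ?_⟩
      by_contra hcon
      exact hex ⟨i, hi, by omega, by omega⟩
  have hri := reach_seq hs.adj i0 hc.le
  refine ⟨s i0, ha.trans (by rw [← hs0]; exact hri), ?_⟩
  intro u v hru he hM hp
  have hru' := hri.trans hru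
  have hrv' := hru'.trans (res_reach hp)
  rcases types hK3 hc hru' hM with h | h | ⟨h1, h2⟩
  · refine Rt_bound hc hru' hrv' he hM h ?_
    refine (reach_induct (fun x => G.Reachable (s 0) x ∧ Rt G k s n i0 x) hp ⟨hru', h⟩ ?_).2
    rintro x y hxy ⟨h1, h2⟩
    exact ⟨h1.trans hxy.1.reachable, Rt_step hK3 hc h1 hxy.1 hxy.2.1 hxy.2.2 h2⟩
  · refine Lt_bound hc hru' hrv' he hM h ?_
    refine (reach_induct (fun x => G.Reachable (s 0) x ∧ Lt G k s n i0 x) hp ⟨hru', h⟩ ?_).2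
    rintro x y hxy ⟨h1, h2⟩
    exact ⟨h1.trans hxy.1.reachable, Lt_step hK3 hc h1 hxy.1 hxy.2.1 hxy.2.2 h2⟩
  · exact Mid_bound hK3 hW hc hru' hrv' he hM h1 h2 hp

end core3

section star

lemma star_of {T : Type*} (H : SimpleGraph T) (m L : ℕ) (ctr : T) (s : Fin m → ℕ → T)
    (h0 : ∀ i, s i 0 = ctr) (hctr : ∀ i t, 0 < t → t ≤ L + 1 → s i t ≠ ctr)
    (hinj : ∀ i i' t t', 0 < t → t ≤ L + 1 → 0 < t' → t' ≤ L + 1 → s i t = s i' t' →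
      i = i' ∧ t = t')
    (hcov : ∀ x, x = ctr ∨ ∃ i t, t ≤ L + 1 ∧ x = s i t)
    (hadj : ∀ x y, H.Adj x y ↔ ∃ i t, t < L + 1 ∧ s(x, y) = s(s i t, s i (t + 1))) :
    IsSubdividedStar H := by
  obtain ⟨Y, hY, hv, ha⟩ := exists_subdiv (G := H) (E := Fin m) (starGraph m) 0
    (fun o => o.elim ctr (fun i => s i (L + 1))) (fun _ => none) (fun i => some i)
    (fun _ => L + 1) s
    (by
      intro u v
      unfold starGraph
      rw [SimpleGraph.fromRel_adj]
      cases u <;> cases v <;> simp)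
    (by
      intro e e' h
      simpa using h)
    (by
      intro a b hab
      cases a with
      | none =>
        cases b with
        | none => rfl
        | some j => exact absurd hab.symm (hctr j _ (by omega) le_rfl)
      | some i =>
        cases b with
        | none => exact absurd hab (hctr i _ (by omega) le_rfl)
        | some j =>
          rw [(hinj i j _ _ (by omega) le_rfl (by omega) le_rfl hab).1])
    (fun e => h0 e) (fun e => rfl)
    (fun e i hi => (hadj _ _).2 ⟨e, i, hi, rfl⟩)
    (fun e => by omega)
    (by
      intro e i w h1 h2
      cases w with
      | none => exact hctr e i h1 h2.le
      | some j =>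
        intro h
        have := hinj e j i (L + 1) h1 h2.le (by omega) le_rfl h
        omega)
    (fun e e' i i' h1 h2 h3 h4 h => hinj e e' i i' h1 h2.le h3 h4.le h)
  refine ⟨m, ?_⟩
  have : Y = ⊤ := by
    apply Subgraph.ext
    · ext x
      simp only [Subgraph.verts_top, Set.mem_univ, iff_true]
      rw [hv]
      rcases hcov x with h | ⟨i, t, ht, h⟩
      · left; exact ⟨none, h⟩
      · right; exact ⟨i, t, ht, h⟩
    · ext x y
      rw [ha, Subgraph.top_adj, hadj]
  rw [← this]; exact hY

variable {K Λ : Type*}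

def pt (κ : Λ → K) (L : ℕ) (l : Λ) : ℕ → K ⊕ (Λ × Fin (L + 1))
  | 0 => Sum.inl (κ l)
  | t + 1 => Sum.inr (l, ⟨min t L, by omega⟩)

lemma pt_inj (κ : Λ → K) (L : ℕ) {l l' : Λ} {t t' : ℕ} (h1 : 0 < t) (h2 : t ≤ L + 1) (h3 : 0 < t')
    (h4 : t' ≤ L + 1) (h : pt κ L l t = pt κ L l' t') : l = l' ∧ t = t' := by
  obtain ⟨t, rfl⟩ : ∃ a, t = a + 1 := ⟨t - 1, by omega⟩
  obtain ⟨t', rfl⟩ : ∃ a, t' = a + 1 := ⟨t' - 1, by omega⟩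
  simp only [pt, Sum.inr.injEq, Prod.mk.injEq, Fin.mk.injEq] at h
  exact ⟨h.1, by omega⟩

lemma pt_ne (κ : Λ → K) (L : ℕ) (l : Λ) {t : ℕ} (h1 : 0 < t) (c : K) : pt κ L l t ≠ Sum.inl c := by
  obtain ⟨t, rfl⟩ : ∃ a, t = a + 1 := ⟨t - 1, by omega⟩
  simp [pt]

def starH (κ : Λ → K) (L : ℕ) : SimpleGraph (K ⊕ (Λ × Fin (L + 1))) where
  Adj x y := ∃ l t, t < L + 1 ∧ s(x, y) = s(pt κ L l t, pt κ L l (t + 1))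
  symm := ⟨fun x y ⟨l, t, ht, h⟩ => ⟨l, t, ht, by rw [Sym2.eq_swap]; exact h⟩⟩
  loopless := ⟨fun x ⟨l, t, ht, h⟩ => by
    have h' : x = pt κ L l t ∧ x = pt κ L l (t + 1) := by
      rw [Sym2.eq_iff] at h; tauto
    rcases Nat.eq_zero_or_pos t with h0 | h0
    · subst h0
      exact pt_ne κ L l (t := 0 + 1) (by omega) (κ l) (h'.2.symm.trans h'.1)
    · have := (pt_inj κ L h0 (by omega) (by omega) (by omega) (h'.1.symm.trans h'.2)).2
      omega⟩

def kap (κ : Λ → K) (L : ℕ) : K ⊕ (Λ × Fin (L + 1)) → K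
  | Sum.inl c => c
  | Sum.inr (l, _) => κ l

lemma kap_pt (κ : Λ → K) (L : ℕ) (l : Λ) (t : ℕ) : kap κ L (pt κ L l t) = κ l := by
  cases t <;> rfl

lemma star_union (κ : Λ → K) (L : ℕ) [Finite Λ] {n : ℕ} (e : (K ⊕ (Λ × Fin (L + 1))) ≃ Fin n) :
    IsUnionOfSubdividedStars ((starH κ L).comap e.symm) := by
  classical
  intro cc
  obtain ⟨a0, ha0⟩ := cc.exists_rep
  rw [← ha0]
  clear ha0
  set Hg := (starH κ L).comap e.symm with hHg
  have hadj : ∀ a b, Hg.Adj a b ↔ (starH κ L).Adj (e.symm a) (e.symm b) := fun a b => Iff.rfl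
  have hadj' : ∀ x y, (starH κ L).Adj x y → Hg.Adj (e x) (e y) := by
    intro x y h; rw [hadj]; simpa using h
  have hkap : ∀ x y, (starH κ L).Adj x y → kap κ L x = kap κ L y := by
    rintro x y ⟨l, t, ht, h⟩
    rw [Sym2.eq_iff] at h
    rcases h with ⟨rfl, rfl⟩ | ⟨rfl, rfl⟩ <;> rw [kap_pt, kap_pt]
  have hreach : ∀ l t, t ≤ L + 1 → Hg.Reachable (e (Sum.inl (κ l))) (e (pt κ L l t)) := by
    intro l t
    induction t with
    | zero => intro _; exact Reachable.refl _
    | succ t ih =>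
      intro ht
      exact (ih (by omega)).trans (hadj' _ _ ⟨l, t, by omega, rfl⟩).reachable
  have hpt : ∀ l (j : Fin (L + 1)), (Sum.inr (l, j) : K ⊕ (Λ × Fin (L + 1))) = pt κ L l (j.1 + 1) := by
    intro l j
    simp only [pt, Sum.inr.injEq, Prod.mk.injEq, true_and]
    ext; simp; omega
  have hroot : ∀ x, Hg.Reachable (e (Sum.inl (kap κ L x))) (e x) := by
    rintro (c | ⟨l, j⟩)
    · exact Reachable.refl _
    · rw [hpt, kap_pt]; exact hreach l _ (by omega)
  set c := kap κ L (e.symm a0) with hc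
  have hsupp : ∀ a, a ∈ (Hg.connectedComponentMk a0).supp ↔ kap κ L (e.symm a) = c := by
    intro a
    rw [ConnectedComponent.mem_supp_iff, ConnectedComponent.eq]
    constructor
    · intro h
      refine reach_induct (fun x => kap κ L (e.symm x) = c) h.symm hc.symm ?_
      intro x y hxy hx
      rw [← hx]; exact (hkap _ _ hxy).symm
    · intro h
      have h1 := hroot (e.symm a)
      have h2 := hroot (e.symm a0)
      rw [h, Equiv.apply_symm_apply] at h1
      rw [← hc, Equiv.apply_symm_apply] at h2
      exact h1.symm.trans h2
  change IsSubdividedStar (Hg.induce (Hg.connectedComponentMk a0).supp)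
  obtain ⟨m, ⟨ε⟩⟩ := Finite.exists_equiv_fin {l : Λ // κ l = c}
  have hmem : ∀ (i : Fin m) t, e (pt κ L (ε.symm i).1 t) ∈ (Hg.connectedComponentMk a0).supp := by
    intro i t
    rw [hsupp, Equiv.symm_apply_apply, kap_pt]; exact (ε.symm i).2
  have hmem0 : e (Sum.inl c) ∈ (Hg.connectedComponentMk a0).supp := by
    rw [hsupp, Equiv.symm_apply_apply]; rfl
  refine star_of _ m L ⟨e (Sum.inl c), hmem0⟩ (fun i t => ⟨e (pt κ L (ε.symm i).1 t), hmem i t⟩)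
    ?_ ?_ ?_ ?_ ?_
  · intro i
    apply Subtype.ext
    simp [pt, (ε.symm i).2]
  · intro i t h1 h2 h
    have := congrArg Subtype.val h
    exact pt_ne κ L _ h1 _ (e.injective this)
  · intro i i' t t' h1 h2 h3 h4 h
    have := e.injective (congrArg Subtype.val h)
    obtain ⟨h5, h6⟩ := pt_inj κ L h1 h2 h3 h4 this
    exact ⟨ε.symm.injective (Subtype.ext h5), h6⟩
  · rintro ⟨x, hx⟩
    have hx' := (hsupp x).1 hx
    rcases hex : e.symm x with d | ⟨l, j⟩
    · left
      apply Subtype.ext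
      rw [hex] at hx'
      have : d = c := hx'
      simp only
      rw [← this, ← hex, Equiv.apply_symm_apply]
    · right
      rw [hex] at hx'
      refine ⟨ε ⟨l, hx'⟩, j.1 + 1, by omega, ?_⟩
      apply Subtype.ext
      simp only [Equiv.symm_apply_apply]
      rw [← hpt, ← hex, Equiv.apply_symm_apply]
  · rintro ⟨x, hx⟩ ⟨y, hy⟩
    have hx' := (hsupp x).1 hx
    rw [SimpleGraph.comap_adj]
    constructor
    · rintro ⟨l, t, ht, h⟩
      have hl : κ l = c := by
        change s(e.symm x, e.symm y) = _ at h
        rw [Sym2.eq_iff] at h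
        rcases h with h | h
        · rw [← hx', h.1, kap_pt]
        · rw [← hx', h.1, kap_pt]
      refine ⟨ε ⟨l, hl⟩, t, ht, ?_⟩
      simp only [Equiv.symm_apply_apply]
      change s(e.symm x, e.symm y) = _ at h
      rw [Sym2.eq_iff] at h ⊢
      simp only [Subtype.mk.injEq]
      rw [Equiv.symm_apply_eq, Equiv.symm_apply_eq, Equiv.symm_apply_eq, Equiv.symm_apply_eq] at h
      exact h
    · rintro ⟨i, t, ht, h⟩
      refine ⟨(ε.symm i).1, t, ht, ?_⟩
      change s(e.symm x, e.symm y) = _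
      rw [Sym2.eq_iff] at h ⊢
      simp only [Subtype.mk.injEq] at h
      rw [Equiv.symm_apply_eq, Equiv.symm_apply_eq, Equiv.symm_apply_eq, Equiv.symm_apply_eq]
      exact h

end star

section enl
variable {V N : Type*} {G : SimpleGraph V}

def enl (G : SimpleGraph V) (r : ℕ) (B : N → Set V) (h : N) : Set V :=
  {v | ∃ u ∈ B h, ∃ p : G.Walk u v, p.length ≤ r}

lemma enl_sub (r : ℕ) (B : N → Set V) (h : N) : B h ⊆ enl G r B h :=
  fun v hv => ⟨v, hv, Walk.nil, by simp⟩

lemma enl_decomp {Hg : SimpleGraph N} {B : N → Set V} (hB : IsGraphDecomp G Hg B) (r : ℕ) :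
    IsGraphDecomp G Hg (enl G r B) := by
  obtain ⟨h1, h2, h3⟩ := hB
  refine ⟨fun v => ?_, fun u v huv => ?_, fun v => ?_⟩
  · obtain ⟨h, hv⟩ := h1 v
    exact ⟨h, enl_sub r B h hv⟩
  · obtain ⟨h, hu, hv⟩ := h2 huv
    exact ⟨h, enl_sub r B h hu, enl_sub r B h hv⟩
  · set T : Set N := {h | v ∈ enl G r B h} with hT
    obtain ⟨h0, hv0⟩ := h1 v
    have hh0 : h0 ∈ T := enl_sub r B h0 hv0
    have step : ∀ {u : V} (p : G.Walk u v), p.length ≤ r → ∀ h h' (hu : u ∈ B h) (hu' : u ∈ B h')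
        (hm : h ∈ T) (hm' : h' ∈ T), (Hg.induce T).Reachable ⟨h, hm⟩ ⟨h', hm'⟩ := by
      intro u p hp h h' hu hu' hm hm'
      have hsub : {h | u ∈ B h} ⊆ T := fun x hx => ⟨u, hx, p, hp⟩
      have := (h3 u).preconnected ⟨h, hu⟩ ⟨h', hu'⟩
      exact this.map (Hg.induceHomOfLE hsub).toHom
    have main : ∀ {u w : V} (p : G.Walk u w), ∀ hw : w = v, p.length ≤ r → ∀ h (hu : u ∈ B h)
        (hm : h ∈ T), (Hg.induce T).Reachable ⟨h, hm⟩ ⟨h0, hh0⟩ := by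
      intro u w p
      induction p with
      | nil =>
        intro hw hp h hu hm
        subst hw
        exact step Walk.nil (by simp) h h0 hu hv0 hm hh0
      | cons ha p ih =>
        intro hw hp h hu hm
        subst hw
        rw [Walk.length_cons] at hp
        obtain ⟨h', e1, e2⟩ := h2 ha
        have hm' : h' ∈ T := ⟨_, e2, p, by omega⟩
        exact (step (Walk.cons ha p) (by simpa using hp) h h' hu e1 hm hm').trans
          (ih rfl (by omega) h' e2 hm')
    haveI : Nonempty T := ⟨⟨h0, hh0⟩⟩
    refine ⟨?_⟩
    have key : ∀ x : T, (Hg.induce T).Reachable x ⟨h0, hh0⟩ := by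
      rintro ⟨h, hm⟩
      obtain ⟨u, hu, p, hp⟩ := id hm
      exact main p rfl hp h hu hm
    intro x y
    exact (key x).trans (key y).symm

lemma ind_edist {X : Set V} {q : ℕ → V} {l : ℕ} (hq : ∀ i, i < l → G.Adj (q i) (q (i + 1)))
    (hX : ∀ i, i ≤ l → q i ∈ X) {x y : V} (hx : x ∈ X) (hy : y ∈ X) (h0 : q 0 = x)
    (h1 : q l = y) : (G.induce X).edist ⟨x, hx⟩ ⟨y, hy⟩ ≤ (l : ℕ∞) := by
  obtain ⟨p, hp⟩ := seq_walk (H := G.induce X) (s := fun i => ⟨q (min i l), hX _ (by omega)⟩)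
    (n := l) (by
      intro i hi
      rw [SimpleGraph.comap_adj]
      have := hq i hi
      simp only [Function.Embedding.subtype_apply]
      rwa [show min i l = i by omega, show min (i + 1) l = i + 1 by omega]) 0 l (by omega) le_rfl
  have := SimpleGraph.edist_le p
  rw [hp] at this
  subst h0; subst h1
  simpa using this

lemma enl_walk {r : ℕ} {B : N → Set V} {h : N} {u v : V} (hu : u ∈ B h) (p : G.Walk u v)
    (hp : p.length ≤ r) (hv : v ∈ enl G r B h) :
    (G.induce (enl G r B h)).edist ⟨u, enl_sub r B h hu⟩ ⟨v, hv⟩ ≤ (r : ℕ∞) := by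
  refine le_trans (ind_edist (q := p.getVert) (l := p.length) (fun i hi => p.adj_getVert_succ hi)
    ?_ (enl_sub r B h hu) hv p.getVert_zero p.getVert_length) (by exact_mod_cast hp)
  intro i hi
  refine ⟨u, hu, p.take i, ?_⟩
  rw [Walk.take_length]; omega

end enl

section fin
variable {V : Type*} [Fintype V]

lemma conn_star {N : Type*} {H : SimpleGraph N} {S : Set N} (h0 : N) (hS : h0 ∈ S)
    (h : ∀ x ∈ S, x = h0 ∨ H.Adj h0 x) : (H.induce S).Connected := by
  haveI : Nonempty S := ⟨⟨h0, hS⟩⟩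
  refine ⟨?_⟩
  have key : ∀ x : S, (H.induce S).Reachable ⟨h0, hS⟩ x := by
    rintro ⟨x, hx⟩
    rcases h x hx with h' | h'
    · subst h'; exact Reachable.refl _
    · exact SimpleGraph.Adj.reachable (by rw [SimpleGraph.comap_adj]; exact h')
  intro x y
  exact (key x).symm.trans (key y)

theorem main_aux (k : ℕ) (G : SimpleGraph V)
    (hK3 : ¬ ContainsQuasiGeodesicSubdivGE G k triangleGraph 1)
    (hW : ¬ ContainsQuasiGeodesicSubdivGE G (3 * k) wrenchGraph 3) :
    ∃ (n : ℕ) (Hg : SimpleGraph (Fin n)) (B : Fin n → Set V),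
      IsUnionOfSubdividedStars Hg ∧ IsGraphDecomp G Hg B ∧
      ∀ h, radiusLE (G.induce (B h)) (72 * k + 14) := by
  classical
  choose c hcr hcore using fun K : G.ConnectedComponent => core_s4 hK3 hW K.out
  have hcK : ∀ K, G.connectedComponentMk (c K) = K := by
    intro K
    have h1 : G.connectedComponentMk K.out = K := Quot.out_eq K
    rw [← ConnectedComponent.eq.2 (hcr K)]; exact h1
  set M := 63 * k + 13 with hM
  set r := 9 * k + 1 with hr
  set L := Fintype.card V with hL
  set cen : V → V := fun v => c (G.connectedComponentMk v) with hcen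
  have hcenr : ∀ v, G.Reachable (cen v) v := fun v => ConnectedComponent.exact (hcK _)
  have hcene : ∀ u v, G.Reachable u v → cen u = cen v := by
    intro u v h
    simp only [hcen]; rw [ConnectedComponent.eq.2 h]
  set dep : V → ℕ := fun v => D G (cen v) v with hdep
  have hdepL : ∀ v, dep v ≤ L := fun v => D_le_card _ _
  have hdepadj : ∀ u v, G.Adj u v → dep v ≤ dep u + 1 := by
    intro u v h
    have h1 := D_tri (G := G) (cen u) u v
    rw [D_adj h] at h1
    simp only [hdep]; rw [← hcene u v h.reachable]; exact h1
  set X : Set V := {v | M ≤ dep v} with hX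
  set mkX : V → (res G X).ConnectedComponent := (res G X).connectedComponentMk with hmkX
  set κ : (res G X).ConnectedComponent → G.ConnectedComponent :=
    fun l => G.connectedComponentMk l.out with hκ
  have hκmk : ∀ v, κ (mkX v) = G.connectedComponentMk v := by
    intro v
    simp only [hκ]
    rw [ConnectedComponent.eq]
    exact res_reach (ConnectedComponent.exact (Quot.out_eq (mkX v)))
  have hXadj : ∀ u v, G.Adj u v → M ≤ dep u → M ≤ dep v → mkX u = mkX v := by
    intro u v h hu hv
    exact ConnectedComponent.eq.2 (SimpleGraph.Adj.reachable ⟨h, hu, hv⟩)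
  have hcore' : ∀ u v, M ≤ dep u → dep u = dep v → mkX u = mkX v → D G u v ≤ 18 * k := by
    intro u v hu he huv
    have h1 : (res G X).Reachable u v := ConnectedComponent.exact huv
    have h2 : G.Reachable u v := res_reach h1
    refine hcore (G.connectedComponentMk u) u v (hcenr u) ?_ hu ?_
    · have : dep v = D G (cen u) v := by simp only [hdep]; rw [hcene u v h2]
      rw [← this, ← he]
    · refine (reach_induct (fun x => G.Reachable u x ∧
        (res G {x | 63 * k + 13 ≤ D G (c (G.connectedComponentMk u)) x}).Reachable u x) h1
        ⟨Reachable.refl _, Reachable.refl _⟩ ?_).2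
      rintro a b hab ⟨ha, ha'⟩
      have hb := ha.trans hab.1.reachable
      refine ⟨hb, ha'.trans (SimpleGraph.Adj.reachable ⟨hab.1, ?_, ?_⟩)⟩
      · have h3 : M ≤ D G (cen a) a := hab.2.1
        rw [← hcene u a ha] at h3; exact h3
      · have h3 : M ≤ D G (cen b) b := hab.2.2
        rw [← hcene u b hb] at h3; exact h3
  set B0 : G.ConnectedComponent ⊕ ((res G X).ConnectedComponent × Fin (L + 1)) → Set V := fun h =>
    match h with
    | Sum.inl K => {v | G.connectedComponentMk v = K ∧ dep v ≤ M}
    | Sum.inr (l, j) => {v | mkX v = l ∧ (dep v = M + j.1 ∨ dep v = M + j.1 + 1)} with hB0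
  have hBl : ∀ K v, v ∈ B0 (Sum.inl K) ↔ G.connectedComponentMk v = K ∧ dep v ≤ M :=
    fun K v => Iff.rfl
  have hBr : ∀ l j v, v ∈ B0 (Sum.inr (l, j)) ↔
    mkX v = l ∧ (dep v = M + j.1 ∨ dep v = M + j.1 + 1) := fun l j v => Iff.rfl
  have hdec : IsGraphDecomp G (starH κ L) B0 := by
    refine ⟨fun v => ?_, fun u v huv => ?_, fun v => ?_⟩
    · by_cases h : dep v ≤ M
      · exact ⟨Sum.inl _, (hBl _ _).2 ⟨rfl, h⟩⟩
      · have := hdepL v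
        exact ⟨Sum.inr (mkX v, ⟨dep v - M, by omega⟩), (hBr _ _ _).2 ⟨rfl, by simp only; omega⟩⟩
    · have h1 := hdepadj u v huv
      have h2 := hdepadj v u huv.symm
      have h3 := hdepL u
      by_cases h : dep u ≤ M ∧ dep v ≤ M
      · exact ⟨Sum.inl (G.connectedComponentMk u), (hBl _ _).2 ⟨rfl, h.1⟩,
          (hBl _ _).2 ⟨(ConnectedComponent.eq.2 huv.reachable).symm, h.2⟩⟩
      · have h4 := hXadj u v huv (by omega) (by omega)
        refine ⟨Sum.inr (mkX u, ⟨min (dep u) (dep v) - M, by omega⟩), (hBr _ _ _).2 ⟨rfl, ?_⟩,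
          (hBr _ _ _).2 ⟨h4.symm, ?_⟩⟩
        · simp only; omega
        · simp only; omega
    · have hl := hdepL v
      by_cases h : dep v ≤ M
      · refine conn_star (Sum.inl (G.connectedComponentMk v)) ((hBl _ _).2 ⟨rfl, h⟩) ?_
        rintro (K | ⟨l, j⟩) hx
        · left; rw [((hBl _ _).1 hx).1]
        · right
          obtain ⟨h1, h2⟩ := (hBr _ _ _).1 hx
          subst h1
          refine ⟨mkX v, 0, by omega, ?_⟩
          have hj : j = ⟨min 0 L, by omega⟩ := Fin.ext (by simp only; omega)
          rw [hj]
          simp only [pt, hκmk]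
      · refine conn_star (Sum.inr (mkX v, ⟨dep v - M, by omega⟩))
          ((hBr _ _ _).2 ⟨rfl, by simp only; omega⟩) ?_
        rintro (K | ⟨l, j⟩) hx
        · have := ((hBl _ _).1 hx).2; omega
        · obtain ⟨h1, h2⟩ := (hBr _ _ _).1 hx
          subst h1
          rcases h2 with h2 | h2
          · left
            congr
            ext; simp; omega
          · right
            refine ⟨mkX v, j.1 + 1, by omega, ?_⟩
            rw [Sym2.eq_swap]
            have hj : j = ⟨min j.1 L, by omega⟩ := Fin.ext (by simp only; omega)
            have hj' : (⟨dep v - M, by omega⟩ : Fin (L + 1)) = ⟨min (j.1 + 1) L, by omega⟩ :=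
              Fin.ext (by simp only; omega)
            rw [hj']
            simp only [pt]
            rw [← hj]
  -- radius of the enlarged bags
  have hrad : ∀ h, radiusLE (G.induce (enl G r B0 h)) (72 * k + 14) := by
    rintro (K | ⟨l, j⟩) hne
    · have hcm : cen (c K) = c K := by simp only [hcen]; rw [hcK]
      have hcB : c K ∈ B0 (Sum.inl K) := by
        refine (hBl _ _).2 ⟨hcK K, ?_⟩
        simp only [hdep]; rw [hcm, D_self]; omega
      refine ⟨⟨c K, enl_sub r B0 _ hcB⟩, ?_⟩
      rintro ⟨x, hx⟩
      obtain ⟨x0, hx0, p, hp⟩ := id hx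
      obtain ⟨e1, e2⟩ := (hBl _ _).1 hx0
      have hcx : cen x0 = c K := by simp only [hcen]; rw [e1]
      have hre : G.Reachable (c K) x0 := by rw [← hcx]; exact hcenr x0
      obtain ⟨q, hq, hq0, hq1⟩ := exists_geo hre
      have hd : D G (c K) x0 ≤ M := by rw [← hcx]; exact e2
      have i1 := ind_edist (X := enl G r B0 (Sum.inl K)) hq.adj (by
        intro i hi
        apply enl_sub
        have hri := reach_seq hq.adj i hi
        rw [hq0] at hri
        have hcq : cen (q i) = c K := by rw [← hcene _ _ hri, hcm]
        refine (hBl _ _).2 ⟨?_, ?_⟩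
        · rw [← ConnectedComponent.eq.2 hri, hcK]
        · have := hq.dst 0 i (by omega) hi
          rw [hq0] at this
          simp only [hdep]; rw [hcq]; omega) (enl_sub r B0 _ hcB) (enl_sub r B0 _ hx0) hq0 hq1
      have i2 := enl_walk hx0 p hp hx
      refine le_trans (SimpleGraph.edist_triangle (v := ⟨x0, enl_sub r B0 _ hx0⟩)) ?_
      refine le_trans (add_le_add i1 i2) ?_
      norm_cast
      omega
    · have pred : ∀ x, x ∈ B0 (Sum.inr (l, j)) → ∃ y, mkX y = l ∧ dep y = M + j.1 ∧
          G.Reachable y x ∧ D G y x ≤ 1 := by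
        intro x hx
        obtain ⟨h1, h2⟩ := (hBr _ _ _).1 hx
        rcases h2 with h2 | h2
        · exact ⟨x, h1, h2, Reachable.refl _, by rw [D_self]; omega⟩
        · obtain ⟨q, hq, hq0, hq1⟩ := exists_geo (hcenr x)
          have hd : D G (cen x) x = M + j.1 + 1 := h2
          rw [hd] at hq hq1
          have ha := hq.adj (M + j.1) (by omega)
          rw [hq1] at ha
          have hdq : dep (q (M + j.1)) = M + j.1 := by
            have := hq.dst 0 (M + j.1) (by omega) (by omega)
            rw [hq0] at this
            simp only [hdep]; rw [hcene _ _ ha.reachable]; omega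
          refine ⟨q (M + j.1), ?_, hdq, ha.reachable, by rw [D_adj ha]⟩
          rw [← h1]; exact hXadj _ _ ha (by omega) (by omega)
      obtain ⟨⟨z, z0, hz0, -⟩⟩ := hne
      obtain ⟨u, hu1, hu2, -, -⟩ := pred z0 hz0
      have huB : u ∈ B0 (Sum.inr (l, j)) := (hBr _ _ _).2 ⟨hu1, Or.inl hu2⟩
      refine ⟨⟨u, enl_sub r B0 _ huB⟩, ?_⟩
      rintro ⟨x, hx⟩
      obtain ⟨x0, hx0, p, hp⟩ := id hx
      obtain ⟨y, hy1, hy2, hy3, hy4⟩ := pred x0 hx0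
      have f1 := hcore' u y (by omega) (by omega) (by rw [hu1, hy1])
      have f2 := D_tri (G := G) u y x0
      have f3 : G.Reachable u x0 :=
        (res_reach (ConnectedComponent.exact (hu1.trans hy1.symm))).trans hy3
      obtain ⟨q, hq, hq0, hq1⟩ := exists_geo f3
      have i1 := ind_edist (X := enl G r B0 (Sum.inr (l, j))) hq.adj (by
        intro i hi
        by_cases hh : i ≤ r
        · obtain ⟨w, hw⟩ := seq_walk hq.adj 0 i (by omega) hi
          rw [hq0] at w
          exact ⟨q 0, by rw [hq0]; exact huB, (seq_walk hq.adj 0 i (by omega) hi).choose,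
            by rw [(seq_walk hq.adj 0 i (by omega) hi).choose_spec]; omega⟩
        · obtain ⟨w, hw⟩ := seq_walk hq.adj i _ hi le_rfl
          exact ⟨_, by rw [hq1]; exact hx0, w.reverse, by rw [Walk.length_reverse, hw]; omega⟩)
        (enl_sub r B0 _ huB) (enl_sub r B0 _ hx0) hq0 hq1
      have i2 := enl_walk hx0 p hp hx
      refine le_trans (SimpleGraph.edist_triangle (v := ⟨x0, enl_sub r B0 _ hx0⟩)) ?_
      refine le_trans (add_le_add i1 i2) ?_
      norm_cast
      omega
  haveI : Finite G.ConnectedComponent := Quot.finite _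
  haveI : Finite (res G X).ConnectedComponent := Quot.finite _
  obtain ⟨n, ⟨e⟩⟩ := Finite.exists_equiv_fin
    (G.ConnectedComponent ⊕ ((res G X).ConnectedComponent × Fin (L + 1)))
  refine ⟨n, (starH κ L).comap e.symm, fun a => enl G r B0 (e.symm a), star_union κ L e, ?_,
    fun a => hrad _⟩
  obtain ⟨d1, d2, d3⟩ := enl_decomp hdec r
  refine ⟨fun v => ?_, fun u v huv => ?_, fun v => ?_⟩
  · obtain ⟨h, hh⟩ := d1 v
    exact ⟨e h, by simpa using hh⟩
  · obtain ⟨h, hu, hv⟩ := d2 huv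
    exact ⟨e h, by simpa using hu, by simpa using hv⟩
  · have := d3 v
    let φ : (starH κ L).induce {h | v ∈ enl G r B0 h} →g
        ((starH κ L).comap e.symm).induce {a | v ∈ enl G r B0 (e.symm a)} :=
      { toFun := fun x => ⟨e x.1, by
          have h5 : v ∈ enl G r B0 x.1 := x.2
          change v ∈ enl G r B0 (e.symm (e x.1))
          rw [Equiv.symm_apply_apply]; exact h5⟩
        map_rel' := by
          intro a b hab
          simpa using hab }
    refine this.map φ ?_
    rintro ⟨a, ha⟩
    refine ⟨⟨e.symm a, ha⟩, ?_⟩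
    apply Subtype.ext
    exact e.apply_symm_apply a

end fin

/-- Let `k : ℕ`. If a graph `G` contains no `(≥ k)`-subdivision of the
triangle `K³` as a geodesic subgraph and no `(≥ 3k)`-subdivision of the wrench graph `W`
as a `3`-quasi-geodesic subgraph, then `G` has radial star-width at most `72k + 14`. -/
theorem radial_star_width_upper_bound
    {V : Type*} [Fintype V] (k : ℕ) (G : SimpleGraph V)
    (hK3 : ¬ ContainsQuasiGeodesicSubdivGE G k triangleGraph 1)
    (hW : ¬ ContainsQuasiGeodesicSubdivGE G (3 * k) wrenchGraph 3) :
    ∃ (n : ℕ) (Hg : SimpleGraph (Fin n)) (B : Fin n → Set V),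
      IsUnionOfSubdividedStars Hg ∧ IsGraphDecomp G Hg B ∧
      ∀ h, radiusLE (G.induce (B h)) (72 * k + 14) := by
  exact main_aux k G hK3 hW

end RadialPaper
end
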